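/- arXiv:0806.1709 — 7 statements merged into one kernel-verified Lean document; each statement's English description precedes it below -/
import Mathlib

section
/- Let z > 0, let N ≥ 0 and K ≥ 2 be integers, let x_1, …, x_N ∈ ℝ³ be pairwise distinct points, and let R_1, …, R_K ∈ ℝ³ be pairwise distinct points with x_i ≠ R_k for all i, k. Then (1/2)·Σ_{1 ≤ i ≠ j ≤ N} 1/‖x_i − x_j‖ − Σ_{i=1}^N Σ_{k=1}^K z/‖x_i − R_k‖ + (1/2)·Σ_{1 ≤ k ≠ k' ≤ K} z²/‖R_k − R_{k'}‖ ≥ − Σ_{i=1}^N (z + √(2z) + 1/2)/δ_R(x_i) + (z²/4)·Σ_{k=1}^K 1/δ_R(R_k), where for x ∈ ℝ³, δ_R(x) = min{‖x − R_k‖ : 1 ≤ k ≤ K, R_k ≠ x} is the distance from x to the nearest point of {R_1, …, R_K} different from x itself (Lieb–Yau inequality). -/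
open Finset

/-- The distance from `y` to the nearest point of `{R_1, …, R_K}` different from `y` itself. -/
noncomputable def nearestNucleusDist {K : ℕ} (R : Fin K → EuclideanSpace ℝ (Fin 3))
    (y : EuclideanSpace ℝ (Fin 3)) : ℝ :=
  sInf {d : ℝ | ∃ k : Fin K, R k ≠ y ∧ d = ‖y - R k‖}

/-!
Smear each electron uniformly over a sphere of radius `r i` and each nucleus over a sphere of
small radius `a`, and let `Φ` be the potential at a point due to its nearest nucleus alone. The
field with potential (electrons) `- z *` (nuclei) `+ z * Φ` has nonnegative energy. Expanding the
square, Newton's theorem identifies every mutual energy with an average of a potential over a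
sphere: electron pairs contribute at most their Coulomb repulsion, electrons and nuclei exactly
their attraction, and the nuclei interact with `Φ` so that only the self-energies `1 / a` remain.
The latter cancel against the energy of `Φ`, which is the sum over nuclei of the field energy in
their Voronoi cells. The cell of `R k` lies in the half-space of points closer to `R k` than to
its nearest neighbour, at distance `δ k`, and the reflection exchanging the two nuclei shows that
the field of `R k` has energy `1 / a - 1 / (2 * δ k)` there. An electron at distance `δ` from the
nuclei costs at most `1 / (2 * r) + z / (δ - r)`, and `r = δ / (1 + √(2 * z))` is optimal.
-/

open MeasureTheory Metric Filter Topology Module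
open scoped NNReal Gradient RealInnerProductSpace

section PolarCoordinates

variable {E : Type*} [NormedAddCommGroup E] [NormedSpace ℝ E] [MeasurableSpace E] [BorelSpace E]
  [FiniteDimensional ℝ E] (μ : Measure E) [μ.IsAddHaarMeasure]
  {F : Type*} [NormedAddCommGroup F] [NormedSpace ℝ F]

lemma measurePreserving_smul_sphere_Ioi [Nontrivial E] :
    MeasurePreserving (fun x : sphere (0 : E) 1 × Set.Ioi (0 : ℝ) ↦ (x.2 : ℝ) • (x.1 : E))
      (μ.toSphere.prod (.volumeIoiPow (finrank ℝ E - 1))) μ := by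
  have hcoe := measurePreserving_subtype_coe (μa := μ) (measurableSet_singleton (0 : E)).compl
  rw [restrict_compl_singleton] at hcoe
  exact hcoe.comp <| μ.measurePreserving_homeomorphUnitSphereProd.symm
    (homeomorphUnitSphereProd E).toMeasurableEquiv

lemma integrable_volumeIoiPow_iff (n : ℕ) (f : ℝ → F) :
    Integrable (fun r : Set.Ioi (0 : ℝ) ↦ f r) (.volumeIoiPow n) ↔
      IntegrableOn (fun r ↦ r ^ n • f r) (Set.Ioi 0) := by
  rw [Measure.volumeIoiPow, integrable_withDensity_iff_integrable_smul' (by fun_prop) (by simp),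
    integrableOn_iff_comap_subtypeVal measurableSet_Ioi]
  refine integrable_congr (.of_forall fun r ↦ ?_)
  simp [ENNReal.toReal_ofReal (pow_nonneg r.2.out.le n)]

lemma integral_volumeIoiPow (n : ℕ) (f : ℝ → F) :
    ∫ r : Set.Ioi (0 : ℝ), f r ∂.volumeIoiPow n = ∫ r in Set.Ioi (0 : ℝ), r ^ n • f r := by
  rw [Measure.volumeIoiPow, integral_withDensity_eq_integral_toReal_smul (by fun_prop) (by simp),
    ← integral_subtype_comap measurableSet_Ioi]
  refine integral_congr_ae (.of_forall fun r ↦ ?_)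
  simp [ENNReal.toReal_ofReal (pow_nonneg r.2.out.le n)]

lemma ae_restrict_Ioi_of_ae_volumeIoiPow {n : ℕ} {P : ℝ → Prop}
    (h : ∀ᵐ r : Set.Ioi (0 : ℝ) ∂Measure.volumeIoiPow n, P r) :
    ∀ᵐ r ∂volume.restrict (Set.Ioi (0 : ℝ)), P r := by
  rw [Measure.volumeIoiPow, ae_withDensity_iff (by fun_prop)] at h
  rw [ae_restrict_iff_subtype measurableSet_Ioi]
  filter_upwards [h] with r hr using hr (by simpa using pow_pos r.2.out n)

variable [Nontrivial E]

lemma ae_ae_smul_sphere {P : E → Prop} (h : ∀ᵐ u ∂μ, P u) :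
    ∀ᵐ ω : sphere (0 : E) 1 ∂μ.toSphere,
      ∀ᵐ r ∂volume.restrict (Set.Ioi (0 : ℝ)), P (r • (ω : E)) := by
  have hprod := (measurePreserving_smul_sphere_Ioi μ).quasiMeasurePreserving.ae h
  filter_upwards [Measure.ae_ae_of_ae_prod hprod] with ω hω
  exact ae_restrict_Ioi_of_ae_volumeIoiPow (P := fun r ↦ P (r • (ω : E))) hω

variable {μ} {f : E → F}

lemma ae_integrableOn_smul_sphere (hf : Integrable f μ) :
    ∀ᵐ ω : sphere (0 : E) 1 ∂μ.toSphere,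
      IntegrableOn (fun r : ℝ ↦ r ^ (finrank ℝ E - 1) • f (r • (ω : E))) (Set.Ioi 0) := by
  have hprod := (measurePreserving_smul_sphere_Ioi μ).integrable_comp_of_integrable hf
  filter_upwards [hprod.prod_right_ae] with ω hω
  exact (integrable_volumeIoiPow_iff _ fun r ↦ f (r • (ω : E))).1 hω

lemma integral_eq_integral_sphere_integral_Ioi (hf : Integrable f μ) :
    ∫ u, f u ∂μ = ∫ ω : sphere (0 : E) 1, (∫ r in Set.Ioi (0 : ℝ),
      r ^ (finrank ℝ E - 1) • f (r • (ω : E))) ∂μ.toSphere := by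
  have hpolar := measurePreserving_smul_sphere_Ioi μ
  calc ∫ u, f u ∂μ
    _ = ∫ x : sphere (0 : E) 1 × Set.Ioi (0 : ℝ), f ((x.2 : ℝ) • (x.1 : E))
          ∂μ.toSphere.prod (.volumeIoiPow (finrank ℝ E - 1)) := by
        rw [← integral_map hpolar.aemeasurable
          (hpolar.map_eq.symm ▸ hf.aestronglyMeasurable), hpolar.map_eq]
    _ = _ := by
        rw [integral_prod (fun x : sphere (0 : E) 1 × Set.Ioi (0 : ℝ) ↦ f ((x.2 : ℝ) • (x.1 : E)))
          (hpolar.integrable_comp_of_integrable hf)]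
        exact integral_congr_ae (.of_forall fun ω ↦
          integral_volumeIoiPow _ fun r ↦ f (r • (ω : E)))

end PolarCoordinates

/-- The potential `1 / max (dist u S) a`. In three-dimensional space and for `S = {p}` it is the
Coulomb potential of a unit charge spread uniformly over the sphere of radius `a` about `p`; in
general it is the largest of these potentials over `p ∈ S`, that of the charge nearest to `u`. -/
noncomputable def cutoffPotential {X : Type*} [PseudoMetricSpace X] (a : ℝ) (S : Set X) (u : X) :
    ℝ :=
  (max (infDist u S) a)⁻¹

section CutoffPotential

variable {X : Type*} [PseudoMetricSpace X] {a b c : ℝ} {S T : Set X} {u : X}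

lemma cutoffPotential_singleton (p : X) : cutoffPotential a {p} u = (max (dist u p) a)⁻¹ := by
  rw [cutoffPotential, infDist_singleton]

lemma cutoffPotential_eq_inv (h : infDist u S ≤ a) : cutoffPotential a S u = a⁻¹ := by
  rw [cutoffPotential, max_eq_right h]

lemma cutoffPotential_le_inv (hc : 0 < c) (h : c ≤ max (infDist u S) a) :
    cutoffPotential a S u ≤ c⁻¹ :=
  inv_anti₀ hc h

lemma cutoffPotential_pos (ha : 0 < a) : 0 < cutoffPotential a S u :=
  inv_pos.2 (lt_max_of_lt_right ha)

lemma cutoffPotential_anti (ha : 0 < a) (hab : a ≤ b) :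
    cutoffPotential b S u ≤ cutoffPotential a S u :=
  inv_anti₀ (lt_max_of_lt_right ha) (max_le_max_left _ hab)

lemma cutoffPotential_mono (ha : 0 < a) (hT : T.Nonempty) (hTS : T ⊆ S) :
    cutoffPotential a T u ≤ cutoffPotential a S u :=
  inv_anti₀ (lt_max_of_lt_right ha) (max_le_max_right _ (infDist_le_infDist_of_subset hTS hT))

lemma abs_cutoffPotential_sub_le (ha : 0 < a) (S : Set X) (u v : X) :
    |cutoffPotential a S v - cutoffPotential a S u| ≤
      cutoffPotential a S v * cutoffPotential a S u * dist v u := by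
  have hu : 0 < max (infDist u S) a := lt_max_of_lt_right ha
  have hv : 0 < max (infDist v S) a := lt_max_of_lt_right ha
  have hmax : |max (infDist u S) a - max (infDist v S) a| ≤ dist v u := by
    refine (abs_max_sub_max_le_abs _ _ _).trans ?_
    simpa [Real.dist_eq, dist_comm v u] using (lipschitz_infDist_pt S).dist_le_mul u v
  rw [cutoffPotential, cutoffPotential, inv_sub_inv hv.ne' hu.ne', abs_div,
    abs_of_pos (mul_pos hv hu), ← mul_inv, div_eq_inv_mul]
  gcongr

lemma lipschitzWith_cutoffPotential (ha : 0 < a) (S : Set X) :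
    LipschitzWith (a⁻¹ ^ 2).toNNReal (cutoffPotential a S) := by
  refine .of_dist_le' fun v u ↦ (abs_cutoffPotential_sub_le ha S u v).trans ?_
  have hle (w : X) : cutoffPotential a S w ≤ a⁻¹ := cutoffPotential_le_inv ha (le_max_right _ _)
  rw [sq]
  gcongr
  exacts [(cutoffPotential_pos ha).le, hle v, hle u]

variable {E : Type*} [NormedAddCommGroup E] {S : Set E}

lemma exists_cutoffPotential_le (ha : 0 < a) (hS : S.Nonempty) (hSb : Bornology.IsBounded S) :
    ∃ C, ∀ u, cutoffPotential a S u ≤ C * (1 + ‖u‖)⁻¹ := by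
  obtain ⟨M, hM, hSM⟩ := hSb.exists_pos_norm_le
  refine ⟨1 + (1 + M) / a, fun u ↦ ?_⟩
  set m := max (infDist u S) a
  have ham : a ≤ m := le_max_right _ _
  have hnorm : ‖u‖ - M ≤ m := by
    refine le_max_of_le_left <| (le_infDist hS).2 fun {s} hs ↦ ?_
    linarith [hSM s hs, norm_le_norm_add_norm_sub s u, dist_eq_norm' u s]
  have hm : 1 + ‖u‖ ≤ (1 + (1 + M) / a) * m := by
    have : 1 + M ≤ (1 + M) / a * m := by
      rw [div_mul_eq_mul_div, le_div_iff₀ ha]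
      gcongr
    linarith
  rw [cutoffPotential, ← div_eq_mul_inv, le_div_iff₀ (by positivity),
    inv_mul_le_iff₀ (by positivity)]
  linarith

lemma tendsto_cutoffPotential_cobounded (ha : 0 < a) (hS : S.Nonempty)
    (hSb : Bornology.IsBounded S) :
    Tendsto (cutoffPotential a S) (Bornology.cobounded E) (𝓝 0) := by
  obtain ⟨C, hC⟩ := exists_cutoffPotential_le ha hS hSb
  refine squeeze_zero (fun u ↦ (cutoffPotential_pos ha).le) hC ?_
  have hnorm : Tendsto (fun u : E ↦ 1 + ‖u‖) (Bornology.cobounded E) atTop :=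
    tendsto_atTop_add_const_left _ _ tendsto_norm_cobounded_atTop
  simpa using hnorm.inv_tendsto_atTop.const_mul C

end CutoffPotential

section Gradient

variable {E : Type*} [NormedAddCommGroup E] [InnerProductSpace ℝ E] [CompleteSpace E]
  {a : ℝ} {S T : Set E} {p u : E}

lemma norm_gradient_cutoffPotential_le (ha : 0 < a) (S : Set E) (u : E) :
    ‖∇ (cutoffPotential a S) u‖ ≤ cutoffPotential a S u ^ 2 := by
  by_cases hdiff : DifferentiableAt ℝ (cutoffPotential a S) u
  · refine le_of_forall_gt_imp_ge_of_dense fun C hC ↦ ?_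
    have hcont : Tendsto (fun v ↦ cutoffPotential a S v * cutoffPotential a S u) (𝓝 u)
        (𝓝 (cutoffPotential a S u ^ 2)) := by
      rw [sq]
      exact ((lipschitzWith_cutoffPotential ha S).continuous.tendsto u).mul_const _
    refine (((InnerProductSpace.toDual ℝ E).norm_map _).symm.trans_le ?_)
    refine hdiff.hasGradientAt.hasFDerivAt.le_of_lip' ((sq_nonneg _).trans hC.le) ?_
    filter_upwards [hcont.eventually_lt_const hC] with v hv
    rw [← dist_eq_norm v u]
    refine (abs_cutoffPotential_sub_le ha S u v).trans ?_
    gcongr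
  · rw [gradient_eq_zero_of_not_differentiableAt hdiff, norm_zero]
    positivity

lemma gradient_cutoffPotential_eq_zero (ha : 0 < a) (h : infDist u S ≤ a) :
    ∇ (cutoffPotential a S) u = 0 := by
  have hmax : IsLocalMax (cutoffPotential a S) u := .of_forall fun v ↦ by
    rw [cutoffPotential_eq_inv h]
    exact cutoffPotential_le_inv ha (le_max_right _ _)
  rw [gradient, hmax.fderiv_eq_zero, map_zero]

-- At `u` the larger potential touches the smaller one from above, so their gradients agree.
lemma gradient_cutoffPotential_eq_of_subset (ha : 0 < a) (hT : T.Nonempty) (hTS : T ⊆ S)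
    (h : infDist u T = infDist u S) (hdT : DifferentiableAt ℝ (cutoffPotential a T) u)
    (hdS : DifferentiableAt ℝ (cutoffPotential a S) u) :
    ∇ (cutoffPotential a S) u = ∇ (cutoffPotential a T) u := by
  have hmin : IsLocalMin (cutoffPotential a S - cutoffPotential a T) u := .of_forall fun v ↦ by
    simp only [Pi.sub_apply, cutoffPotential, h, sub_self]
    exact sub_nonneg.2 (cutoffPotential_mono ha hT hTS)
  have hderiv := hmin.fderiv_eq_zero
  rw [fderiv_sub hdS hdT, sub_eq_zero] at hderiv
  rw [gradient, gradient, hderiv]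

lemma hasGradientAt_inv_dist (h : u ≠ p) :
    HasGradientAt (fun v ↦ (dist v p)⁻¹) (-((dist u p ^ 3)⁻¹ • (u - p))) u := by
  have hnorm : 0 < ‖u - p‖ := norm_sub_pos_iff.2 h
  have hsq : HasFDerivAt (fun v ↦ ‖v - p‖ ^ 2) _ u := ((hasFDerivAt_id u).sub_const p).norm_sq
  have hinv := (hasDerivAt_inv hnorm.ne').comp_hasFDerivAt_of_eq u (hsq.sqrt (by positivity))
    (Real.sqrt_sq hnorm.le).symm
  refine hasGradientAt_iff_hasFDerivAt.2 <| (hinv.congr_of_eventuallyEq ?_).congr_fderiv ?_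
  · exact .of_forall fun v ↦ by simp [dist_eq_norm]
  · ext v
    simp only [norm_nonneg, Real.sqrt_sq, one_div, mul_inv_rev, id_eq, map_sub, neg_inj,
      ContinuousLinearMap.comp_id, neg_smul, neg_apply, smul_apply, sub_apply, coe_innerSL_apply,
      nsmul_eq_mul, Nat.cast_ofNat, smul_eq_mul, dist_eq_norm, map_neg, map_smul,
      InnerProductSpace.toDual_apply_apply]
    field_simp

lemma gradient_cutoffPotential_singleton (ha : 0 < a) (h : a < dist u p) :
    ∇ (cutoffPotential a {p}) u = -((dist u p ^ 3)⁻¹ • (u - p)) := by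
  have hevent : cutoffPotential a {p} =ᶠ[𝓝 u] fun v ↦ (dist v p)⁻¹ := by
    filter_upwards [(continuous_id'.dist continuous_const).continuousAt.eventually_const_lt h]
      with v hv
    rw [cutoffPotential_singleton, max_eq_left hv.le]
  exact ((hasGradientAt_inv_dist (dist_pos.1 (ha.trans h))).congr_of_eventuallyEq hevent).gradient

end Gradient

section RadialIntegration

lemma tendsto_add_smul_cobounded {E : Type*} [NormedAddCommGroup E] [NormedSpace ℝ E] (p : E)
    {ω : E} (hω : ω ≠ 0) :
    Tendsto (fun r : ℝ ↦ p + r • ω) atTop (Bornology.cobounded E) := by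
  refine tendsto_norm_atTop_iff_cobounded.1 ?_
  refine tendsto_atTop_mono (fun r ↦ ?_) (tendsto_atTop_add_const_right atTop (-‖p‖)
    (tendsto_id.atTop_mul_const (norm_pos_iff.2 hω)))
  calc r * ‖ω‖ + -‖p‖
    _ ≤ ‖r • ω‖ - ‖p‖ := by
        rw [norm_smul, sub_eq_add_neg]
        gcongr
        exact le_abs_self r
    _ ≤ ‖p + r • ω‖ := by
        rw [add_comm]
        exact norm_sub_le_norm_add _ _

variable {E : Type*} [NormedAddCommGroup E] [InnerProductSpace ℝ E] [CompleteSpace E]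
  {f : E → ℝ} {C : ℝ≥0} {p ω : E} {a : ℝ}

lemma deriv_comp_add_smul {r : ℝ} (hf : DifferentiableAt ℝ f (p + r • ω)) :
    deriv (fun s : ℝ ↦ f (p + s • ω)) r = ⟪ω, ∇ f (p + r • ω)⟫ := by
  have hline : HasDerivAt (fun s : ℝ ↦ p + s • ω) ω r := by
    simpa using ((hasDerivAt_id r).smul_const ω).const_add p
  rw [inner_gradient_right, conj_trivial]
  exact (hf.hasFDerivAt.comp_hasDerivAt r hline).deriv

lemma integral_Ioi_inner_gradient (hf : LipschitzWith C f)
    (hf0 : Tendsto f (Bornology.cobounded E) (𝓝 0)) (hω : ω ≠ 0)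
    (hdiff : ∀ᵐ r ∂volume.restrict (Set.Ioi a), DifferentiableAt ℝ f (p + r • ω))
    (hint : IntegrableOn (fun r : ℝ ↦ ⟪ω, ∇ f (p + r • ω)⟫) (Set.Ioi a)) :
    ∫ r in Set.Ioi a, ⟪ω, ∇ f (p + r • ω)⟫ = -f (p + a • ω) := by
  have hlip : LipschitzWith (C * ‖ω‖₊) fun r : ℝ ↦ f (p + r • ω) := by
    refine hf.comp <| .of_dist_le_mul fun r s ↦ ?_
    simp [dist_eq_norm, ← sub_smul, norm_smul, mul_comm]
  have hftc (b : ℝ) (hab : a ≤ b) :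
      ∫ r in a..b, ⟪ω, ∇ f (p + r • ω)⟫ = f (p + b • ω) - f (p + a • ω) := by
    rw [← hlip.lipschitzOnWith.absolutelyContinuousOnInterval.integral_deriv_eq_sub]
    refine intervalIntegral.integral_congr_ae_restrict ?_
    rw [Set.uIoc_of_le hab]
    filter_upwards [ae_restrict_of_ae_restrict_of_subset Set.Ioc_subset_Ioi_self hdiff]
      with r hr using (deriv_comp_add_smul hr).symm
  refine tendsto_nhds_unique (intervalIntegral_tendsto_integral_Ioi a hint tendsto_id) ?_
  have hlim := (hf0.comp (tendsto_add_smul_cobounded p hω)).sub_const (f (p + a • ω))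
  rw [zero_sub] at hlim
  refine hlim.congr' ?_
  filter_upwards [eventually_ge_atTop a] with b hab using (hftc b hab).symm

lemma sq_mul_inner_gradient_cutoffPotential_singleton (ha : 0 < a) (p : E) (hω : ‖ω‖ = 1)
    {r : ℝ} (hr : 0 < r) (v : E) :
    r ^ 2 * ⟪∇ (cutoffPotential a {p}) (p + r • ω), v⟫ =
      (Set.Ioi a).indicator (fun _ ↦ -⟪ω, v⟫) r := by
  have hdist : dist (p + r • ω) p = r := by simp [norm_smul, hω, abs_of_pos hr]
  rcases le_or_gt r a with hra | har
  · rw [gradient_cutoffPotential_eq_zero ha (by rwa [infDist_singleton, hdist]), inner_zero_left,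
      mul_zero, Set.indicator_of_notMem (by simpa using hra)]
  · rw [gradient_cutoffPotential_singleton ha (by rwa [hdist]), hdist, add_sub_cancel_left,
      Set.indicator_of_mem (by simpa using har), inner_neg_left, real_inner_smul_left,
      real_inner_smul_left]
    field_simp

lemma integral_Ioi_sq_mul_inner_gradient (ha : 0 < a) (p : E) (hω : ‖ω‖ = 1)
    (hf : LipschitzWith C f) (hf0 : Tendsto f (Bornology.cobounded E) (𝓝 0))
    (hdiff : ∀ᵐ r ∂volume.restrict (Set.Ioi (0 : ℝ)), DifferentiableAt ℝ f (p + r • ω))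
    (hint : IntegrableOn (fun r : ℝ ↦ r ^ 2 *
      ⟪∇ (cutoffPotential a {p}) (p + r • ω), ∇ f (p + r • ω)⟫) (Set.Ioi 0)) :
    ∫ r in Set.Ioi (0 : ℝ), r ^ 2 * ⟪∇ (cutoffPotential a {p}) (p + r • ω), ∇ f (p + r • ω)⟫ =
      f (p + a • ω) := by
  have hradial : ∀ r ∈ Set.Ioi (0 : ℝ),
      r ^ 2 * ⟪∇ (cutoffPotential a {p}) (p + r • ω), ∇ f (p + r • ω)⟫ =
        (Set.Ioi a).indicator (fun r ↦ -⟪ω, ∇ f (p + r • ω)⟫) r := fun r hr ↦ by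
    simpa only [Set.indicator] using
      sq_mul_inner_gradient_cutoffPotential_singleton ha p hω hr (∇ f (p + r • ω))
  have hsub : Set.Ioi a ⊆ Set.Ioi (0 : ℝ) := Set.Ioi_subset_Ioi ha.le
  rw [integrableOn_congr_fun hradial measurableSet_Ioi, IntegrableOn,
    integrable_indicator_iff measurableSet_Ioi, IntegrableOn,
    Measure.restrict_restrict_of_subset hsub] at hint
  rw [setIntegral_congr_fun measurableSet_Ioi hradial, setIntegral_indicator measurableSet_Ioi,
    Set.inter_eq_right.2 hsub, integral_neg, integral_Ioi_inner_gradient hf hf0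
      (norm_ne_zero_iff.1 (hω.trans_ne one_ne_zero))
      (ae_restrict_of_ae_restrict_of_subset hsub hdiff)
      (by simpa only [IntegrableOn, Pi.neg_def, neg_neg] using hint.neg), neg_neg]

end RadialIntegration

section DirichletForm

lemma integrable_inner_of_memLp_two {α E : Type*} [NormedAddCommGroup E]
    [InnerProductSpace ℝ E] {mα : MeasurableSpace α} {μ : Measure α} {f g : α → E}
    (hf : MemLp f 2 μ) (hg : MemLp g 2 μ) : Integrable (fun x ↦ ⟪f x, g x⟫) μ := by
  refine (hf.norm.integrable_mul hg.norm).mono (hf.1.inner hg.1) (.of_forall fun x ↦ ?_)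
  simpa using norm_inner_le_norm (𝕜 := ℝ) (f x) (g x)

variable {E : Type*} [NormedAddCommGroup E] [InnerProductSpace ℝ E] [FiniteDimensional ℝ E]
  [MeasurableSpace E] [BorelSpace E]

/-- The Dirichlet form `∫ ∇f ⬝ ∇g` divided by the area of the unit sphere. In three dimensions this
is the mutual energy of the charge distributions with potentials `f` and `g`, in the units in
which two unit point charges at distance `d` have mutual energy `1 / d`. -/
noncomputable def dirichletForm (f g : E → ℝ) : ℝ :=
  ((volume : Measure E).toSphere.real Set.univ)⁻¹ * ∫ u, ⟪∇ f u, ∇ g u⟫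

lemma dirichletForm_comm (f g : E → ℝ) : dirichletForm f g = dirichletForm g f := by
  simp only [dirichletForm, real_inner_comm]

lemma measurable_gradient (f : E → ℝ) : Measurable (∇ f) :=
  (InnerProductSpace.toDual ℝ E).symm.continuous.measurable.comp (measurable_fderiv ℝ f)

lemma memLp_gradient_cutoffPotential {a : ℝ} {S : Set E} (hE : finrank ℝ E < 4) (ha : 0 < a)
    (hS : S.Nonempty) (hSb : Bornology.IsBounded S) :
    MemLp (∇ (cutoffPotential a S)) 2 volume := by
  obtain ⟨C, hC⟩ := exists_cutoffPotential_le ha hS hSb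
  rw [memLp_two_iff_integrable_sq_norm (measurable_gradient _).aestronglyMeasurable]
  have hdecay : Integrable (fun u : E ↦ C ^ 4 * (1 + ‖u‖) ^ (-(4 : ℝ))) :=
    (integrable_one_add_norm (mod_cast hE)).const_mul _
  refine hdecay.mono' ((measurable_gradient _).norm.pow_const 2).aestronglyMeasurable ?_
  refine .of_forall fun u ↦ ?_
  rw [Real.norm_of_nonneg (by positivity)]
  calc ‖∇ (cutoffPotential a S) u‖ ^ 2
    _ ≤ (cutoffPotential a S u ^ 2) ^ 2 := by
        gcongr
        exact norm_gradient_cutoffPotential_le ha S u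
    _ ≤ ((C * (1 + ‖u‖)⁻¹) ^ 2) ^ 2 := by
        gcongr
        exacts [(cutoffPotential_pos ha).le, hC u]
    _ = C ^ 4 * (1 + ‖u‖) ^ (-(4 : ℝ)) := by
        rw [Real.rpow_neg (by positivity), show (4 : ℝ) = (4 : ℕ) by norm_num, Real.rpow_natCast,
          mul_pow, mul_pow, inv_pow, inv_pow]
        ring_nf

lemma sum_mul_dirichletForm_nonneg {ι : Type*} [Fintype ι] (c : ι → ℝ) {f : ι → E → ℝ}
    (hf : ∀ i, MemLp (∇ (f i)) 2 volume) :
    0 ≤ ∑ i, ∑ j, c i * c j * dirichletForm (f i) (f j) := by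
  have hint (i j : ι) : Integrable fun u ↦ c i * c j * ⟪∇ (f i) u, ∇ (f j) u⟫ :=
    (integrable_inner_of_memLp_two (hf i) (hf j)).const_mul _
  have hnorm (u : E) : ‖∑ i, c i • ∇ (f i) u‖ ^ 2 =
      ∑ i, ∑ j, c i * c j * ⟪∇ (f i) u, ∇ (f j) u⟫ := by
    rw [← real_inner_self_eq_norm_sq, sum_inner]
    simp only [inner_sum, real_inner_smul_left, real_inner_smul_right]
    exact sum_congr rfl fun i _ ↦ sum_congr rfl fun j _ ↦ by ring
  have hsum : ∫ u, ‖∑ i, c i • ∇ (f i) u‖ ^ 2 =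
      ∑ i, ∑ j, c i * c j * ∫ u, ⟪∇ (f i) u, ∇ (f j) u⟫ := by
    simp only [hnorm]
    rw [integral_finsetSum _ fun i _ ↦ integrable_finsetSum _ fun j _ ↦ hint i j]
    simp only [integral_finsetSum _ fun j _ ↦ hint _ j, integral_const_mul]
  calc 0 ≤ ((volume : Measure E).toSphere.real Set.univ)⁻¹ *
          ∫ u, ‖∑ i, c i • ∇ (f i) u‖ ^ 2 := by positivity
    _ = ∑ i, ∑ j, c i * c j * dirichletForm (f i) (f j) := by
        rw [hsum]
        simp only [mul_sum, dirichletForm, mul_left_comm]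

end DirichletForm

section Newton

variable {E : Type*} [NormedAddCommGroup E] [InnerProductSpace ℝ E] [FiniteDimensional ℝ E]
  [MeasurableSpace E] [BorelSpace E] [Fact (finrank ℝ E = 3)] {f : E → ℝ} {C : ℝ≥0} {a : ℝ}

/- Newton's theorem in dual form: along the rays from `p`, the radial field of the charged sphere
about `p` pairs with `∇ f` to minus the increment of `f` from that sphere to infinity. -/
lemma dirichletForm_cutoffPotential_singleton (ha : 0 < a) (p : E) (hf : LipschitzWith C f)
    (hf0 : Tendsto f (Bornology.cobounded E) (𝓝 0)) (hf2 : MemLp (∇ f) 2 volume) :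
    dirichletForm (cutoffPotential a {p}) f =
      ⨍ ω : sphere (0 : E) 1, f (p + a • (ω : E)) ∂(volume : Measure E).toSphere := by
  have hE : finrank ℝ E = 3 := Fact.out
  have : Nontrivial E := nontrivial_of_finrank_pos (R := ℝ) (by omega)
  have hint : Integrable fun v ↦ ⟪∇ (cutoffPotential a {p}) (p + v), ∇ f (p + v)⟫ :=
    (integrable_inner_of_memLp_two (memLp_gradient_cutoffPotential (by omega) ha
      (Set.singleton_nonempty p) Bornology.isBounded_singleton) hf2).comp_add_left p
  have hdiff : ∀ᵐ v : E, DifferentiableAt ℝ f (p + v) :=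
    (measurePreserving_add_left volume p).quasiMeasurePreserving.ae hf.ae_differentiableAt
  have hintOn := ae_integrableOn_smul_sphere hint
  have hpolar := integral_eq_integral_sphere_integral_Ioi hint
  simp only [hE, Nat.add_one_sub_one, smul_eq_mul] at hintOn hpolar
  rw [dirichletForm, average_eq, smul_eq_mul, ← integral_add_left_eq_self _ p, hpolar]
  congr 1
  refine integral_congr_ae ?_
  filter_upwards [ae_ae_smul_sphere volume hdiff, hintOn] with ω hω hintω
  exact integral_Ioi_sq_mul_inner_gradient ha p (norm_eq_of_mem_sphere ω) hf hf0 hω hintω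

end Newton

section MutualEnergy

variable {E : Type*} [NormedAddCommGroup E] [InnerProductSpace ℝ E] [FiniteDimensional ℝ E]
  [MeasurableSpace E] [BorelSpace E] {a b c : ℝ} {S : Set E} {p q : E}

lemma integrable_cutoffPotential_sphere (hb : 0 < b) (S : Set E) (p : E) (a : ℝ) :
    Integrable (fun ω : sphere (0 : E) 1 ↦ cutoffPotential b S (p + a • (ω : E)))
      (volume : Measure E).toSphere := by
  have hcont := (lipschitzWith_cutoffPotential hb S).continuous
  exact Continuous.integrable_of_hasCompactSupport (by fun_prop) (.of_compactSpace _)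

variable [Fact (finrank ℝ E = 3)]

lemma dirichletForm_cutoffPotential (ha : 0 < a) (p : E) (hb : 0 < b) (hS : S.Nonempty)
    (hSb : Bornology.IsBounded S) :
    dirichletForm (cutoffPotential a {p}) (cutoffPotential b S) =
      ⨍ ω : sphere (0 : E) 1, cutoffPotential b S (p + a • (ω : E))
        ∂(volume : Measure E).toSphere :=
  dirichletForm_cutoffPotential_singleton ha p (lipschitzWith_cutoffPotential hb S)
    (tendsto_cutoffPotential_cobounded hb hS hSb)
    (memLp_gradient_cutoffPotential (Eq.trans_lt (Fact.out : finrank ℝ E = 3) (by norm_num)) hb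
      hS hSb)

lemma dirichletForm_cutoffPotential_mem {s : Set ℝ} (hs : Convex ℝ s) (hsc : IsClosed s)
    (ha : 0 < a) (hb : 0 < b) (hS : S.Nonempty) (hSb : Bornology.IsBounded S)
    (h : ∀ v, dist v p = a → cutoffPotential b S v ∈ s) :
    dirichletForm (cutoffPotential a {p}) (cutoffPotential b S) ∈ s := by
  have hE : finrank ℝ E = 3 := Fact.out
  have : Nontrivial E := nontrivial_of_finrank_pos (R := ℝ) (by omega)
  have : NeZero (volume : Measure E).toSphere := ⟨volume.toSphere_ne_zero⟩
  rw [dirichletForm_cutoffPotential ha p hb hS hSb]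
  refine hs.average_mem hsc (.of_forall fun ω ↦ h _ ?_) (integrable_cutoffPotential_sphere hb S p a)
  simp [norm_smul, abs_of_pos ha]

lemma dirichletForm_cutoffPotential_of_mem (ha : 0 < a) (hSb : Bornology.IsBounded S)
    (hp : p ∈ S) : dirichletForm (cutoffPotential a {p}) (cutoffPotential a S) = a⁻¹ :=
  dirichletForm_cutoffPotential_mem (convex_singleton _) isClosed_singleton ha ha ⟨p, hp⟩ hSb
    fun _ hv ↦ cutoffPotential_eq_inv ((infDist_le_dist_of_mem hp).trans_eq hv)

lemma dirichletForm_cutoffPotential_le (ha : 0 < a) (hb : 0 < b) (hS : S.Nonempty)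
    (hSb : Bornology.IsBounded S) (h : a < infDist p S) :
    dirichletForm (cutoffPotential a {p}) (cutoffPotential b S) ≤ (infDist p S - a)⁻¹ := by
  refine dirichletForm_cutoffPotential_mem (convex_Iic _) isClosed_Iic ha hb hS hSb fun v hv ↦ ?_
  refine cutoffPotential_le_inv (sub_pos.2 h) (le_max_of_le_left ?_)
  rw [sub_le_iff_le_add, ← hv, dist_comm]
  exact infDist_le_infDist_add_dist

lemma dirichletForm_cutoffPotential_anti (ha : 0 < a) (hS : S.Nonempty)
    (hSb : Bornology.IsBounded S) (hc : 0 < c) (hcb : c ≤ b) :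
    dirichletForm (cutoffPotential a {p}) (cutoffPotential b S) ≤
      dirichletForm (cutoffPotential a {p}) (cutoffPotential c S) := by
  have hb := hc.trans_le hcb
  rw [dirichletForm_cutoffPotential ha p hb hS hSb, dirichletForm_cutoffPotential ha p hc hS hSb,
    average_eq, average_eq]
  exact smul_le_smul_of_nonneg_left (integral_mono (integrable_cutoffPotential_sphere hb S p a)
    (integrable_cutoffPotential_sphere hc S p a) fun ω ↦ cutoffPotential_anti hc hcb)
    (by positivity)

lemma tendsto_dirichletForm_cutoffPotential_singleton (ha : 0 < a) (p q : E) :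
    Tendsto (fun c ↦ dirichletForm (cutoffPotential a {p}) (cutoffPotential c {q})) (𝓝[>] 0)
      (𝓝 (cutoffPotential a {p} q)) := by
  have hbound : ∀ᶠ c in 𝓝[>] 0,
      dist (dirichletForm (cutoffPotential a {p}) (cutoffPotential c {q}))
        (cutoffPotential a {p} q) ≤ (a⁻¹ ^ 2).toNNReal * c := by
    filter_upwards [self_mem_nhdsWithin] with c hc
    rw [dirichletForm_comm, ← mem_closedBall]
    refine dirichletForm_cutoffPotential_mem (convex_closedBall _ _) isClosed_closedBall hc ha
      (Set.singleton_nonempty p) Bornology.isBounded_singleton fun v hv ↦ ?_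
    rw [mem_closedBall, ← hv]
    exact (lipschitzWith_cutoffPotential ha {p}).dist_le_mul v q
  refine tendsto_iff_dist_tendsto_zero.2 <|
    squeeze_zero' (.of_forall fun _ ↦ dist_nonneg) hbound ?_
  exact ((continuous_const_mul _).tendsto' 0 0 (mul_zero _)).mono_left nhdsWithin_le_nhds

lemma dirichletForm_cutoffPotential_singleton_le (ha : 0 < a) (hb : 0 < b) (hpq : p ≠ q) :
    dirichletForm (cutoffPotential a {p}) (cutoffPotential b {q}) ≤ (dist p q)⁻¹ := by
  refine (ge_of_tendsto (tendsto_dirichletForm_cutoffPotential_singleton ha p q) ?_).trans ?_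
  · filter_upwards [Ioc_mem_nhdsGT hb] with c hc
    exact dirichletForm_cutoffPotential_anti ha (Set.singleton_nonempty q)
      Bornology.isBounded_singleton hc.1 hc.2
  · rw [dist_comm]
    exact cutoffPotential_le_inv (dist_pos.2 hpq.symm) (by simp)

lemma dirichletForm_cutoffPotential_singleton_eq (ha : 0 < a) (hb : 0 < b)
    (hab : a + b ≤ dist p q) :
    dirichletForm (cutoffPotential a {p}) (cutoffPotential b {q}) = (dist p q)⁻¹ := by
  have hlim : cutoffPotential a {p} q = (dist p q)⁻¹ := by
    rw [cutoffPotential_singleton, dist_comm, max_eq_left (by linarith)]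
  rw [← hlim]
  refine tendsto_nhds_unique (tendsto_const_nhds.congr' ?_)
    (tendsto_dirichletForm_cutoffPotential_singleton ha p q)
  filter_upwards [Ioc_mem_nhdsGT hb] with c hc
  rw [dirichletForm_cutoffPotential ha p hb (Set.singleton_nonempty q)
    Bornology.isBounded_singleton, dirichletForm_cutoffPotential ha p hc.1
    (Set.singleton_nonempty q) Bornology.isBounded_singleton]
  congr! 2 with ω
  have hω : b ≤ dist (p + a • (ω : E)) q := by
    have hp : dist p (p + a • (ω : E)) = a := by simp [norm_smul, abs_of_pos ha]
    linarith [dist_triangle p (p + a • (ω : E)) q]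
  rw [cutoffPotential_singleton, cutoffPotential_singleton, max_eq_left hω,
    max_eq_left (hc.2.trans hω)]

end MutualEnergy

section VoronoiCells

variable {E : Type*} [NormedAddCommGroup E] {a : ℝ} {S : Set E} {p q : E}

lemma dist_add_sub_left (p q u : E) : dist (p + q - u) p = dist u q := by
  rw [dist_eq_norm', dist_eq_norm]
  congr 1
  abel

variable [InnerProductSpace ℝ E]

lemma gradient_cutoffPotential_singleton_add_sub [CompleteSpace E] (ha : 0 < a) (p q u : E) :
    ∇ (cutoffPotential a {p}) (p + q - u) = -∇ (cutoffPotential a {q}) u := by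
  have hdist := dist_add_sub_left p q u
  rcases le_or_gt (dist u q) a with hle | hlt
  · rw [gradient_cutoffPotential_eq_zero ha (by rwa [infDist_singleton, hdist]),
      gradient_cutoffPotential_eq_zero ha (by rwa [infDist_singleton]), neg_zero]
  · have hsub : p + q - u - p = -(u - q) := by abel
    rw [gradient_cutoffPotential_singleton ha (by rwa [hdist]), hdist,
      gradient_cutoffPotential_singleton ha hlt, hsub, smul_neg]

variable [FiniteDimensional ℝ E] [MeasurableSpace E] [BorelSpace E]

lemma ae_dist_ne_dist (hpq : p ≠ q) : ∀ᵐ u : E, dist u p ≠ dist u q := by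
  have hnull := Measure.addHaar_affineSubspace volume (AffineSubspace.perpBisector p q)
    (AffineSubspace.perpBisector_eq_top.not.2 hpq)
  filter_upwards [measure_eq_zero_iff_ae_notMem.1 hnull] with u hu
  rwa [SetLike.mem_coe, AffineSubspace.mem_perpBisector_iff_dist_eq] at hu

-- The reflection `u ↦ p + q - u` swaps the two half-spaces and preserves the integrand.
lemma setIntegral_inner_gradient_eq_half (ha : 0 < a) (hpq : p ≠ q)
    (hint : Integrable fun u ↦ ⟪∇ (cutoffPotential a {p}) u, ∇ (cutoffPotential a {q}) u⟫) :
    ∫ u in {u | dist u q < dist u p},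
        ⟪∇ (cutoffPotential a {p}) u, ∇ (cutoffPotential a {q}) u⟫ =
      (∫ u, ⟪∇ (cutoffPotential a {p}) u, ∇ (cutoffPotential a {q}) u⟫) / 2 := by
  set G : E → ℝ := fun u ↦ ⟪∇ (cutoffPotential a {p}) u, ∇ (cutoffPotential a {q}) u⟫
  set H : Set E := {u | dist u q < dist u p}
  have hH : MeasurableSet H := measurableSet_lt (by fun_prop) (by fun_prop)
  have hG (u : E) : G (p + q - u) = G u := by
    simp only [G]
    rw [gradient_cutoffPotential_singleton_add_sub ha p q, add_comm p q,
      gradient_cutoffPotential_singleton_add_sub ha q p, inner_neg_neg, real_inner_comm]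
  have hmem (u : E) : p + q - u ∈ H ↔ dist u p < dist u q := by
    have hq : dist (p + q - u) q = dist u p := add_comm p q ▸ dist_add_sub_left q p u
    simp only [H, Set.mem_ofPred_eq, dist_add_sub_left, hq]
  have hsplit : ∀ᵐ u : E, H.indicator G (p + q - u) = G u - H.indicator G u := by
    filter_upwards [ae_dist_ne_dist hpq] with u hu
    by_cases huH : u ∈ H
    · rw [Set.indicator_of_mem huH, sub_self, Set.indicator_of_notMem]
      rw [hmem]
      exact huH.out.asymm
    · rw [Set.indicator_of_notMem huH, sub_zero, Set.indicator_of_mem, hG]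
      rw [hmem]
      exact lt_of_le_of_ne (not_lt.1 huH) hu
  have hreflect : ∫ u, H.indicator G u = (∫ u, G u) - ∫ u, H.indicator G u := by
    rw [← integral_sub hint (hint.indicator hH), ← integral_congr_ae hsplit,
      integral_sub_left_eq_self (H.indicator G)]
  rw [← integral_indicator hH]
  linarith

lemma ae_gradient_cutoffPotential_eq_of_nearest (ha : 0 < a) (hp : p ∈ S) :
    ∀ᵐ u : E, (∀ s ∈ S, dist u p ≤ dist u s) →
      ∇ (cutoffPotential a S) u = ∇ (cutoffPotential a {p}) u := by
  filter_upwards [(lipschitzWith_cutoffPotential ha S).ae_differentiableAt,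
    (lipschitzWith_cutoffPotential ha {p}).ae_differentiableAt] with u hdS hdp hnear
  refine gradient_cutoffPotential_eq_of_subset ha (Set.singleton_nonempty p)
    (Set.singleton_subset_iff.2 hp) ?_ hdp hdS
  rw [infDist_singleton]
  exact ((le_infDist ⟨p, hp⟩).2 fun {s} hs ↦ hnear s hs).antisymm (infDist_le_dist_of_mem hp)

lemma ae_inner_gradient_cutoffPotential_pair (ha : 0 < a) (p q : E) :
    ∀ᵐ u : E, ⟪∇ (cutoffPotential a {p}) u, ∇ (cutoffPotential a {p, q}) u⟫ =
      {u | dist u p ≤ dist u q}.indicator (fun u ↦ ‖∇ (cutoffPotential a {p}) u‖ ^ 2) u +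
        {u | dist u q < dist u p}.indicator
          (fun u ↦ ⟪∇ (cutoffPotential a {p}) u, ∇ (cutoffPotential a {q}) u⟫) u := by
  filter_upwards [ae_gradient_cutoffPotential_eq_of_nearest ha (Set.mem_insert p {q}),
    ae_gradient_cutoffPotential_eq_of_nearest ha (Set.mem_insert_of_mem p (Set.mem_singleton q))]
    with u hp hq
  rcases le_or_gt (dist u p) (dist u q) with hle | hlt
  · rw [hp (by simpa using hle), real_inner_self_eq_norm_sq]
    simp [hle, hle.not_gt]
  · rw [hq (by simpa using hlt.le)]
    simp [hlt, hlt.not_ge]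

variable {κ : Type*} [Fintype κ] [Nonempty κ]

lemma ae_inner_gradient_cutoffPotential_range_self_le (ha : 0 < a) (R : κ → E) (l : κ → κ) :
    ∀ᵐ u : E, ⟪∇ (cutoffPotential a (Set.range R)) u, ∇ (cutoffPotential a (Set.range R)) u⟫ ≤
      ∑ k, {u : E | dist u (R k) ≤ dist u (R (l k))}.indicator
        (fun u ↦ ‖∇ (cutoffPotential a {R k}) u‖ ^ 2) u := by
  filter_upwards [eventually_all.2 fun k : κ ↦
    ae_gradient_cutoffPotential_eq_of_nearest ha (Set.mem_range_self (f := R) k)] with u hu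
  obtain ⟨k, hk⟩ := Finite.exists_min fun k ↦ dist u (R k)
  rw [hu k (by simpa using hk), real_inner_self_eq_norm_sq]
  refine (Set.indicator_of_mem (s := {u : E | dist u (R k) ≤ dist u (R (l k))}) (hk (l k))
    fun u ↦ ‖∇ (cutoffPotential a {R k}) u‖ ^ 2).symm.trans_le ?_
  exact single_le_sum (f := fun k ↦ {u : E | dist u (R k) ≤ dist u (R (l k))}.indicator
    (fun u ↦ ‖∇ (cutoffPotential a {R k}) u‖ ^ 2) u)
    (fun k _ ↦ Set.indicator_nonneg (fun _ _ ↦ by positivity) _) (mem_univ k)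

variable [Fact (finrank ℝ E = 3)]

lemma memLp_gradient_cutoffPotential_singleton (ha : 0 < a) (p : E) :
    MemLp (∇ (cutoffPotential a {p})) 2 volume :=
  memLp_gradient_cutoffPotential (Eq.trans_lt (Fact.out : finrank ℝ E = 3) (by norm_num)) ha
    (Set.singleton_nonempty p) Bornology.isBounded_singleton

/- Pairing `p` with the potential of `{p, q}` gives `1 / a`, split into the wanted integral and half
of the mutual energy of `p` and `q`. -/
lemma setIntegral_norm_gradient_cutoffPotential_sq (ha : 0 < a) (hpq : 2 * a ≤ dist p q) :
    ((volume : Measure E).toSphere.real Set.univ)⁻¹ *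
        ∫ u in {u | dist u p ≤ dist u q}, ‖∇ (cutoffPotential a {p}) u‖ ^ 2 =
      a⁻¹ - (2 * dist p q)⁻¹ := by
  have hL2 := memLp_gradient_cutoffPotential_singleton (E := E) ha
  have hint := integrable_inner_of_memLp_two (hL2 p) (hL2 q)
  have hle : MeasurableSet {u : E | dist u p ≤ dist u q} :=
    measurableSet_le (by fun_prop) (by fun_prop)
  have hlt : MeasurableSet {u : E | dist u q < dist u p} :=
    measurableSet_lt (by fun_prop) (by fun_prop)
  have hself := dirichletForm_cutoffPotential_of_mem ha (Set.toFinite {p, q}).isBounded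
    (Set.mem_insert p {q})
  have hcross := dirichletForm_cutoffPotential_singleton_eq ha ha (by linarith : a + a ≤ dist p q)
  rw [dirichletForm, integral_congr_ae (ae_inner_gradient_cutoffPotential_pair ha p q),
    integral_add (((hL2 p).integrable_norm_pow two_ne_zero).indicator hle) (hint.indicator hlt),
    integral_indicator hle, integral_indicator hlt,
    setIntegral_inner_gradient_eq_half ha (dist_pos.1 (by linarith)) hint] at hself
  rw [dirichletForm] at hcross
  rw [mul_inv, ← hself, ← hcross]
  ring

lemma dirichletForm_cutoffPotential_range_le (ha : 0 < a) (R : κ → E) (l : κ → κ)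
    (hl : ∀ k, 2 * a ≤ dist (R k) (R (l k))) :
    dirichletForm (cutoffPotential a (Set.range R)) (cutoffPotential a (Set.range R)) ≤
      ∑ k, (a⁻¹ - (2 * dist (R k) (R (l k)))⁻¹) := by
  have hmeas (k : κ) : MeasurableSet {u : E | dist u (R k) ≤ dist u (R (l k))} :=
    measurableSet_le (by fun_prop) (by fun_prop)
  have hint (k : κ) : Integrable ({u : E | dist u (R k) ≤ dist u (R (l k))}.indicator
      fun u ↦ ‖∇ (cutoffPotential a {R k}) u‖ ^ 2) :=
    ((memLp_gradient_cutoffPotential_singleton ha (R k)).integrable_norm_pow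
      two_ne_zero).indicator (hmeas k)
  calc dirichletForm (cutoffPotential a (Set.range R)) (cutoffPotential a (Set.range R))
    _ ≤ ((volume : Measure E).toSphere.real Set.univ)⁻¹ * ∫ u, ∑ k,
          {u : E | dist u (R k) ≤ dist u (R (l k))}.indicator
            (fun u ↦ ‖∇ (cutoffPotential a {R k}) u‖ ^ 2) u := by
        refine mul_le_mul_of_nonneg_left (integral_mono_of_nonneg
          (.of_forall fun u ↦ real_inner_self_nonneg) (integrable_finsetSum _ fun k _ ↦ hint k)
          (ae_inner_gradient_cutoffPotential_range_self_le ha R l)) (by positivity)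
    _ = ∑ k, (a⁻¹ - (2 * dist (R k) (R (l k)))⁻¹) := by
        rw [integral_finsetSum _ fun k _ ↦ hint k, mul_sum]
        refine sum_congr rfl fun k _ ↦ ?_
        rw [integral_indicator (hmeas k), setIntegral_norm_gradient_cutoffPotential_sq ha (hl k)]

end VoronoiCells

section LiebYau

-- The radius `d / (1 + √(2 * z))` minimises `(2 * r)⁻¹ + z * (d - r)⁻¹` over `0 < r < d`.
lemma inv_two_mul_add_mul_inv_sub {z d : ℝ} (hz : 0 < z) (hd : 0 < d) :
    (2 * (d / (1 + √(2 * z))))⁻¹ + z * (d - d / (1 + √(2 * z)))⁻¹ =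
      (z + √(2 * z) + 1 / 2) / d := by
  obtain ⟨s, hs, rfl⟩ : ∃ s : ℝ, 0 < s ∧ z = s ^ 2 / 2 :=
    ⟨√(2 * z), by positivity, by
      rw [Real.sq_sqrt (by positivity), mul_div_cancel_left₀ z two_ne_zero]⟩
  have hsub : d - d / (1 + s) = d * s / (1 + s) := by
    field_simp
    ring
  rw [mul_div_cancel₀ _ two_ne_zero, Real.sqrt_sq hs.le, hsub]
  field_simp
  ring

lemma exists_dist_eq_infDist_range_sdiff {X κ : Type*} [PseudoMetricSpace X] [Finite κ]
    [Nontrivial κ] {R : κ → X} (hR : Function.Injective R) (k : κ) :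
    ∃ l, R l ≠ R k ∧ dist (R k) (R l) = infDist (R k) (Set.range R \ {R k}) := by
  obtain ⟨k', hk'⟩ := exists_ne k
  obtain ⟨_, ⟨⟨l, rfl⟩, hl⟩, hdist⟩ :=
    ((Set.finite_range R).sdiff (t := {R k})).isCompact.exists_infDist_eq_dist
      ⟨R k', Set.mem_range_self k', hR.ne hk'⟩ (R k)
  exact ⟨l, hl, hdist.symm⟩

variable {E : Type*} [NormedAddCommGroup E] {ι κ : Type*} [Fintype ι] [Fintype κ]

/-- The Coulomb energy of charges `-1` at the points `x i` (electrons) and `z` at the points `R k`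
(nuclei). -/
noncomputable def coulombEnergy [DecidableEq ι] [DecidableEq κ] (z : ℝ) (x : ι → E) (R : κ → E) :
    ℝ :=
  (1 / 2) * (∑ i, ∑ j ∈ univ \ {i}, 1 / ‖x i - x j‖) - (∑ i, ∑ k, z / ‖x i - R k‖)
    + (1 / 2) * (∑ k, ∑ k' ∈ univ \ {k}, z ^ 2 / ‖R k - R k'‖)

variable [InnerProductSpace ℝ E] [FiniteDimensional ℝ E] [MeasurableSpace E] [BorelSpace E]
  [Fact (finrank ℝ E = 3)] {a z : ℝ} {x : ι → E} {R : κ → E}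

lemma sum_dirichletForm_cutoffPotential_le [DecidableEq ι] {r : ι → ℝ} (hr : ∀ i, 0 < r i)
    (hx : Function.Injective x) :
    ∑ i, ∑ j, dirichletForm (cutoffPotential (r i) {x i}) (cutoffPotential (r j) {x j}) ≤
      ∑ i, (r i)⁻¹ + ∑ i, ∑ j ∈ univ \ {i}, 1 / ‖x i - x j‖ := by
  rw [← sum_add_distrib]
  refine sum_le_sum fun i _ ↦ ?_
  rw [← add_sum_erase _ _ (mem_univ i), erase_eq]
  gcongr with j hj
  · exact (dirichletForm_cutoffPotential_of_mem (hr i) Bornology.isBounded_singleton rfl).le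
  · rw [one_div, ← dist_eq_norm]
    exact dirichletForm_cutoffPotential_singleton_le (hr i) (hr j)
      (hx.ne (by simpa [eq_comm] using hj))

/- The right-hand side is the energy of the field with potential
`∑ i, Φ {x i} - z * ∑ k, Φ {R k} + z * Φ (Set.range R)`, where `Φ` stands for `cutoffPotential`. -/
lemma sum_dirichletForm_cutoffPotential_nonneg [Nonempty κ] (z : ℝ) {r : ι → ℝ}
    (hr : ∀ i, 0 < r i) (x : ι → E) (ha : 0 < a) (R : κ → E) :
    0 ≤ (∑ i, ∑ j, dirichletForm (cutoffPotential (r i) {x i}) (cutoffPotential (r j) {x j}))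
      - 2 * z * (∑ i, ∑ k, dirichletForm (cutoffPotential (r i) {x i}) (cutoffPotential a {R k}))
      + z ^ 2 * (∑ k, ∑ k', dirichletForm (cutoffPotential a {R k}) (cutoffPotential a {R k'}))
      + 2 * z *
        (∑ i, dirichletForm (cutoffPotential (r i) {x i}) (cutoffPotential a (Set.range R)))
      - 2 * z ^ 2 *
        (∑ k, dirichletForm (cutoffPotential a {R k}) (cutoffPotential a (Set.range R)))
      + z ^ 2 *
        dirichletForm (cutoffPotential a (Set.range R)) (cutoffPotential a (Set.range R)) := by
  have hE : finrank ℝ E < 4 := Eq.trans_lt (Fact.out : finrank ℝ E = 3) (by norm_num)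
  have hpsd := sum_mul_dirichletForm_nonneg (ι := ι ⊕ κ ⊕ Unit)
    (Sum.elim (fun _ ↦ 1) (Sum.elim (fun _ ↦ -z) fun _ ↦ z))
    (f := Sum.elim (fun i ↦ cutoffPotential (r i) {x i})
      (Sum.elim (fun k ↦ cutoffPotential a {R k}) fun _ ↦ cutoffPotential a (Set.range R))) (by
    rintro (i | k | _)
    · exact memLp_gradient_cutoffPotential_singleton (hr i) (x i)
    · exact memLp_gradient_cutoffPotential_singleton ha (R k)
    · exact memLp_gradient_cutoffPotential hE ha (Set.range_nonempty R)
        (Set.finite_range R).isBounded)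
  have hswap : ∑ k, ∑ i, dirichletForm (cutoffPotential a {R k}) (cutoffPotential (r i) {x i}) =
      ∑ i, ∑ k, dirichletForm (cutoffPotential (r i) {x i}) (cutoffPotential a {R k}) :=
    sum_comm.trans (sum_congr rfl fun i _ ↦ sum_congr rfl fun k _ ↦ dirichletForm_comm _ _)
  simp only [Fintype.sum_sum_type, Sum.elim_inl, Sum.elim_inr, univ_unique, sum_singleton,
    sum_add_distrib, ← mul_sum, hswap, dirichletForm_comm (cutoffPotential a (Set.range R))] at hpsd
  linarith

variable [DecidableEq ι] [DecidableEq κ]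

lemma neg_sum_add_sum_le_coulombEnergy_of_radii [Nonempty κ] (hz : 0 ≤ z) {r : ι → ℝ}
    (hr : ∀ i, 0 < r i) (ha : 0 < a) {l : κ → κ} (hx : Function.Injective x)
    (hR : Function.Injective R)
    (hra : ∀ i, r i + a ≤ infDist (x i) (Set.range R))
    (hal : ∀ k, 2 * a ≤ dist (R k) (R (l k))) :
    -(∑ i, ((2 * r i)⁻¹ + z * (infDist (x i) (Set.range R) - r i)⁻¹))
      + z ^ 2 / 4 * ∑ k, 1 / dist (R k) (R (l k)) ≤ coulombEnergy z x R := by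
  have hpsd := sum_dirichletForm_cutoffPotential_nonneg z hr x ha R
  have hxx := sum_dirichletForm_cutoffPotential_le hr hx
  have hRR := sum_dirichletForm_cutoffPotential_le (fun _ ↦ ha) hR
  have hxR (i : ι) (k : κ) : dirichletForm (cutoffPotential (r i) {x i}) (cutoffPotential a {R k}) =
      1 / ‖x i - R k‖ := by
    rw [one_div, ← dist_eq_norm]
    exact dirichletForm_cutoffPotential_singleton_eq (hr i) ha
      ((hra i).trans (infDist_le_dist_of_mem (Set.mem_range_self k)))
  have hbdd : Bornology.IsBounded (Set.range R) := (Set.finite_range R).isBounded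
  have hxN : ∑ i, dirichletForm (cutoffPotential (r i) {x i}) (cutoffPotential a (Set.range R)) ≤
      ∑ i, (infDist (x i) (Set.range R) - r i)⁻¹ :=
    sum_le_sum fun i _ ↦ dirichletForm_cutoffPotential_le (hr i) ha (Set.range_nonempty R) hbdd
      (by linarith [hra i])
  have hRN (k : κ) : dirichletForm (cutoffPotential a {R k}) (cutoffPotential a (Set.range R)) =
      a⁻¹ := dirichletForm_cutoffPotential_of_mem ha hbdd (Set.mem_range_self k)
  have hNN := dirichletForm_cutoffPotential_range_le ha R l hal
  simp only [hxR, hRN] at hpsd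
  have hxN' := mul_le_mul_of_nonneg_left hxN hz
  have hRR' := mul_le_mul_of_nonneg_left hRR (sq_nonneg z)
  have hNN' := mul_le_mul_of_nonneg_left hNN (sq_nonneg z)
  simp only [coulombEnergy, mul_inv, sum_sub_distrib, sum_add_distrib, ← mul_sum,
    div_eq_mul_inv] at hpsd hxN' hRR' hNN' hxx ⊢
  linarith

theorem lieb_yau_inequality_general [Nontrivial κ] (hz : 0 < z) (hx : Function.Injective x)
    (hR : Function.Injective R) (hxR : ∀ i k, x i ≠ R k) :
    -(∑ i, (z + √(2 * z) + 1 / 2) / infDist (x i) (Set.range R \ {x i}))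
        + z ^ 2 / 4 * ∑ k, 1 / infDist (R k) (Set.range R \ {R k}) ≤
      coulombEnergy z x R := by
  have hxmem (i : ι) : x i ∉ Set.range R := by simpa [eq_comm] using hxR i
  have hpos (i : ι) : 0 < infDist (x i) (Set.range R) :=
    ((Set.finite_range R).isClosed.notMem_iff_infDist_pos (Set.range_nonempty R)).1 (hxmem i)
  choose l hlne hldist using exists_dist_eq_infDist_range_sdiff hR
  set r : ι → ℝ := fun i ↦ infDist (x i) (Set.range R) / (1 + √(2 * z))
  have hr (i : ι) : 0 < r i := div_pos (hpos i) (by positivity)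
  have hrlt (i : ι) : r i < infDist (x i) (Set.range R) :=
    div_lt_self (hpos i) (lt_add_of_pos_right _ (Real.sqrt_pos.2 (by positivity)))
  obtain ⟨a, ha, hra, hal⟩ : ∃ a, 0 < a ∧ (∀ i, r i + a ≤ infDist (x i) (Set.range R)) ∧
      ∀ k, 2 * a ≤ dist (R k) (R (l k)) := by
    have hsmall {c : ℝ} (hc : 0 < c) : ∀ᶠ a in 𝓝[>] (0 : ℝ), a ≤ c :=
      (eventually_le_nhds hc).filter_mono nhdsWithin_le_nhds
    have hra := eventually_all.2 fun i ↦ hsmall (sub_pos.2 (hrlt i))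
    have hal := eventually_all.2 fun k ↦ hsmall (half_pos (dist_pos.2 (hlne k).symm))
    obtain ⟨a, ha, hra, hal⟩ := (eventually_mem_nhdsWithin.and (hra.and hal)).exists
    exact ⟨a, ha, fun i ↦ by linarith [hra i], fun k ↦ by linarith [hal k]⟩
  refine (le_of_eq ?_).trans
    (neg_sum_add_sum_le_coulombEnergy_of_radii hz.le hr ha (l := l) hx hR hra hal)
  simp only [r, inv_two_mul_add_mul_inv_sub hz (hpos _), hldist,
    Set.sdiff_singleton_eq_self (hxmem _)]

end LiebYau

lemma nearestNucleusDist_eq_infDist {K : ℕ} (R : Fin K → EuclideanSpace ℝ (Fin 3))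
    (y : EuclideanSpace ℝ (Fin 3)) :
    nearestNucleusDist R y = infDist y (Set.range R \ {y}) := by
  rw [nearestNucleusDist, infDist_eq_iInf, iInf]
  congr 1
  ext d
  simp [dist_eq_norm, eq_comm]

/-- The Lieb–Yau inequality. -/
theorem lieb_yau_inequality (z : ℝ) (hz : 0 < z) (N K : ℕ) (hK : 2 ≤ K)
    (x : Fin N → EuclideanSpace ℝ (Fin 3)) (R : Fin K → EuclideanSpace ℝ (Fin 3))
    (hx : Function.Injective x) (hR : Function.Injective R)
    (hxR : ∀ (i : Fin N) (k : Fin K), x i ≠ R k) :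
    (1 / 2) * (∑ i : Fin N, ∑ j ∈ univ \ {i}, 1 / ‖x i - x j‖)
        - (∑ i : Fin N, ∑ k : Fin K, z / ‖x i - R k‖)
        + (1 / 2) * (∑ k : Fin K, ∑ k' ∈ univ \ {k}, z ^ 2 / ‖R k - R k'‖)
      ≥ - (∑ i : Fin N, (z + Real.sqrt (2 * z) + 1 / 2) / nearestNucleusDist R (x i))
        + (z ^ 2 / 4) * ∑ k : Fin K, 1 / nearestNucleusDist R (R k) := by
  have : Nontrivial (Fin K) := Fin.nontrivial_iff_two_le.2 hK
  have : Fact (finrank ℝ (EuclideanSpace ℝ (Fin 3)) = 3) := ⟨finrank_euclideanSpace_fin⟩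
  simp only [nearestNucleusDist_eq_infDist]
  exact lieb_yau_inequality_general hz hx hR hxR
end

section
/- Let Δ be a fixed open simplex in ℝ³. There exists a constant C > 0 (depending only on Δ) such that for every N ∈ ℕ, every z_1, …, z_N ∈ ℝ, every pairwise distinct x_1, …, x_N ∈ ℝ³ and every ℓ > 0: Σ_{1 ≤ i < j ≤ N} z_i z_j/‖x_i − x_j‖ ≥ (1/(ℓ³·|Δ|)) · ∫_{SO(3)} ∫_{ℝ³} [ Σ_{1 ≤ i < j ≤ N} z_i z_j · 1_{R(ℓΔ)+u}(x_i) · 1_{R(ℓΔ)+u}(x_j) / ‖x_i − x_j‖ ] du dμ(R) − (C/ℓ)·Σ_{i=1}^N z_i² (Graf–Schenker inequality). -/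
open MeasureTheory Finset
open scoped ENNReal Pointwise

noncomputable instance : MeasurableSpace (Matrix (Fin 3) (Fin 3) ℝ) := borel _
instance : BorelSpace (Matrix (Fin 3) (Fin 3) ℝ) := ⟨rfl⟩

/-!
The covariogram `w ↦ |A ∩ (A - w)|` of a set `A` is positive definite, being an autocorrelation
of indicator functions. Averaging the energy localized to a translated copy of `A` replaces
`1 / ‖w‖` by `1 / ‖w‖` times the covariogram of `A`. Intersecting a simplex with a translate of
itself gives a smaller homothetic simplex, so the covariogram of `ℓΔ` is
`ℓ³ |Δ| (1 - p w / ℓ)₊³` for a gauge `p`, and invariance of `μ` lets one replace `p (R⁻¹ w)` by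
`‖w‖ p (R⁻¹ e)` for a fixed unit vector `e`. For each `R` it remains to see that
`(1 - (1 - a ‖w‖)₊³) / ‖w‖`, with `a = p (R⁻¹ e) / ℓ`, is positive definite; it is a superposition
of covariograms of balls. Its value `3 a` at `w = 0` is the self-energy that produces the error
term.
-/

section DoubleSums

theorem sum_sum_eq_two_mul_sum_sum_Ioi_add_sum_diag {ι R : Type*} [CommSemiring R] [Fintype ι]
    [LinearOrder ι] [LocallyFiniteOrderTop ι] [LocallyFiniteOrderBot ι] {f : ι → ι → R}
    (hf : ∀ i j, f i j = f j i) :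
    ∑ i, ∑ j, f i j = 2 * ∑ i, ∑ j ∈ Ioi i, f i j + ∑ i, f i i := by
  have split_diag (i : ι) : ∑ j, f i j = ∑ j ∈ {i}ᶜ, f i j + f i i := by
    rw [← sum_singleton (f i) i, sum_compl_add_sum]
  have off_diag : ∑ i, ∑ j ∈ {i}ᶜ, f i j = 2 * ∑ i, ∑ j ∈ Ioi i, f i j := by
    simpa only [hf _, ← two_mul, ← mul_sum]
      using (sum_sum_Ioi_add_eq_sum_sum_off_diag fun i j => f j i).symm
  rw [sum_congr rfl fun i _ => split_diag i, sum_add_distrib, off_diag]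

variable {α ι κ : Type*} [MeasurableSpace α] {μ : Measure α}

theorem integrable_sum_sum_const_mul (s : Finset ι) (t : ι → Finset κ) (c : ι → κ → ℝ)
    {f : ι → κ → α → ℝ} (hf : ∀ i j, Integrable (f i j) μ) :
    Integrable (fun a => ∑ i ∈ s, ∑ j ∈ t i, c i j * f i j a) μ :=
  integrable_finsetSum _ fun i _ => integrable_finsetSum _ fun j _ => (hf i j).const_mul _

theorem integral_sum_sum_const_mul (s : Finset ι) (t : ι → Finset κ) (c : ι → κ → ℝ)
    {f : ι → κ → α → ℝ} (hf : ∀ i j, Integrable (f i j) μ) :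
    ∫ a, ∑ i ∈ s, ∑ j ∈ t i, c i j * f i j a ∂μ =
      ∑ i ∈ s, ∑ j ∈ t i, c i j * ∫ a, f i j a ∂μ := by
  rw [integral_finsetSum _ fun i _ => integrable_finsetSum _ fun j _ => (hf i j).const_mul _]
  refine sum_congr rfl fun i _ => ?_
  rw [integral_finsetSum _ fun j _ => (hf i j).const_mul _]
  exact sum_congr rfl fun j _ => integral_const_mul _ _

end DoubleSums

/-- Positive semidefiniteness of the translation-invariant kernel `(x, y) ↦ K (x - y)`, tested on
finite families of points, which need not be distinct. -/
def IsPositiveDefinite {G : Type*} [AddGroup G] (K : G → ℝ) : Prop :=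
  ∀ (n : ℕ) (z : Fin n → ℝ) (x : Fin n → G), 0 ≤ ∑ i, ∑ j, z i * z j * K (x i - x j)

namespace IsPositiveDefinite

variable {G : Type*} [AddGroup G] {K L : G → ℝ}

theorem add (hK : IsPositiveDefinite K) (hL : IsPositiveDefinite L) :
    IsPositiveDefinite fun w => K w + L w := by
  intro n z x
  simp only [mul_add, sum_add_distrib]
  exact add_nonneg (hK n z x) (hL n z x)

theorem const_mul (hK : IsPositiveDefinite K) {c : ℝ} (hc : 0 ≤ c) :
    IsPositiveDefinite fun w => c * K w := by
  intro n z x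
  simp only [mul_left_comm _ c, ← mul_sum]
  exact mul_nonneg hc (hK n z x)

theorem integral {α : Type*} [MeasurableSpace α] {μ : Measure α} {k : α → G → ℝ}
    (hk : ∀ᵐ a ∂μ, IsPositiveDefinite (k a)) (hint : ∀ w, Integrable (fun a => k a w) μ) :
    IsPositiveDefinite fun w => ∫ a, k a w ∂μ := by
  intro n z x
  rw [← integral_sum_sum_const_mul univ (fun _ => univ) (fun i j => z i * z j)
    fun i j => hint (x i - x j)]
  exact integral_nonneg_of_ae (hk.mono fun a ha => ha n z x)

end IsPositiveDefinite

section Covariogram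

/-- The covariogram `w ↦ μ (A ∩ (A - w))` of a set `A`. -/
noncomputable def covariogram {G : Type*} [Add G] [MeasurableSpace G] (μ : Measure G) (A : Set G)
    (w : G) : ℝ :=
  μ.real (A ∩ (· + w) ⁻¹' A)

theorem sum_sum_mul_measureReal_inter_nonneg {α ι : Type*} [MeasurableSpace α] {μ : Measure α}
    [Fintype ι] {A : ι → Set α} (hA : ∀ i, MeasurableSet (A i)) (hμA : ∀ i, μ (A i) ≠ ∞)
    (z : ι → ℝ) : 0 ≤ ∑ i, ∑ j, z i * z j * μ.real (A i ∩ A j) := by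
  let χ (i : ι) : Lp ℝ 2 μ := indicatorConstLp 2 (hA i) (hμA i) 1
  calc 0 ≤ inner ℝ (∑ i, z i • χ i) (∑ j, z j • χ j) := real_inner_self_nonneg
    _ = ∑ i, ∑ j, z i * z j * μ.real (A i ∩ A j) := by
      simp only [χ, sum_inner, inner_sum, real_inner_smul_left, real_inner_smul_right,
        L2.inner_indicatorConstLp_indicatorConstLp, mul_assoc]
      simp [Set.inter_comm]

theorem indicator_image_add_mul_indicator_image_add {G : Type*} [AddCommGroup G] (A : Set G)
    (x y u : G) :
    ((· + u) '' A).indicator (fun _ => (1 : ℝ)) x * ((· + u) '' A).indicator (fun _ => 1) y =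
      ((x - ·) ⁻¹' A ∩ (y - ·) ⁻¹' A).indicator 1 u := by
  classical
  simp only [Set.indicator_apply, Set.image_add_right, Set.mem_preimage, Set.mem_inter_iff,
    ← sub_eq_add_neg, ite_and, ite_mul, one_mul, zero_mul, Pi.one_apply]

variable {G : Type*} [AddCommGroup G] [MeasurableSpace G] [MeasurableAdd G] [MeasurableNeg G]
  {μ : Measure G} [μ.IsAddLeftInvariant] [μ.IsNegInvariant] {A : Set G}

theorem covariogram_sub (hA : MeasurableSet A) (x y : G) :
    covariogram μ A (x - y) = μ.real ((x - ·) ⁻¹' A ∩ (y - ·) ⁻¹' A) := by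
  have hpre : (x - ·) ⁻¹' A ∩ (y - ·) ⁻¹' A = (y - ·) ⁻¹' (A ∩ (· + (x - y)) ⁻¹' A) := by
    ext u
    simp only [Set.mem_inter_iff, Set.mem_preimage, sub_add_sub_cancel', and_comm]
  rw [hpre, covariogram, (Measure.measurePreserving_sub_left μ y).measureReal_preimage
    (hA.inter (hA.preimage (measurable_add_const _))).nullMeasurableSet]

theorem isPositiveDefinite_covariogram (hA : MeasurableSet A) (hμA : μ A ≠ ∞) :
    IsPositiveDefinite (covariogram μ A) := by
  intro n z x
  have hreflect (y : G) := Measure.measurePreserving_sub_left μ y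
  simp only [covariogram_sub hA]
  refine sum_sum_mul_measureReal_inter_nonneg (fun i => (hreflect (x i)).measurable hA)
    (fun i => ?_) z
  rwa [(hreflect (x i)).measure_preimage hA.nullMeasurableSet]

theorem integral_indicator_image_add_mul (hA : MeasurableSet A) (x y : G) :
    ∫ u, ((· + u) '' A).indicator (fun _ => (1 : ℝ)) x *
      ((· + u) '' A).indicator (fun _ => 1) y ∂μ = covariogram μ A (x - y) := by
  have hreflect (y : G) := (Measure.measurePreserving_sub_left μ y).measurable hA
  simp only [indicator_image_add_mul_indicator_image_add]
  rw [integral_indicator_one ((hreflect x).inter (hreflect y)), covariogram_sub hA]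

theorem integrable_indicator_image_add_mul (hA : MeasurableSet A) (hμA : μ A ≠ ∞) (x y : G) :
    Integrable (fun u => ((· + u) '' A).indicator (fun _ => (1 : ℝ)) x *
      ((· + u) '' A).indicator (fun _ => 1) y) μ := by
  have hreflect (y : G) := Measure.measurePreserving_sub_left μ y
  simp only [indicator_image_add_mul_indicator_image_add]
  refine (integrable_indicator_iff
    (((hreflect x).measurable hA).inter ((hreflect y).measurable hA))).2 (integrableOn_const ?_)
  refine measure_ne_top_of_subset Set.inter_subset_left ?_
  rwa [(hreflect x).measure_preimage hA.nullMeasurableSet]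

end Covariogram

section CovariogramTransforms

theorem measureReal_smul_set_of_nonneg {E : Type*} [NormedAddCommGroup E] [NormedSpace ℝ E]
    [FiniteDimensional ℝ E] [MeasurableSpace E] [BorelSpace E] (μ : Measure E) [μ.IsAddHaarMeasure]
    {c : ℝ} (hc : 0 ≤ c) (A : Set E) : μ.real (c • A) = c ^ Module.finrank ℝ E * μ.real A := by
  rw [measureReal_def, Measure.addHaar_smul_of_nonneg μ hc, ENNReal.toReal_mul,
    ENNReal.toReal_ofReal (pow_nonneg hc _), measureReal_def]

theorem covariogram_smul_set {E : Type*} [NormedAddCommGroup E] [NormedSpace ℝ E]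
    [FiniteDimensional ℝ E] [MeasurableSpace E] [BorelSpace E] (μ : Measure E) [μ.IsAddHaarMeasure]
    (A : Set E) {c : ℝ} (hc : 0 < c) (w : E) :
    covariogram μ (c • A) w = c ^ Module.finrank ℝ E * covariogram μ A (c⁻¹ • w) := by
  have hset : c • A ∩ (· + w) ⁻¹' (c • A) = c • (A ∩ (· + c⁻¹ • w) ⁻¹' A) := by
    ext y
    simp only [Set.mem_inter_iff, Set.mem_preimage, Set.mem_smul_set_iff_inv_smul_mem₀ hc.ne',
      smul_add]
  rw [covariogram, covariogram, hset, measureReal_smul_set_of_nonneg μ hc.le]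

theorem covariogram_image_linearIsometryEquiv {E F : Type*} [NormedAddCommGroup E]
    [InnerProductSpace ℝ E] [FiniteDimensional ℝ E] [MeasurableSpace E] [BorelSpace E]
    [NormedAddCommGroup F] [InnerProductSpace ℝ F] [FiniteDimensional ℝ F] [MeasurableSpace F]
    [BorelSpace F] (T : E ≃ₗᵢ[ℝ] F) (A : Set E) (w : F) :
    covariogram volume (T '' A) w = covariogram volume A (T.symm w) := by
  have hset : T '' A ∩ (· + w) ⁻¹' (T '' A) = T.symm ⁻¹' (A ∩ (· + T.symm w) ⁻¹' A) := by
    ext y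
    simp only [Set.mem_inter_iff, Set.mem_preimage, T.image_eq_preimage_symm, map_add]
  rw [covariogram, covariogram, hset, measureReal_def, measureReal_def,
    T.symm.measurePreserving.measure_preimage_emb T.symm.toHomeomorph.measurableEmbedding]

end CovariogramTransforms

section Simplex

/-- The open simplex with vertices `b`. -/
def openSimplex {ι E : Type*} [NormedAddCommGroup E] [NormedSpace ℝ E] (b : AffineBasis ι ℝ E) :
    Set E :=
  interior (convexHull ℝ (Set.range b))

/-- The gauge of the difference body `Δ - Δ` of the simplex `Δ` with vertices `b`. Translating by
`w` keeps a point with barycentric coordinates `β` inside `Δ` iff `-(b.coord k).linear w < β k` for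
all `k`, and the positive parts of these bounds add up to the gauge of `w`. -/
noncomputable def simplexGauge {ι E : Type*} [Fintype ι] [NormedAddCommGroup E] [NormedSpace ℝ E]
    (b : AffineBasis ι ℝ E) (w : E) : ℝ :=
  ∑ k, max (-(b.coord k).linear w) 0

theorem isOpen_openSimplex {ι E : Type*} [NormedAddCommGroup E] [NormedSpace ℝ E]
    (b : AffineBasis ι ℝ E) : IsOpen (openSimplex b) :=
  isOpen_interior

section Finite

variable {ι E : Type*} [Finite ι] [NormedAddCommGroup E] [NormedSpace ℝ E]
  (b : AffineBasis ι ℝ E)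

theorem mem_openSimplex_iff {y : E} : y ∈ openSimplex b ↔ ∀ k, 0 < b.coord k y := by
  rw [openSimplex, b.interior_convexHull, Set.mem_ofPred_eq]

theorem mem_openSimplex_inter_preimage_add_iff {w y : E} :
    y ∈ openSimplex b ∩ (· + w) ⁻¹' openSimplex b ↔
      ∀ k, max (-(b.coord k).linear w) 0 < b.coord k y := by
  have coord_add (k : ι) : b.coord k (y + w) = b.coord k y + (b.coord k).linear w := by
    rw [add_comm, ← vadd_eq_add, AffineMap.map_vadd, vadd_eq_add, add_comm]
  simp only [Set.mem_inter_iff, Set.mem_preimage, mem_openSimplex_iff, coord_add, ← forall_and,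
    max_lt_iff, neg_lt_iff_pos_add, and_comm]

variable [MeasurableSpace E] (μ : Measure E)

theorem measure_openSimplex_ne_top [IsFiniteMeasureOnCompacts μ] : μ (openSimplex b) ≠ ∞ :=
  measure_ne_top_of_subset interior_subset
    ((Set.finite_range b).isCompact_convexHull ℝ).measure_lt_top.ne

theorem measureReal_openSimplex_pos [μ.IsOpenPosMeasure] [IsFiniteMeasureOnCompacts μ] :
    0 < μ.real (openSimplex b) := by
  have := Fintype.ofFinite ι
  have hne : (openSimplex b).Nonempty := ⟨_, b.centroid_mem_interior_convexHull⟩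
  exact ENNReal.toReal_pos ((isOpen_openSimplex b).measure_pos μ hne).ne'
    (measure_openSimplex_ne_top b μ)

end Finite

variable {ι E : Type*} [Fintype ι] [NormedAddCommGroup E] [NormedSpace ℝ E]
  (b : AffineBasis ι ℝ E)

theorem simplexGauge_nonneg (w : E) : 0 ≤ simplexGauge b w :=
  sum_nonneg fun _ _ => le_max_right _ _

theorem simplexGauge_smul {t : ℝ} (ht : 0 ≤ t) (w : E) :
    simplexGauge b (t • w) = t * simplexGauge b w := by
  simp only [simplexGauge, mul_sum, mul_max_of_nonneg _ _ ht, map_smul, smul_eq_mul, mul_neg,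
    mul_zero]

theorem continuous_simplexGauge : Continuous (simplexGauge b) := by
  have := b.finiteDimensional
  exact continuous_finsetSum _ fun k _ =>
    (b.coord k).linear.continuous_of_finiteDimensional.neg.max continuous_const

theorem exists_simplexGauge_le_mul_norm : ∃ P > 0, ∀ w, simplexGauge b w ≤ P * ‖w‖ := by
  have := b.finiteDimensional
  let coordL (k : ι) : E →L[ℝ] ℝ := (b.coord k).linear.toContinuousLinearMap
  refine ⟨∑ k, ‖coordL k‖ + 1, by positivity, fun w => ?_⟩
  calc simplexGauge b w ≤ ∑ k, ‖coordL k‖ * ‖w‖ := sum_le_sum fun k _ =>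
        max_le ((neg_le_abs _).trans ((coordL k).le_opNorm w)) (by positivity)
    _ ≤ (∑ k, ‖coordL k‖ + 1) * ‖w‖ := by
      rw [← sum_mul]
      gcongr
      exact le_add_of_nonneg_right zero_le_one

theorem coord_smul_add_sum_smul {s : ℝ} {m : ι → ℝ} (hm : s + ∑ j, m j = 1) (y : E) (k : ι) :
    b.coord k (s • y + ∑ j, m j • b j) = s * b.coord k y + m k := by
  have hsum : ∑ j, (s * b.coord j y + m j) = 1 := by
    rw [sum_add_distrib, ← mul_sum, b.sum_coord_apply_eq_one, mul_one, hm]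
  have hcomb : s • y + ∑ j, m j • b j =
      univ.affineCombination ℝ b fun j => s * b.coord j y + m j := by
    rw [univ.affineCombination_eq_linear_combination _ _ hsum]
    simp only [add_smul, mul_smul, sum_add_distrib, ← smul_sum, b.linear_combination_coord_eq_self]
  rw [hcomb, b.coord_apply_combination_of_mem (mem_univ k) hsum]

theorem openSimplex_inter_preimage_add_eq_empty {w : E} (hw : 1 ≤ simplexGauge b w) :
    openSimplex b ∩ (· + w) ⁻¹' openSimplex b = ∅ := by
  refine Set.eq_empty_iff_forall_notMem.2 fun y hy => hw.not_gt ?_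
  have := b.nonempty
  rw [← b.sum_coord_apply_eq_one y]
  exact sum_lt_sum_of_nonempty univ_nonempty fun k _ =>
    (mem_openSimplex_inter_preimage_add_iff b).1 hy k

theorem openSimplex_inter_preimage_add_eq_vadd_smul {w : E} (hw : simplexGauge b w < 1) :
    openSimplex b ∩ (· + w) ⁻¹' openSimplex b =
      (∑ k, max (-(b.coord k).linear w) 0 • b k) +ᵥ (1 - simplexGauge b w) • openSimplex b := by
  set s := 1 - simplexGauge b w
  set q := ∑ k, max (-(b.coord k).linear w) 0 • b k with hq
  have hs : 0 < s := sub_pos.2 hw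
  have hsum : s + ∑ k, max (-(b.coord k).linear w) 0 = 1 := sub_add_cancel 1 _
  ext y
  obtain ⟨y, rfl⟩ : ∃ y', s • y' + q = y :=
    ⟨s⁻¹ • (y - q), by rw [smul_inv_smul₀ hs.ne', sub_add_cancel]⟩
  have hmem : s • y + q ∈ q +ᵥ s • openSimplex b ↔ y ∈ openSimplex b := by
    rw [add_comm, ← vadd_eq_add, Set.vadd_mem_vadd_set_iff, Set.smul_mem_smul_set_iff₀ hs.ne']
  rw [hmem]
  simp only [mem_openSimplex_inter_preimage_add_iff, mem_openSimplex_iff, hq,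
    coord_smul_add_sum_smul b hsum, lt_add_iff_pos_left, mul_pos_iff_of_pos_left hs]

theorem covariogram_openSimplex [MeasurableSpace E] [BorelSpace E] (μ : Measure E)
    [μ.IsAddHaarMeasure] (w : E) :
    covariogram μ (openSimplex b) w =
      max (1 - simplexGauge b w) 0 ^ Module.finrank ℝ E * μ.real (openSimplex b) := by
  have := b.finiteDimensional
  rcases lt_or_ge (simplexGauge b w) 1 with hw | hw
  · have hs : 0 ≤ 1 - simplexGauge b w := sub_nonneg.2 hw.le
    rw [covariogram, openSimplex_inter_preimage_add_eq_vadd_smul b hw, measureReal_def,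
      measure_vadd, ← measureReal_def, measureReal_smul_set_of_nonneg μ hs, max_eq_left hs]
  · have hw₀ : w ≠ 0 := by
      rintro rfl
      simp only [simplexGauge, map_zero, neg_zero, max_self, sum_const_zero] at hw
      exact zero_lt_one.not_ge hw
    have : Nontrivial E := nontrivial_of_ne w 0 hw₀
    rw [covariogram, openSimplex_inter_preimage_add_eq_empty b hw, max_eq_right (sub_nonpos.2 hw),
      zero_pow Module.finrank_pos.ne', measureReal_empty, zero_mul]

end Simplex

section BallCovariogram

theorem covariogram_ball_eq_of_norm_eq {E : Type*} [NormedAddCommGroup E] [InnerProductSpace ℝ E]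
    [FiniteDimensional ℝ E] [MeasurableSpace E] [BorelSpace E] (h : ℝ) {v w : E}
    (hvw : ‖v‖ = ‖w‖) :
    covariogram volume (Metric.ball 0 h) v = covariogram volume (Metric.ball 0 h) w := by
  let T := (ℝ ∙ (w - v))ᗮ.reflection
  have hT : T '' Metric.ball 0 h = Metric.ball 0 h := by rw [T.image_ball, map_zero]
  have hTw : T.symm w = v := Submodule.reflection_sub hvw.symm
  rw [← hTw, ← covariogram_image_linearIsometryEquiv, hT]

theorem volume_eq_lintegral_volume_slice {n : ℕ} {s : Set (EuclideanSpace ℝ (Fin (n + 1)))}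
    (hs : MeasurableSet s) :
    volume s = ∫⁻ t, volume {q : EuclideanSpace ℝ (Fin n) | WithLp.toLp 2 (Fin.cons t q) ∈ s} := by
  have hpi := (volume_preserving_piFinSuccAbove (fun _ : Fin (n + 1) => ℝ) 0).symm
  have hLp := PiLp.volume_preserving_toLp (Fin (n + 1))
  have hs' := (hLp.comp hpi).measurable hs
  rw [← (hLp.comp hpi).measure_preimage hs.nullMeasurableSet, Measure.volume_eq_prod,
    Measure.prod_apply hs']
  refine lintegral_congr fun t => ?_
  rw [← (PiLp.volume_preserving_ofLp (Fin n)).measure_preimage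
    (measurable_prodMk_left hs').nullMeasurableSet]
  congr 1 with q
  simp only [Set.mem_preimage, Function.comp_apply, MeasurableEquiv.piFinSuccAbove_symm_apply,
    Fin.insertNthEquiv_zero, Set.mem_ofPred_eq]
  rfl

theorem norm_toLp_cons_sq {n : ℕ} (t : ℝ) (q : EuclideanSpace ℝ (Fin n)) :
    ‖(WithLp.toLp 2 (Fin.cons t q) : EuclideanSpace ℝ (Fin (n + 1)))‖ ^ 2 = t ^ 2 + ‖q‖ ^ 2 := by
  simp only [EuclideanSpace.real_norm_sq_eq, Fin.sum_univ_succ, Fin.cons_zero, Fin.cons_succ]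

theorem volume_ball_inter_preimage_add_single {h : ℝ} (hh : 0 ≤ h) (d : ℝ) :
    volume (Metric.ball (0 : EuclideanSpace ℝ (Fin 3)) h ∩
        (· + EuclideanSpace.single 0 d) ⁻¹' Metric.ball 0 h) =
      ∫⁻ t, ENNReal.ofReal (Real.pi * max (h ^ 2 - max (t ^ 2) ((t + d) ^ 2)) 0) := by
  have hball : MeasurableSet (Metric.ball (0 : EuclideanSpace ℝ (Fin 3)) h) :=
    Metric.isOpen_ball.measurableSet
  have hadd (t : ℝ) (q : EuclideanSpace ℝ (Fin 2)) :
      (WithLp.toLp 2 (Fin.cons t q) : EuclideanSpace ℝ (Fin 3)) + EuclideanSpace.single 0 d =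
        WithLp.toLp 2 (Fin.cons (t + d) q) := by
    ext i
    refine Fin.cases ?_ (fun j => ?_) i <;> simp
  have hslice (t : ℝ) : {q : EuclideanSpace ℝ (Fin 2) | WithLp.toLp 2 (Fin.cons t q) ∈
      Metric.ball (0 : EuclideanSpace ℝ (Fin 3)) h ∩
        (· + EuclideanSpace.single 0 d) ⁻¹' Metric.ball 0 h} =
      Metric.ball 0 √(h ^ 2 - max (t ^ 2) ((t + d) ^ 2)) := by
    ext q
    simp only [Set.mem_ofPred_eq, Set.mem_inter_iff, Set.mem_preimage, hadd, mem_ball_zero_iff,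
      Real.lt_sqrt (norm_nonneg q), lt_sub_comm, max_lt_iff, ← sq_lt_sq₀ (norm_nonneg _) hh,
      norm_toLp_cons_sq, ← lt_sub_iff_add_lt]
  rw [volume_eq_lintegral_volume_slice
    (hball.inter (hball.preimage (measurable_add_const _)))]
  refine lintegral_congr fun t => ?_
  rw [hslice, EuclideanSpace.volume_ball_fin_two, ← ENNReal.ofReal_pow (Real.sqrt_nonneg _),
    ← ENNReal.ofReal_mul (sq_nonneg _), Real.sq_sqrt', mul_comm]

theorem max_sq_add_sq_eq {d : ℝ} (hd : 0 ≤ d) (t : ℝ) :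
    max (t ^ 2) ((t + d) ^ 2) = (|t + d / 2| + d / 2) ^ 2 := by
  rcases le_total 0 (t + d / 2) with ht | ht
  · rw [abs_of_nonneg ht, max_eq_right (by nlinarith)]
    ring
  · rw [abs_of_nonpos ht, max_eq_left (by nlinarith)]
    ring

theorem integral_Ioi_max_sq_sub_add_sq {h c : ℝ} (hh : 0 ≤ h) (hc : 0 ≤ c) :
    ∫ t in Set.Ioi 0, max (h ^ 2 - (t + c) ^ 2) 0 =
      max (h - c) 0 ^ 2 * (2 * h + c) / 3 := by
  set a := max (h - c) 0
  have ha : 0 ≤ a := le_max_right _ _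
  have hvanish : ∀ t ∈ Set.Ioi 0 \ Set.Ioc 0 a, max (h ^ 2 - (t + c) ^ 2) 0 = 0 := by
    rintro t ⟨ht₀, hta⟩
    have hta : h - c < t := (le_max_left _ _).trans_lt (not_le.1 fun h => hta ⟨ht₀, h⟩)
    exact max_eq_right (by nlinarith)
  have hinside : ∀ t ∈ Set.Ioc 0 a, max (h ^ 2 - (t + c) ^ 2) 0 = h ^ 2 - (t + c) ^ 2 := by
    rintro t ⟨ht₀, hta⟩
    have hta : t ≤ h - c := (le_max_iff.1 hta).resolve_right ht₀.not_ge
    exact max_eq_left (by nlinarith)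
  rw [setIntegral_eq_of_subset_of_forall_sdiff_eq_zero measurableSet_Ioi Set.Ioc_subset_Ioi_self
    hvanish, setIntegral_congr_fun measurableSet_Ioc hinside,
    ← intervalIntegral.integral_of_le ha,
    intervalIntegral.integral_sub (by simp) (Continuous.intervalIntegrable (by fun_prop) _ _),
    intervalIntegral.integral_comp_add_right (fun t => t ^ 2), integral_pow,
    intervalIntegral.integral_const, smul_eq_mul]
  rcases max_choice (h - c) 0 with ha | ha <;> rw [show a = _ from ha] <;> ring

theorem integral_max_sq_sub_max_sq_add_sq {h d : ℝ} (hh : 0 ≤ h) (hd : 0 ≤ d) :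
    ∫ t, max (h ^ 2 - max (t ^ 2) ((t + d) ^ 2)) 0 = max (2 * h - d) 0 ^ 2 * (4 * h + d) / 12 := by
  simp only [max_sq_add_sq_eq hd]
  rw [integral_add_right_eq_self fun t => max (h ^ 2 - (|t| + d / 2) ^ 2) 0,
    integral_comp_abs (f := fun t => max (h ^ 2 - (t + d / 2) ^ 2) 0),
    integral_Ioi_max_sq_sub_add_sq hh (by positivity)]
  have : max (2 * h - d) 0 = 2 * max (h - d / 2) 0 := by
    rw [mul_max_of_nonneg _ _ zero_le_two]
    ring_nf
  rw [this]
  ring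

theorem covariogram_ball {h : ℝ} (hh : 0 ≤ h) (w : EuclideanSpace ℝ (Fin 3)) :
    covariogram volume (Metric.ball 0 h) w =
      Real.pi / 12 * (max (2 * h - ‖w‖) 0 ^ 2 * (4 * h + ‖w‖)) := by
  have hnorm : ‖w‖ = ‖EuclideanSpace.single (0 : Fin 3) ‖w‖‖ := by simp
  rw [covariogram_ball_eq_of_norm_eq h hnorm, covariogram, measureReal_def,
    volume_ball_inter_preimage_add_single hh, ← integral_eq_lintegral_of_nonneg_ae
      (.of_forall fun t => by positivity) (by fun_prop), integral_const_mul,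
    integral_max_sq_sub_max_sq_add_sq hh (norm_nonneg w)]
  ring

end BallCovariogram

section Coulomb

/-- The Coulomb kernel `1 / r` minus its localized part `(1 - r)₊ ^ 3 / r`, written so that it
takes its limit `3` at `r = 0`. -/
noncomputable def regularizedCoulomb (r : ℝ) : ℝ :=
  if r ≤ 1 then 3 - 3 * r + r ^ 2 else 1 / r

theorem regularizedCoulomb_zero : regularizedCoulomb 0 = 3 := by
  norm_num [regularizedCoulomb]

theorem mul_regularizedCoulomb (r : ℝ) :
    r * regularizedCoulomb r = 1 - max (1 - r) 0 ^ 3 := by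
  rw [regularizedCoulomb]
  split_ifs with hr
  · rw [max_eq_left (by linarith)]
    ring
  · rw [max_eq_right (by linarith), mul_one_div_cancel (by linarith)]
    ring

/-- The covariogram of a ball of diameter `ρ` in `ℝ³` at a vector of length `r`, without its
constant factor `π / 12`. -/
noncomputable def lensProfile (ρ r : ℝ) : ℝ :=
  max (ρ - r) 0 ^ 2 * (2 * ρ + r)

theorem lensProfile_of_le {ρ r : ℝ} (h : ρ ≤ r) : lensProfile ρ r = 0 := by
  rw [lensProfile, max_eq_right (sub_nonpos.2 h), sq, zero_mul, zero_mul]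

theorem lensProfile_of_ge {ρ r : ℝ} (h : r ≤ ρ) :
    lensProfile ρ r = (ρ - r) ^ 2 * (2 * ρ + r) := by
  rw [lensProfile, max_eq_left (sub_nonneg.2 h)]

theorem lensProfile_nonneg {ρ r : ℝ} (hρ : 0 ≤ ρ) (hr : 0 ≤ r) : 0 ≤ lensProfile ρ r :=
  mul_nonneg (sq_nonneg _) (by positivity)

theorem isPositiveDefinite_lensProfile {ρ : ℝ} (hρ : 0 ≤ ρ) :
    IsPositiveDefinite fun w : EuclideanSpace ℝ (Fin 3) => lensProfile ρ ‖w‖ := by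
  have hball := (isPositiveDefinite_covariogram (μ := volume)
    (Metric.isOpen_ball (x := (0 : EuclideanSpace ℝ (Fin 3))) (ε := ρ / 2)).measurableSet
    measure_ball_lt_top.ne).const_mul (c := 12 / Real.pi) (by positivity)
  convert hball using 2 with w
  rw [covariogram_ball (by positivity), lensProfile]
  field_simp
  ring

theorem hasDerivAt_lensProfile_div_sq_primitive {r ρ : ℝ} (hρ : 0 < ρ) (hr : r ≤ ρ) :
    HasDerivAt (fun t => t ^ 2 - 3 * r * t - r ^ 3 / t) (lensProfile ρ r / ρ ^ 2) ρ := by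
  refine (((hasDerivAt_pow 2 ρ).sub ((hasDerivAt_id' ρ).const_mul (3 * r))).sub
    ((hasDerivAt_inv hρ.ne').const_mul (r ^ 3))).congr_deriv ?_
  rw [lensProfile_of_ge hr]
  field_simp
  ring

theorem hasDerivAt_lensProfile_div_pow_five_primitive {r ρ : ℝ} (hρ : 0 < ρ) (hr : r ≤ ρ) :
    HasDerivAt (fun t => -2 * t⁻¹ + 3 * r / 2 * (t ^ 2)⁻¹ - r ^ 3 / 4 * (t ^ 4)⁻¹)
      (lensProfile ρ r / ρ ^ 5) ρ := by
  have hpow (n : ℕ) := (hasDerivAt_pow n ρ).inv (pow_ne_zero n hρ.ne')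
  refine ((((hasDerivAt_inv hρ.ne').const_mul (-2)).add ((hpow 2).const_mul (3 * r / 2))).sub
    ((hpow 4).const_mul (r ^ 3 / 4))).congr_deriv ?_
  rw [lensProfile_of_ge hr]
  simp only [Nat.cast_ofNat, Nat.add_one_sub_one]
  field_simp
  ring

theorem integrableOn_integral_Ioc_lensProfile_div_sq {r : ℝ} (hr : 0 ≤ r) :
    IntegrableOn (fun ρ => lensProfile ρ r / ρ ^ 2) (Set.Ioc 0 1) ∧
      ∫ ρ in Set.Ioc 0 1, lensProfile ρ r / ρ ^ 2 = max (1 - r) 0 ^ 3 := by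
  have hvanish : ∀ ρ ∈ Set.Ioc 0 1 \ Set.Ioc r 1, lensProfile ρ r / ρ ^ 2 = 0 := fun ρ hρ => by
    rw [lensProfile_of_le (not_lt.1 fun h => hρ.2 ⟨h, hρ.1.2⟩), zero_div]
  have hderiv : ∀ ρ ∈ Set.Ioo r 1, HasDerivAt (fun t => t ^ 2 - 3 * r * t - r ^ 3 / t)
      (lensProfile ρ r / ρ ^ 2) ρ := fun ρ hρ =>
    hasDerivAt_lensProfile_div_sq_primitive (hr.trans_lt hρ.1) hρ.1.le
  have hcont : ContinuousOn (fun t => t ^ 2 - 3 * r * t - r ^ 3 / t) (Set.Icc r 1) := by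
    rcases hr.eq_or_lt with rfl | hr
    · simp only [ne_eq, OfNat.ofNat_ne_zero, not_false_eq_true, zero_pow, zero_div]
      fun_prop
    · exact (by fun_prop : ContinuousOn _ _).sub
        (continuousOn_const.div continuousOn_id fun t ht => (hr.trans_le ht.1).ne')
  have hint : IntegrableOn (fun ρ => lensProfile ρ r / ρ ^ 2) (Set.Ioc r 1) :=
    intervalIntegral.integrableOn_deriv_of_nonneg hcont hderiv fun ρ hρ =>
      div_nonneg (lensProfile_nonneg (hr.trans hρ.1.le) hr) (sq_nonneg ρ)
  refine ⟨hint.of_forall_sdiff_eq_zero measurableSet_Ioc hvanish, ?_⟩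
  rw [setIntegral_eq_of_subset_of_forall_sdiff_eq_zero measurableSet_Ioc
    (Set.Ioc_subset_Ioc_left hr) hvanish]
  rcases le_total r 1 with hr₁ | hr₁
  · rw [← intervalIntegral.integral_of_le hr₁, intervalIntegral.integral_eq_sub_of_hasDerivAt_of_le
      hr₁ hcont hderiv ((intervalIntegrable_iff_integrableOn_Ioc_of_le hr₁).2 hint),
      max_eq_left (sub_nonneg.2 hr₁)]
    rcases eq_or_ne r 0 with rfl | _
    · norm_num
    · field_simp
      ring
  · rw [Set.Ioc_eq_empty hr₁.not_gt, setIntegral_empty, max_eq_right (sub_nonpos.2 hr₁),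
      zero_pow three_ne_zero]

theorem integrableOn_integral_Ioi_lensProfile_div_pow_five {r : ℝ} (hr : 0 ≤ r) :
    IntegrableOn (fun ρ => lensProfile ρ r / ρ ^ 5) (Set.Ioi 1) ∧
      ∫ ρ in Set.Ioi 1, lensProfile ρ r / ρ ^ 5 =
        2 * (max 1 r)⁻¹ - 3 * r / 2 * (max 1 r ^ 2)⁻¹ + r ^ 3 / 4 * (max 1 r ^ 4)⁻¹ := by
  have hvanish : ∀ ρ ∈ Set.Ioi 1 \ Set.Ioi (max 1 r), lensProfile ρ r / ρ ^ 5 = 0 :=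
    fun ρ hρ => by
      rw [lensProfile_of_le (not_lt.1 fun h => hρ.2 (max_lt hρ.1 h)), zero_div]
  have hderiv : ∀ ρ ∈ Set.Ici (max 1 r), HasDerivAt
      (fun t => -2 * t⁻¹ + 3 * r / 2 * (t ^ 2)⁻¹ - r ^ 3 / 4 * (t ^ 4)⁻¹)
      (lensProfile ρ r / ρ ^ 5) ρ := fun ρ hρ =>
    hasDerivAt_lensProfile_div_pow_five_primitive (zero_lt_one.trans_le (max_le_iff.1 hρ).1)
      (max_le_iff.1 hρ).2
  have hnonneg : ∀ ρ ∈ Set.Ioi (max 1 r), 0 ≤ lensProfile ρ r / ρ ^ 5 := fun ρ hρ =>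
    have hρ₀ : 0 ≤ ρ := zero_le_one.trans (max_lt_iff.1 hρ).1.le
    div_nonneg (lensProfile_nonneg hρ₀ hr) (pow_nonneg hρ₀ 5)
  have hinv {n : ℕ} (hn : n ≠ 0) :=
    (Filter.tendsto_pow_atTop (α := ℝ) hn).inv_tendsto_atTop
  have hlim := ((tendsto_inv_atTop_zero.const_mul (-2 : ℝ)).add
    ((hinv two_ne_zero).const_mul (3 * r / 2))).sub ((hinv four_ne_zero).const_mul (r ^ 3 / 4))
  refine ⟨(integrableOn_Ioi_deriv_of_nonneg' hderiv hnonneg hlim).of_forall_sdiff_eq_zero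
    measurableSet_Ioi hvanish, ?_⟩
  rw [setIntegral_eq_of_subset_of_forall_sdiff_eq_zero measurableSet_Ioi
    (Set.Ioi_subset_Ioi (le_max_left 1 r)) hvanish,
    integral_Ioi_of_hasDerivAt_of_nonneg' hderiv hnonneg hlim]
  ring

/-- The weights come from solving `f r = ∫ lensProfile ρ r * g ρ` for `g`: since
`∂ᵣ (lensProfile ρ r) = -3 (ρ ^ 2 - r ^ 2)` for `r ≤ ρ`, the solution is `g = -D (ρ⁻¹ * D² f) / 6`
with `D = d / dρ`. -/
theorem regularizedCoulomb_eq_integral {r : ℝ} (hr : 0 ≤ r) :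
    regularizedCoulomb r = 1 / 3 * (∫ ρ in Set.Ioc 0 1, lensProfile ρ r / ρ ^ 2) +
      4 / 3 * ∫ ρ in Set.Ioi 1, lensProfile ρ r / ρ ^ 5 := by
  rw [(integrableOn_integral_Ioc_lensProfile_div_sq hr).2,
    (integrableOn_integral_Ioi_lensProfile_div_pow_five hr).2, regularizedCoulomb]
  split_ifs with hr₁
  · rw [max_eq_left hr₁, max_eq_left (sub_nonneg.2 hr₁)]
    ring
  · have hr₁ : 1 ≤ r := (not_le.1 hr₁).le
    have hr₀ : r ≠ 0 := by positivity
    rw [max_eq_right hr₁, max_eq_right (sub_nonpos.2 hr₁)]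
    field_simp
    ring

theorem isPositiveDefinite_regularizedCoulomb :
    IsPositiveDefinite fun w : EuclideanSpace ℝ (Fin 3) => regularizedCoulomb ‖w‖ := by
  have hdiv {ρ : ℝ} (hρ : 0 ≤ ρ) (n : ℕ) :
      IsPositiveDefinite fun w : EuclideanSpace ℝ (Fin 3) => lensProfile ρ ‖w‖ / ρ ^ n := by
    simpa only [div_eq_inv_mul] using
      (isPositiveDefinite_lensProfile hρ).const_mul (inv_nonneg.2 (pow_nonneg hρ n))
  have hsmall := IsPositiveDefinite.integral (μ := volume.restrict (Set.Ioc 0 1))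
    (ae_restrict_of_forall_mem measurableSet_Ioc fun ρ hρ => hdiv hρ.1.le 2)
    fun w => (integrableOn_integral_Ioc_lensProfile_div_sq (norm_nonneg w)).1
  have hlarge := IsPositiveDefinite.integral (μ := volume.restrict (Set.Ioi 1))
    (ae_restrict_of_forall_mem measurableSet_Ioi fun ρ hρ =>
      hdiv (zero_le_one.trans (Set.mem_Ioi.1 hρ).le) 5)
    fun w => (integrableOn_integral_Ioi_lensProfile_div_pow_five (norm_nonneg w)).1
  simpa only [regularizedCoulomb_eq_integral (norm_nonneg _)] using
    (hsmall.const_mul (by norm_num : (0 : ℝ) ≤ 1 / 3)).add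
      (hlarge.const_mul (by norm_num : (0 : ℝ) ≤ 4 / 3))

theorem integrable_max_one_sub_pow {α : Type*} [MeasurableSpace α] {μ : Measure α}
    [IsFiniteMeasure μ] {g : α → ℝ} (hg : Measurable g) (hg₀ : ∀ ω, 0 ≤ g ω) (k : ℕ) :
    Integrable (fun ω => max (1 - g ω) 0 ^ k) μ := by
  refine .of_bound (by fun_prop) 1 (.of_forall fun ω => ?_)
  rw [Real.norm_of_nonneg (by positivity)]
  exact pow_le_one₀ (le_max_right _ _) (max_le (sub_le_self 1 (hg₀ ω)) zero_le_one)

variable {N : ℕ} (z : Fin N → ℝ) {x : Fin N → EuclideanSpace ℝ (Fin 3)}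

theorem sum_sum_Ioi_div_norm_mul_max_pow_three_le (hx : Function.Injective x) {a : ℝ}
    (ha : 0 ≤ a) :
    ∑ i, ∑ j ∈ Ioi i, z i * z j / ‖x i - x j‖ * max (1 - a * ‖x i - x j‖) 0 ^ 3 ≤
      ∑ i, ∑ j ∈ Ioi i, z i * z j / ‖x i - x j‖ + 3 / 2 * a * ∑ i, z i ^ 2 := by
  let K (i j : Fin N) : ℝ := z i * z j * (a * regularizedCoulomb (a * ‖x i - x j‖))
  have hpos : 0 ≤ ∑ i, ∑ j, K i j := by
    have hpd := (isPositiveDefinite_regularizedCoulomb.const_mul ha) N z fun i => a • x i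
    simpa only [← smul_sub, norm_smul, Real.norm_of_nonneg ha] using hpd
  have hdiag (i : Fin N) : K i i = 3 * a * z i ^ 2 := by
    simp only [K, sub_self, norm_zero, mul_zero, regularizedCoulomb_zero]
    ring
  have hoff (i j : Fin N) (hij : j ∈ Ioi i) : K i j = z i * z j / ‖x i - x j‖ -
      z i * z j / ‖x i - x j‖ * max (1 - a * ‖x i - x j‖) 0 ^ 3 := by
    have hdist : ‖x i - x j‖ ≠ 0 := norm_sub_eq_zero_iff.not.2 (hx.ne (mem_Ioi.1 hij).ne)
    have hkernel := mul_regularizedCoulomb (a * ‖x i - x j‖)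
    simp only [K]
    field_simp
    linear_combination z i * z j * hkernel
  rw [sum_sum_eq_two_mul_sum_sum_Ioi_add_sum_diag fun i j => by
      simp only [K, norm_sub_rev (x i), mul_comm (z i)],
    sum_congr rfl fun i _ => sum_congr rfl (hoff i), sum_congr rfl fun i _ => hdiag i,
    ← mul_sum] at hpos
  simp only [sum_sub_distrib] at hpos
  linarith

theorem sum_sum_Ioi_div_norm_mul_integral_max_pow_three_le (hx : Function.Injective x)
    {α : Type*} [MeasurableSpace α] {μ : Measure α} [IsProbabilityMeasure μ] {a : α → ℝ}
    (hameas : Measurable a) (ha : ∀ ω, 0 ≤ a ω) {A : ℝ} (haA : ∀ ω, a ω ≤ A) :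
    ∑ i, ∑ j ∈ Ioi i,
        z i * z j / ‖x i - x j‖ * ∫ ω, max (1 - a ω * ‖x i - x j‖) 0 ^ 3 ∂μ ≤
      ∑ i, ∑ j ∈ Ioi i, z i * z j / ‖x i - x j‖ + 3 / 2 * A * ∑ i, z i ^ 2 := by
  have hint (i j : Fin N) : Integrable (fun ω => max (1 - a ω * ‖x i - x j‖) 0 ^ 3) μ :=
    integrable_max_one_sub_pow (hameas.mul_const _)
      (fun ω => mul_nonneg (ha ω) (norm_nonneg _)) 3
  rw [← integral_sum_sum_const_mul univ Ioi _ hint]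
  calc _ ≤ ∫ _, (∑ i, ∑ j ∈ Ioi i, z i * z j / ‖x i - x j‖ + 3 / 2 * A * ∑ i, z i ^ 2) ∂μ := by
        refine integral_mono (integrable_sum_sum_const_mul univ Ioi _ hint)
          (integrable_const _) fun ω => ?_
        refine (sum_sum_Ioi_div_norm_mul_max_pow_three_le z hx (ha ω)).trans ?_
        gcongr
        exact haA ω
    _ = _ := by rw [integral_const, probReal_univ, one_smul]

end Coulomb

section Rotations

open Module Matrix

theorem exists_linearIsometryEquiv_det_eq_one {E : Type*} [NormedAddCommGroup E]
    [InnerProductSpace ℝ E] [FiniteDimensional ℝ E] (hdim : 1 < finrank ℝ E) {v w : E}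
    (hvw : ‖v‖ = ‖w‖) :
    ∃ T : E ≃ₗᵢ[ℝ] E, LinearMap.det (T : E →ₗ[ℝ] E) = 1 ∧ T v = w := by
  rcases eq_or_ne v w with rfl | hne
  · exact ⟨.refl ℝ E, LinearMap.det_id, rfl⟩
  have hdet {u : E} (hu : u ≠ 0) :
      LinearMap.det ((ℝ ∙ u)ᗮ.reflection : E →ₗ[ℝ] E) = -1 := by
    refine ((ℝ ∙ u)ᗮ.det_reflection).trans ?_
    rw [Submodule.orthogonal_orthogonal, finrank_span_singleton hu, pow_one]
  obtain ⟨u, hwu, hu⟩ : ∃ u ∈ (ℝ ∙ w)ᗮ, u ≠ 0 := by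
    refine Submodule.exists_mem_ne_zero_of_ne_bot fun hbot => hdim.not_ge ?_
    rw [← finrank_top ℝ E, ← Submodule.orthogonal_eq_bot_iff.1 hbot]
    simpa only [Set.toFinset_singleton, card_singleton] using finrank_span_le_card (R := ℝ) {w}
  refine ⟨(ℝ ∙ (v - w))ᗮ.reflection.trans (ℝ ∙ u)ᗮ.reflection, ?_, ?_⟩
  · refine (LinearMap.det_comp ((ℝ ∙ u)ᗮ.reflection : E →ₗ[ℝ] E)
      ((ℝ ∙ (v - w))ᗮ.reflection : E →ₗ[ℝ] E)).trans ?_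
    rw [hdet hu, hdet (sub_ne_zero.2 hne), neg_one_mul, neg_neg]
  · rw [LinearIsometryEquiv.trans_apply, Submodule.reflection_sub hvw,
      Submodule.reflection_eq_self_iff, Submodule.mem_orthogonal_singleton_iff_inner_left]
    exact Submodule.mem_orthogonal_singleton_iff_inner_right.1 hwu

variable {n : Type*} [Fintype n] [DecidableEq n]

/-- The action of a special orthogonal matrix on Euclidean space, as a linear isometry. -/
noncomputable def rotationIsometry :
    specialOrthogonalGroup n ℝ →* (EuclideanSpace ℝ n ≃ₗᵢ[ℝ] EuclideanSpace ℝ n) :=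
  (Unitary.linearIsometryEquiv.toMonoidHom.comp
    (Unitary.map (.ofClass (toEuclideanCLM (n := n) (𝕜 := ℝ)))).toMonoidHom).comp
    (Submonoid.inclusion (T := unitary (Matrix n n ℝ)) fun _ hR => hR.1)

theorem rotationIsometry_symm_apply (R : specialOrthogonalGroup n ℝ) (y : EuclideanSpace ℝ n) :
    (rotationIsometry R).symm y = toEuclideanLin (R : Matrix n n ℝ)ᵀ y := by
  rw [← LinearIsometryEquiv.inv_def, ← map_inv]
  rfl

theorem continuous_rotationIsometry_symm_apply (v : EuclideanSpace ℝ n) :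
    Continuous fun R : specialOrthogonalGroup n ℝ => (rotationIsometry R).symm v := by
  simp only [rotationIsometry_symm_apply, toLpLin_apply]
  exact (PiLp.continuous_toLp 2 _).comp
    (continuous_subtype_val.matrix_transpose.matrix_mulVec continuous_const)

theorem exists_rotationIsometry_eq {T : EuclideanSpace ℝ n ≃ₗᵢ[ℝ] EuclideanSpace ℝ n}
    (hT : LinearMap.det (T : EuclideanSpace ℝ n →ₗ[ℝ] EuclideanSpace ℝ n) = 1) :
    ∃ R : specialOrthogonalGroup n ℝ, rotationIsometry R = T := by
  let B := EuclideanSpace.basisFun n ℝ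
  have hdet : (T.toLinearMap.toMatrix B.toBasis B.toBasis).det = 1 :=
    (LinearMap.det_toMatrix B.toBasis _).trans hT
  refine ⟨⟨_, mem_specialOrthogonalGroup_iff.2 ⟨T.toMatrix_mem_unitaryGroup B B, hdet⟩⟩, ?_⟩
  ext y : 1
  exact congrArg (· y) (toLin_toMatrix B.toBasis B.toBasis T.toLinearMap)

theorem exists_rotationIsometry_apply_eq [Nontrivial n] {v w : EuclideanSpace ℝ n}
    (hvw : ‖v‖ = ‖w‖) : ∃ R : specialOrthogonalGroup n ℝ, rotationIsometry R v = w := by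
  obtain ⟨T, hT, rfl⟩ := exists_linearIsometryEquiv_det_eq_one
    (finrank_euclideanSpace (ι := n) (𝕜 := ℝ) ▸ Fintype.one_lt_card) hvw
  obtain ⟨R, rfl⟩ := exists_rotationIsometry_eq hT
  exact ⟨R, rfl⟩

theorem integral_rotationIsometry_symm_eq_of_norm_eq [Nontrivial n]
    [MeasurableSpace (specialOrthogonalGroup n ℝ)] [BorelSpace (specialOrthogonalGroup n ℝ)]
    (μ : Measure (specialOrthogonalGroup n ℝ)) [μ.IsMulLeftInvariant]
    {F : Type*} [NormedAddCommGroup F] [NormedSpace ℝ F] (φ : EuclideanSpace ℝ n → F)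
    {v w : EuclideanSpace ℝ n} (hvw : ‖v‖ = ‖w‖) :
    ∫ R, φ ((rotationIsometry R).symm v) ∂μ = ∫ R, φ ((rotationIsometry R).symm w) ∂μ := by
  obtain ⟨g, rfl⟩ := exists_rotationIsometry_apply_eq hvw.symm
  have hmul (R : specialOrthogonalGroup n ℝ) :
      (rotationIsometry (g * R)).symm (rotationIsometry g w) = (rotationIsometry R).symm w := by
    rw [LinearIsometryEquiv.symm_apply_eq, map_mul, LinearIsometryEquiv.coe_mul,
      Function.comp_apply, LinearIsometryEquiv.apply_symm_apply]
  rw [← integral_mul_left_eq_self _ g]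
  simp only [hmul]

end Rotations
section LocalizedEnergy

/-- The Coulomb energy of those charges `z i`, located at `x i`, that lie in `A`. -/
noncomputable def localizedEnergy {E : Type*} [NormedAddCommGroup E] {N : ℕ} (z : Fin N → ℝ)
    (x : Fin N → E) (A : Set E) : ℝ :=
  ∑ i, ∑ j ∈ Ioi i, z i * z j * A.indicator (fun _ => (1 : ℝ)) (x i) *
    A.indicator (fun _ => (1 : ℝ)) (x j) / ‖x i - x j‖

theorem integral_localizedEnergy_image_add {E : Type*} [NormedAddCommGroup E] [MeasurableSpace E]
    [MeasurableAdd E] [MeasurableNeg E] {μ : Measure E} [μ.IsAddLeftInvariant] [μ.IsNegInvariant]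
    {N : ℕ} (z : Fin N → ℝ) (x : Fin N → E) {A : Set E} (hA : MeasurableSet A) (hμA : μ A ≠ ∞) :
    ∫ u, localizedEnergy z x ((· + u) '' A) ∂μ =
      ∑ i, ∑ j ∈ Ioi i, z i * z j / ‖x i - x j‖ * covariogram μ A (x i - x j) := by
  simp only [← integral_indicator_image_add_mul hA]
  rw [← integral_sum_sum_const_mul univ Ioi _
    fun i j => integrable_indicator_image_add_mul hA hμA (x i) (x j)]
  simp only [localizedEnergy, div_mul_eq_mul_div, mul_assoc]

end LocalizedEnergy

section SimplexAverage

open Module Matrix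

section InnerProductSpace

variable {ι E : Type*} [Fintype ι] [NormedAddCommGroup E] [InnerProductSpace ℝ E]
  [FiniteDimensional ℝ E] [MeasurableSpace E] [BorelSpace E] (b : AffineBasis ι ℝ E)
  (T : E ≃ₗᵢ[ℝ] E) {ℓ : ℝ}

theorem covariogram_image_smul_openSimplex (hℓ : 0 < ℓ) (w : E) :
    covariogram volume (T '' (ℓ • openSimplex b)) w =
      ℓ ^ finrank ℝ E * volume.real (openSimplex b) *
        max (1 - ℓ⁻¹ * simplexGauge b (T.symm w)) 0 ^ finrank ℝ E := by
  rw [covariogram_image_linearIsometryEquiv, covariogram_smul_set _ _ hℓ,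
    covariogram_openSimplex, simplexGauge_smul b (inv_nonneg.2 hℓ.le)]
  ring

theorem integral_localizedEnergy_image_smul_openSimplex {N : ℕ} (z : Fin N → ℝ) (x : Fin N → E)
    (hℓ : 0 < ℓ) :
    ∫ u, localizedEnergy z x ((fun y => T y + u) '' (ℓ • openSimplex b)) =
      ℓ ^ finrank ℝ E * volume.real (openSimplex b) *
        ∑ i, ∑ j ∈ Ioi i, z i * z j / ‖x i - x j‖ *
          max (1 - ℓ⁻¹ * simplexGauge b (T.symm (x i - x j))) 0 ^ finrank ℝ E := by
  have hopen : IsOpen (ℓ • openSimplex b) := (isOpen_openSimplex b).smul₀ hℓ.ne'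
  have hmeas : MeasurableSet (T '' (ℓ • openSimplex b)) :=
    (T.toHomeomorph.isOpenMap _ hopen).measurableSet
  have hfin : volume (T '' (ℓ • openSimplex b)) ≠ ∞ := by
    rw [T.image_eq_preimage_symm, T.symm.measurePreserving.measure_preimage
      hopen.nullMeasurableSet, Measure.addHaar_smul]
    exact ENNReal.mul_ne_top ENNReal.ofReal_ne_top (measure_openSimplex_ne_top b volume)
  have himage (u : E) : (fun y => T y + u) '' (ℓ • openSimplex b) =
      (· + u) '' (T '' (ℓ • openSimplex b)) := (Set.image_image (· + u) T _).symm
  simp only [himage]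
  rw [integral_localizedEnergy_image_add z x hmeas hfin]
  simp only [covariogram_image_smul_openSimplex b T hℓ, mul_sum, mul_left_comm]

end InnerProductSpace

section RotationAverage

variable {n ι : Type*} [Fintype n] [DecidableEq n] [Fintype ι]
  (b : AffineBasis ι ℝ (EuclideanSpace ℝ n))

theorem continuous_simplexGauge_rotationIsometry_symm (w : EuclideanSpace ℝ n) :
    Continuous fun R : specialOrthogonalGroup n ℝ =>
      simplexGauge b ((rotationIsometry R).symm w) :=
  (continuous_simplexGauge b).comp (continuous_rotationIsometry_symm_apply w)

variable [MeasurableSpace (specialOrthogonalGroup n ℝ)] [BorelSpace (specialOrthogonalGroup n ℝ)]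
  (μ : Measure (specialOrthogonalGroup n ℝ)) [μ.IsMulLeftInvariant] [Nontrivial n]
  {e : EuclideanSpace ℝ n}

theorem integral_max_one_sub_simplexGauge_rotationIsometry_symm (he : ‖e‖ = 1) (c : ℝ)
    (k : ℕ) (w : EuclideanSpace ℝ n) :
    ∫ R, max (1 - c * simplexGauge b ((rotationIsometry R).symm w)) 0 ^ k ∂μ =
      ∫ R, max (1 - c * simplexGauge b ((rotationIsometry R).symm e) * ‖w‖) 0 ^ k ∂μ := by
  rw [integral_rotationIsometry_symm_eq_of_norm_eq μ
    (fun v => max (1 - c * simplexGauge b v) 0 ^ k) (v := w) (w := ‖w‖ • e)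
    (by rw [norm_smul, he, norm_norm, mul_one])]
  simp only [map_smul, simplexGauge_smul b (norm_nonneg w), mul_comm ‖w‖, mul_assoc]

theorem integral_integral_localizedEnergy_rotated_openSimplex [IsFiniteMeasure μ]
    (he : ‖e‖ = 1) {N : ℕ} (z : Fin N → ℝ) (x : Fin N → EuclideanSpace ℝ n) {ℓ : ℝ} (hℓ : 0 < ℓ) :
    ∫ R, (∫ u, localizedEnergy z x
        ((fun y => rotationIsometry R y + u) '' (ℓ • openSimplex b))) ∂μ =
      ℓ ^ Fintype.card n * volume.real (openSimplex b) *
        ∑ i, ∑ j ∈ Ioi i, z i * z j / ‖x i - x j‖ *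
          ∫ R, max (1 - ℓ⁻¹ * simplexGauge b ((rotationIsometry R).symm e) * ‖x i - x j‖) 0 ^
            Fintype.card n ∂μ := by
  have hint (i j : Fin N) : Integrable (fun R => max
      (1 - ℓ⁻¹ * simplexGauge b ((rotationIsometry R).symm (x i - x j))) 0 ^ Fintype.card n) μ :=
    integrable_max_one_sub_pow
      ((continuous_simplexGauge_rotationIsometry_symm b _).measurable.const_mul _)
      (fun R => mul_nonneg (inv_nonneg.2 hℓ.le) (simplexGauge_nonneg b _)) _
  simp only [integral_localizedEnergy_image_smul_openSimplex b _ z x hℓ, finrank_euclideanSpace]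
  rw [integral_const_mul, integral_sum_sum_const_mul univ Ioi _ hint]
  simp only [integral_max_one_sub_simplexGauge_rotationIsometry_symm b μ he]

end RotationAverage

theorem sum_sum_Ioi_div_norm_mul_integral_simplexGauge_le {ι : Type*} [Fintype ι]
    (b : AffineBasis ι ℝ (EuclideanSpace ℝ (Fin 3)))
    (μ : Measure (specialOrthogonalGroup (Fin 3) ℝ)) [IsProbabilityMeasure μ]
    {N : ℕ} (z : Fin N → ℝ) {x : Fin N → EuclideanSpace ℝ (Fin 3)} (hx : Function.Injective x)
    {e : EuclideanSpace ℝ (Fin 3)} (he : ‖e‖ = 1) {P : ℝ}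
    (hP : ∀ w, simplexGauge b w ≤ P * ‖w‖) {c : ℝ} (hc : 0 ≤ c) :
    ∑ i, ∑ j ∈ Ioi i, z i * z j / ‖x i - x j‖ *
        ∫ R, max (1 - c * simplexGauge b ((rotationIsometry R).symm e) * ‖x i - x j‖) 0 ^ 3 ∂μ ≤
      ∑ i, ∑ j ∈ Ioi i, z i * z j / ‖x i - x j‖ + 3 / 2 * (c * P) * ∑ i, z i ^ 2 := by
  refine sum_sum_Ioi_div_norm_mul_integral_max_pow_three_le z hx
    ((continuous_simplexGauge_rotationIsometry_symm b e).measurable.const_mul c)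
    (fun R => mul_nonneg hc (simplexGauge_nonneg b _))
    fun R => mul_le_mul_of_nonneg_left ?_ hc
  simpa only [LinearIsometryEquiv.norm_map, he, mul_one] using hP ((rotationIsometry R).symm e)

end SimplexAverage

/-- The Graf–Schenker inequality: the Coulomb energy of point charges is bounded from below by
its average over rotated and translated copies of a dilated simplex `ℓΔ`, up to an error
`(C/ℓ) Σ z_i²`.  Here `μ` is the Haar probability measure on `SO(3)`. -/
theorem graf_schenker_inequality
    (Δ : Set (EuclideanSpace ℝ (Fin 3)))
    (hΔ : ∃ v : Fin 4 → EuclideanSpace ℝ (Fin 3), AffineIndependent ℝ v ∧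
      Δ = interior (convexHull ℝ (Set.range v)))
    (μ : Measure (Matrix.specialOrthogonalGroup (Fin 3) ℝ))
    (hμprob : IsProbabilityMeasure μ)
    (hμinv : ∀ g : Matrix.specialOrthogonalGroup (Fin 3) ℝ,
      μ.map (fun h => g * h) = μ) :
    ∃ C > 0, ∀ (N : ℕ) (z : Fin N → ℝ) (x : Fin N → EuclideanSpace ℝ (Fin 3)),
      Function.Injective x → ∀ ℓ : ℝ, 0 < ℓ →
      ∑ i : Fin N, ∑ j ∈ Ioi i, z i * z j / ‖x i - x j‖
        ≥ (1 / (ℓ ^ 3 * (volume Δ).toReal)) *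
            (∫ R : Matrix.specialOrthogonalGroup (Fin 3) ℝ,
              (∫ u : EuclideanSpace ℝ (Fin 3),
                ∑ i : Fin N, ∑ j ∈ Ioi i,
                  z i * z j *
                    Set.indicator
                      ((fun y => Matrix.toEuclideanLin (R : Matrix (Fin 3) (Fin 3) ℝ) y + u) ''
                        (ℓ • Δ)) (fun _ => (1 : ℝ)) (x i) *
                    Set.indicator
                      ((fun y => Matrix.toEuclideanLin (R : Matrix (Fin 3) (Fin 3) ℝ) y + u) ''
                        (ℓ • Δ)) (fun _ => (1 : ℝ)) (x j) / ‖x i - x j‖) ∂μ)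
          - (C / ℓ) * ∑ i : Fin N, (z i) ^ 2 := by
  obtain ⟨v, hv, rfl⟩ := hΔ
  have : μ.IsMulLeftInvariant := ⟨hμinv⟩
  let b : AffineBasis (Fin 4) ℝ (EuclideanSpace ℝ (Fin 3)) :=
    ⟨v, hv, hv.affineSpan_eq_top_iff_card_eq_finrank_add_one.2 (by simp)⟩
  obtain ⟨P, hP, hgauge⟩ := exists_simplexGauge_le_mul_norm b
  obtain ⟨e, he⟩ : ∃ e : EuclideanSpace ℝ (Fin 3), ‖e‖ = 1 := exists_norm_eq _ zero_le_one
  refine ⟨3 / 2 * P, by positivity, fun N z x hx ℓ hℓ => ?_⟩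
  have hvol : ℓ ^ 3 * volume.real (openSimplex b) ≠ 0 :=
    (mul_pos (pow_pos hℓ 3) (measureReal_openSimplex_pos b volume)).ne'
  refine sub_le_iff_le_add.2 ?_
  calc 1 / (ℓ ^ 3 * volume.real (openSimplex b)) * ∫ R, (∫ u, localizedEnergy z x
        ((fun y => rotationIsometry R y + u) '' (ℓ • openSimplex b))) ∂μ
    _ = ∑ i, ∑ j ∈ Ioi i, z i * z j / ‖x i - x j‖ * ∫ R, max
          (1 - ℓ⁻¹ * simplexGauge b ((rotationIsometry R).symm e) * ‖x i - x j‖) 0 ^ 3 ∂μ := by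
      rw [integral_integral_localizedEnergy_rotated_openSimplex b μ he z x hℓ, Fintype.card_fin,
        one_div, inv_mul_cancel_left₀ hvol]
    _ ≤ ∑ i, ∑ j ∈ Ioi i, z i * z j / ‖x i - x j‖ + 3 / 2 * (ℓ⁻¹ * P) * ∑ i, z i ^ 2 :=
      sum_sum_Ioi_div_norm_mul_integral_simplexGauge_le b μ z hx he hgauge (inv_nonneg.2 hℓ.le)
    _ = ∑ i, ∑ j ∈ Ioi i, z i * z j / ‖x i - x j‖ + 3 / 2 * P / ℓ * ∑ i, z i ^ 2 := by ring
end

section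
/- For every ν ≥ 0, every N ∈ ℕ, every q_1, …, q_N ∈ ℝ and every pairwise distinct x_1, …, x_N ∈ ℝ³: Σ_{1 ≤ i < j ≤ N} q_i q_j/‖x_i − x_j‖ ≥ Σ_{1 ≤ i < j ≤ N} q_i q_j · Y_ν(x_i − x_j) − (ν/2)·Σ_{i=1}^N q_i². (The Coulomb energy dominates the Yukawa energy up to a self-energy term.) -/
open Finset

/-!
The difference of the Coulomb and Yukawa potentials at distance `r > 0` is
`∫ s in 0..ν, exp (-s * r)`, and this integral equals `ν` at `r = 0`. So the inequality says that
the quadratic form of the matrix `∫ s in 0..ν, exp (-s * ‖x i - x j‖)` is nonnegative at `q`, and it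
suffices that `exp (-s * ‖x i - x j‖)` is a positive semidefinite matrix for each `s ≥ 0`. By the
Cauchy–Schlömilch identity
`exp (-2 * r) = 2 / √π * ∫ u in Ioi 0, exp (-u ^ 2 - (r / u) ^ 2)` this kernel is a mixture of
Gaussian kernels, and those are positive semidefinite by the Schur product theorem, applied to the
power series of the exponential of a Gram matrix.
-/

open Filter MeasureTheory Matrix Topology
open scoped ComplexOrder

section PosSemidef

variable {n 𝕜 : Type*} [RCLike 𝕜]

lemma posSemidef_of_hasSum {β : Type*} {A : β → Matrix n n 𝕜} {B : Matrix n n 𝕜}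
    (hA : ∀ k, (A k).PosSemidef) (hAB : ∀ i j, HasSum (fun k ↦ A k i j) (B i j)) :
    B.PosSemidef := by
  refine ⟨IsHermitian.ext fun i j ↦ (hAB j i).star.unique ?_, fun c ↦ ?_⟩
  · simpa only [(hA _).isHermitian.apply] using hAB i j
  · have hsum : HasSum (fun k ↦ c.sum fun i ci ↦ c.sum fun j cj ↦ star ci * A k i j * cj)
        (c.sum fun i ci ↦ c.sum fun j cj ↦ star ci * B i j * cj) :=
      hasSum_sum fun i _ ↦ hasSum_sum fun j _ ↦ ((hAB i j).mul_left _).mul_right _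
    exact hsum.nonneg fun k ↦ (hA k).2 c

lemma posSemidef_integral {α : Type*} [MeasurableSpace α] {μ : Measure α} {A : α → Matrix n n 𝕜}
    (hA : ∀ᵐ t ∂μ, (A t).PosSemidef) (hint : ∀ i j, Integrable (fun t ↦ A t i j) μ) :
    (of fun i j ↦ ∫ t, A t i j ∂μ).PosSemidef := by
  refine ⟨IsHermitian.ext fun i j ↦ ?_, fun c ↦ ?_⟩
  · refine (integral_conj (f := fun t ↦ A t j i)).symm.trans (integral_congr_ae ?_)
    filter_upwards [hA] with t ht using ht.isHermitian.apply i j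
  · have hterm (i j) : Integrable (fun t ↦ star (c i) * A t i j * c j) μ :=
      ((hint i j).const_mul _).mul_const _
    have hform : (c.sum fun i ci ↦ c.sum fun j cj ↦ star ci * (∫ t, A t i j ∂μ) * cj) =
        ∫ t, c.sum fun i ci ↦ c.sum fun j cj ↦ star ci * A t i j * cj ∂μ := by
      simp only [Finsupp.sum]
      rw [integral_finsetSum _ fun i _ ↦ integrable_finsetSum _ fun j _ ↦ hterm i j]
      refine sum_congr rfl fun i _ ↦ ?_
      rw [integral_finsetSum _ fun j _ ↦ hterm i j]
      simp only [integral_mul_const, integral_const_mul]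
    refine hform.symm ▸ integral_nonneg_of_ae ?_
    filter_upwards [hA] with t ht using ht.2 c

variable [Finite n] {A : Matrix n n 𝕜}

lemma posSemidef_map_pow (hA : A.PosSemidef) (k : ℕ) : (A.map (· ^ k)).PosSemidef := by
  induction k with
  | zero =>
    convert posSemidef_vecMulVec_self_star (1 : n → 𝕜)
    ext i j
    simp [vecMulVec_apply]
  | succ k ih =>
    convert ih.hadamard hA
    ext i j
    simp [pow_succ]

lemma posSemidef_map_exp (hA : A.PosSemidef) : (A.map NormedSpace.exp).PosSemidef :=
  posSemidef_of_hasSum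
    (fun k ↦ (posSemidef_map_pow hA k).smul (by positivity : 0 ≤ (k.factorial : ℝ)⁻¹))
    fun i j ↦ NormedSpace.exp_series_hasSum_exp' (𝕂 := ℝ) (A i j)

end PosSemidef

section GaussianIntegral

/-- The primitive of `exp (-u ^ 2)` vanishing at `0`, that is `√π / 2` times the error function, in
terms of which `exp (-u ^ 2 - (r / u) ^ 2)` has an explicit antiderivative. -/
noncomputable def gaussianPrimitive (u : ℝ) : ℝ := ∫ v in 0..u, Real.exp (-v ^ 2)

lemma hasDerivAt_gaussianPrimitive (u : ℝ) :
    HasDerivAt gaussianPrimitive (Real.exp (-u ^ 2)) u :=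
  (by fun_prop : Continuous fun v : ℝ ↦ Real.exp (-v ^ 2)).integral_hasStrictDerivAt 0 u
    |>.hasDerivAt

lemma integrable_exp_neg_sq : Integrable fun v : ℝ ↦ Real.exp (-v ^ 2) := by
  simpa using integrable_exp_neg_mul_sq one_pos

lemma gaussianPrimitive_neg (u : ℝ) : gaussianPrimitive (-u) = -gaussianPrimitive u := by
  have h := intervalIntegral.integral_comp_neg (a := 0) (b := u) fun v ↦ Real.exp (-v ^ 2)
  simp only [neg_sq, neg_zero] at h
  rw [gaussianPrimitive, intervalIntegral.integral_symm, ← h, gaussianPrimitive]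

lemma tendsto_gaussianPrimitive_atTop :
    Tendsto gaussianPrimitive atTop (𝓝 (√Real.pi / 2)) := by
  have hlim := intervalIntegral_tendsto_integral_Ioi 0 integrable_exp_neg_sq.integrableOn tendsto_id
  have hval : ∫ v in Set.Ioi (0 : ℝ), Real.exp (-v ^ 2) = √Real.pi / 2 := by
    simpa using integral_gaussian_Ioi 1
  exact hval ▸ hlim

lemma tendsto_gaussianPrimitive_atBot :
    Tendsto gaussianPrimitive atBot (𝓝 (-(√Real.pi / 2))) := by
  refine (tendsto_gaussianPrimitive_atTop.comp tendsto_neg_atBot_atTop).neg.congr fun u ↦ ?_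
  rw [Function.comp_apply, gaussianPrimitive_neg, neg_neg]

lemma integral_Ioi_of_hasDerivAt_of_tendsto_nhdsGT {F : Type*} [NormedAddCommGroup F]
    [NormedSpace ℝ F] [CompleteSpace F] {f f' : ℝ → F} {a : ℝ} {l m : F}
    (hderiv : ∀ u ∈ Set.Ioi a, HasDerivAt f (f' u) u) (hint : IntegrableOn f' (Set.Ioi a))
    (hl : Tendsto f (𝓝[>] a) (𝓝 l)) (hm : Tendsto f atTop (𝓝 m)) :
    ∫ u in Set.Ioi a, f' u = m - l := by
  have hcont : ContinuousWithinAt (Function.update f a l) (Set.Ici a) a := by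
    rwa [continuousWithinAt_update_same, Set.Ici_sdiff_left]
  have hupdate {u : ℝ} (hu : a < u) : Function.update f a l =ᶠ[𝓝 u] f :=
    (eventually_ne_nhds hu.ne').mono fun v hv ↦ Function.update_of_ne hv l f
  have htop : Function.update f a l =ᶠ[atTop] f :=
    (eventually_ne_atTop a).mono fun v hv ↦ Function.update_of_ne hv l f
  simpa using integral_Ioi_of_hasDerivAt_of_tendsto hcont
    (fun u hu ↦ (hderiv u hu).congr_of_eventuallyEq (hupdate hu)) hint (hm.congr' htop.symm)

lemma integrableOn_exp_neg_sq_sub_div_sq (r : ℝ) :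
    IntegrableOn (fun u ↦ Real.exp (-u ^ 2 - (r / u) ^ 2)) (Set.Ioi 0) := by
  refine integrable_exp_neg_sq.integrableOn.mono'
    (Measurable.aestronglyMeasurable (by fun_prop)) (.of_forall fun u ↦ ?_)
  rw [Real.norm_of_nonneg (Real.exp_pos _).le]
  gcongr
  exact sub_le_self _ (sq_nonneg _)

lemma tendsto_add_div_nhdsGT {r : ℝ} (hr : 0 < r) :
    Tendsto (fun u ↦ u + r / u) (𝓝[>] 0) atTop := by
  have hdiv : Tendsto (fun u ↦ r / u) (𝓝[>] 0) atTop :=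
    tendsto_inv_nhdsGT_zero.const_mul_atTop hr
  exact (tendsto_nhdsWithin_of_tendsto_nhds tendsto_id).add_atTop hdiv

lemma tendsto_sub_div_nhdsGT {r : ℝ} (hr : 0 < r) :
    Tendsto (fun u ↦ u - r / u) (𝓝[>] 0) atBot := by
  have hdiv : Tendsto (fun u ↦ -(r / u)) (𝓝[>] 0) atBot :=
    tendsto_neg_atTop_atBot.comp (tendsto_inv_nhdsGT_zero.const_mul_atTop hr)
  exact (tendsto_nhdsWithin_of_tendsto_nhds tendsto_id).add_atBot hdiv

lemma tendsto_add_div_atTop (r : ℝ) : Tendsto (fun u ↦ u + r / u) atTop atTop :=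
  tendsto_id.atTop_add (tendsto_const_nhds.div_atTop tendsto_id)

/-- An antiderivative of `exp (-u ^ 2 - (r / u) ^ 2)` on `u > 0`, used to integrate this function
over the half-line. It comes from `(u ± r / u) ^ 2 = u ^ 2 + (r / u) ^ 2 ± 2 * r`. The value at
`u = 0`, where `r / u = 0`, is not the limit from the right unless `r = 0`. -/
noncomputable def cauchySchlomilchPrimitive (r u : ℝ) : ℝ :=
  (Real.exp (2 * r) * gaussianPrimitive (u + r / u) +
    Real.exp (-(2 * r)) * gaussianPrimitive (u - r / u)) / 2

lemma hasDerivAt_cauchySchlomilchPrimitive (r : ℝ) {u : ℝ} (hu : u ≠ 0) :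
    HasDerivAt (cauchySchlomilchPrimitive r) (Real.exp (-u ^ 2 - (r / u) ^ 2)) u := by
  have hdiv : HasDerivAt (fun u ↦ r / u) (-(r / u ^ 2)) u := by
    simpa [div_eq_mul_inv] using (hasDerivAt_inv hu).const_mul r
  have hadd := (hasDerivAt_gaussianPrimitive (u + r / u)).comp u ((hasDerivAt_id u).add hdiv)
  have hsub := (hasDerivAt_gaussianPrimitive (u - r / u)).comp u ((hasDerivAt_id u).sub hdiv)
  have hexp_add : Real.exp (2 * r) * Real.exp (-(u + r / u) ^ 2) =
      Real.exp (-u ^ 2 - (r / u) ^ 2) := by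
    rw [← Real.exp_add]
    congr 1
    field_simp
    ring
  have hexp_sub : Real.exp (-(2 * r)) * Real.exp (-(u - r / u) ^ 2) =
      Real.exp (-u ^ 2 - (r / u) ^ 2) := by
    rw [← Real.exp_add]
    congr 1
    field_simp
    ring
  refine (((hadd.const_mul _).add (hsub.const_mul _)).div_const 2).congr_deriv ?_
  linear_combination (1 - r / u ^ 2) / 2 * hexp_add + (1 + r / u ^ 2) / 2 * hexp_sub

lemma integral_exp_neg_sq_sub_div_sq {r : ℝ} (hr : 0 ≤ r) :
    ∫ u in Set.Ioi 0, Real.exp (-u ^ 2 - (r / u) ^ 2) =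
      √Real.pi / 2 * Real.exp (-(2 * r)) := by
  rcases hr.eq_or_lt with rfl | hr
  · simpa using integral_gaussian_Ioi 1
  have hzero : Tendsto (cauchySchlomilchPrimitive r) (𝓝[>] 0)
      (𝓝 ((Real.exp (2 * r) * (√Real.pi / 2) + Real.exp (-(2 * r)) * -(√Real.pi / 2)) / 2)) :=
    (((tendsto_gaussianPrimitive_atTop.comp (tendsto_add_div_nhdsGT hr)).const_mul _).add
      ((tendsto_gaussianPrimitive_atBot.comp (tendsto_sub_div_nhdsGT hr)).const_mul _)).div_const 2
  have htop : Tendsto (cauchySchlomilchPrimitive r) atTop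
      (𝓝 ((Real.exp (2 * r) * (√Real.pi / 2) + Real.exp (-(2 * r)) * (√Real.pi / 2)) / 2)) := by
    have hsub : Tendsto (fun u ↦ u - r / u) atTop atTop := by
      simpa [sub_eq_add_neg, neg_div] using tendsto_add_div_atTop (-r)
    exact (((tendsto_gaussianPrimitive_atTop.comp (tendsto_add_div_atTop r)).const_mul _).add
      ((tendsto_gaussianPrimitive_atTop.comp hsub).const_mul _)).div_const 2
  rw [integral_Ioi_of_hasDerivAt_of_tendsto_nhdsGT
    (fun u hu ↦ hasDerivAt_cauchySchlomilchPrimitive r (ne_of_gt hu))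
    (integrableOn_exp_neg_sq_sub_div_sq r) hzero htop]
  ring

end GaussianIntegral

section Kernels

variable {ι E : Type*} [Finite ι] [NormedAddCommGroup E] [InnerProductSpace ℝ E]

lemma posSemidef_exp_neg_mul_sq_norm_sub (x : ι → E) {c : ℝ} (hc : 0 ≤ c) :
    (of fun i j ↦ Real.exp (-c * ‖x i - x j‖ ^ 2)).PosSemidef := by
  let weight (i : ι) : ℝ := Real.exp (-c * ‖x i‖ ^ 2)
  have hgram : ((2 * c) • gram ℝ x).PosSemidef := (posSemidef_gram ℝ x).smul (by positivity)
  have hfactor : (of fun i j ↦ Real.exp (-c * ‖x i - x j‖ ^ 2)) =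
      vecMulVec weight (star weight) ⊙ ((2 * c) • gram ℝ x).map NormedSpace.exp := by
    ext i j
    simp only [weight, of_apply, hadamard_apply, vecMulVec_apply, star_trivial,
      Matrix.map_apply, Matrix.smul_apply, gram_apply, smul_eq_mul, ← Real.exp_eq_exp_ℝ,
      ← Real.exp_add, norm_sub_sq_real]
    ring_nf
  rw [hfactor]
  exact (posSemidef_vecMulVec_self_star weight).hadamard (posSemidef_map_exp hgram)

lemma posSemidef_exp_neg_mul_norm_sub (x : ι → E) {s : ℝ} (hs : 0 ≤ s) :
    (of fun i j ↦ Real.exp (-s * ‖x i - x j‖)).PosSemidef := by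
  let A (u : ℝ) : Matrix ι ι ℝ :=
    of fun i j ↦ Real.exp (-u ^ 2 - (s * ‖x i - x j‖ / 2 / u) ^ 2)
  have hA (u : ℝ) : (A u).PosSemidef := by
    convert (posSemidef_exp_neg_mul_sq_norm_sub x (sq_nonneg (s / 2 / u))).smul
      (Real.exp_pos (-u ^ 2)).le using 1
    ext i j
    simp only [A, of_apply, Matrix.smul_apply, smul_eq_mul, ← Real.exp_add]
    ring_nf
  have hmix : (of fun i j ↦ ∫ u in Set.Ioi 0, A u i j).PosSemidef :=
    posSemidef_integral (.of_forall hA) fun i j ↦ integrableOn_exp_neg_sq_sub_div_sq _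
  convert hmix.smul (by positivity : 0 ≤ 2 / √Real.pi) using 1
  ext i j
  simp only [A, of_apply, Matrix.smul_apply, smul_eq_mul]
  rw [integral_exp_neg_sq_sub_div_sq (by positivity), mul_div_cancel₀ _ two_ne_zero, neg_mul]
  field_simp

lemma posSemidef_intervalIntegral_exp_neg_mul_norm_sub (x : ι → E) {ν : ℝ} (hν : 0 ≤ ν) :
    (of fun i j ↦ ∫ s in 0..ν, Real.exp (-s * ‖x i - x j‖)).PosSemidef := by
  simp only [intervalIntegral.integral_of_le hν]
  refine posSemidef_integral (A := fun s ↦ of fun i j ↦ Real.exp (-s * ‖x i - x j‖)) ?_ fun i j ↦ ?_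
  · filter_upwards [ae_restrict_mem measurableSet_Ioc] with s hs
    exact posSemidef_exp_neg_mul_norm_sub x hs.1.le
  · exact (by fun_prop : Continuous fun s : ℝ ↦ Real.exp (-s * ‖x i - x j‖)).integrableOn_Ioc

end Kernels

lemma intervalIntegral_exp_neg_mul (ν : ℝ) {r : ℝ} (hr : r ≠ 0) :
    ∫ s in 0..ν, Real.exp (-s * r) = 1 / r - Real.exp (-ν * r) / r := by
  simp only [neg_mul_comm]
  rw [intervalIntegral.integral_comp_mul_right _ (neg_ne_zero.2 hr), integral_exp,
    zero_mul, Real.exp_zero, smul_eq_mul, mul_neg, ← neg_mul]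
  field_simp
  ring

lemma sum_sum_eq_sum_diag_add_two_nsmul_sum_sum_Ioi {ι M : Type*} [Fintype ι] [LinearOrder ι]
    [LocallyFiniteOrderTop ι] [AddCommMonoid M] {f : ι → ι → M} (hf : ∀ i j, f i j = f j i) :
    ∑ i, ∑ j, f i j = ∑ i, f i i + 2 • ∑ i, ∑ j ∈ Ioi i, f i j := by
  let : LocallyFiniteOrderBot ι := .ofIic ι (fun a ↦ {b | b ≤ a}) (by simp)
  calc ∑ i, ∑ j, f i j = ∑ i, (f i i + ∑ j ∈ {i}ᶜ, f j i) :=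
        sum_congr rfl fun i _ ↦ by
          rw [Fintype.sum_eq_add_sum_compl i]
          exact congrArg _ (sum_congr rfl fun j _ ↦ hf i j)
    _ = ∑ i, f i i + ∑ i, ∑ j ∈ Ioi i, (f j i + f i j) := by
        rw [sum_add_distrib, sum_sum_Ioi_add_eq_sum_sum_off_diag]
    _ = ∑ i, f i i + 2 • ∑ i, ∑ j ∈ Ioi i, f i j := by
        simp only [hf, two_nsmul, sum_add_distrib]

lemma neg_half_sum_diag_le_sum_sum_Ioi {ι : Type*} [Fintype ι] [LinearOrder ι]
    [LocallyFiniteOrderTop ι] {A : Matrix ι ι ℝ} (hA : A.PosSemidef) (q : ι → ℝ) :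
    -(∑ i, A i i * q i ^ 2) / 2 ≤ ∑ i, ∑ j ∈ Ioi i, q i * q j * A i j := by
  have hsymm (i j) : q i * q j * A i j = q j * q i * A j i := by
    rw [← hA.isHermitian.apply i j, star_trivial, mul_comm (q i)]
  have hform : q ⬝ᵥ A *ᵥ q = ∑ i, A i i * q i ^ 2 + 2 * ∑ i, ∑ j ∈ Ioi i, q i * q j * A i j :=
    calc q ⬝ᵥ A *ᵥ q = ∑ i, ∑ j, q i * q j * A i j := by
          simp only [dotProduct, mulVec, mul_sum, mul_assoc, mul_comm (q _) (A _ _)]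
      _ = ∑ i, A i i * q i ^ 2 + 2 * ∑ i, ∑ j ∈ Ioi i, q i * q j * A i j := by
          rw [sum_sum_eq_sum_diag_add_two_nsmul_sum_sum_Ioi hsymm, nsmul_eq_mul, Nat.cast_ofNat]
          simp only [sq, mul_comm (A _ _)]
  have hnonneg : 0 ≤ q ⬝ᵥ A *ᵥ q := hA.dotProduct_mulVec_nonneg q
  linarith

theorem coulomb_ge_yukawa_general {ι E : Type*} [Fintype ι] [LinearOrder ι]
    [LocallyFiniteOrderTop ι] [NormedAddCommGroup E] [InnerProductSpace ℝ E]
    {ν : ℝ} (hν : 0 ≤ ν) (q : ι → ℝ) {x : ι → E} (hx : Function.Injective x) :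
    ∑ i, ∑ j ∈ Ioi i, q i * q j / ‖x i - x j‖
      ≥ (∑ i, ∑ j ∈ Ioi i, q i * q j * (Real.exp (-ν * ‖x i - x j‖) / ‖x i - x j‖))
        - (ν / 2) * ∑ i, q i ^ 2 := by
  let K (i j : ι) : ℝ := ∫ s in 0..ν, Real.exp (-s * ‖x i - x j‖)
  have hK_diag (i) : K i i = ν := by simp [K]
  have hK_offDiag {i j} (hij : i < j) :
      K i j = 1 / ‖x i - x j‖ - Real.exp (-ν * ‖x i - x j‖) / ‖x i - x j‖ :=
    intervalIntegral_exp_neg_mul ν (norm_sub_eq_zero_iff.not.2 (hx.ne hij.ne))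
  have hsum : ∑ i, ∑ j ∈ Ioi i, q i * q j * K i j =
      ∑ i, ∑ j ∈ Ioi i, q i * q j / ‖x i - x j‖ -
        ∑ i, ∑ j ∈ Ioi i, q i * q j * (Real.exp (-ν * ‖x i - x j‖) / ‖x i - x j‖) := by
    simp only [← sum_sub_distrib]
    refine sum_congr rfl fun i _ ↦ sum_congr rfl fun j hij ↦ ?_
    rw [hK_offDiag (mem_Ioi.1 hij), mul_sub, mul_one_div]
  have hself : -(∑ i, K i i * q i ^ 2) / 2 ≤ ∑ i, ∑ j ∈ Ioi i, q i * q j * K i j :=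
    neg_half_sum_diag_le_sum_sum_Ioi (posSemidef_intervalIntegral_exp_neg_mul_norm_sub x hν) q
  simp only [hK_diag, ← mul_sum, hsum] at hself
  linarith

/-- The Coulomb energy dominates the Yukawa energy up to a self-energy term. -/
theorem coulomb_ge_yukawa (ν : ℝ) (hν : 0 ≤ ν) (N : ℕ) (q : Fin N → ℝ)
    (x : Fin N → EuclideanSpace ℝ (Fin 3)) (hx : Function.Injective x) :
    ∑ i : Fin N, ∑ j ∈ Ioi i, q i * q j / ‖x i - x j‖
      ≥ (∑ i : Fin N, ∑ j ∈ Ioi i,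
            q i * q j * (Real.exp (-ν * ‖x i - x j‖) / ‖x i - x j‖))
        - (ν / 2) * ∑ i : Fin N, (q i) ^ 2 :=
  coulomb_ge_yukawa_general hν q hx
end

section
/- For every δ > 0 there exists a constant C > 0 (depending only on δ) such that for every ν ≥ 0 and all x, y ∈ ℝ³ with ‖x − y‖ ≥ δ: Y_ν(x − y) ≤ C · ∫_{B(y,δ)} Y_ν(x − z) dz, where B(y, δ) is the open ball of radius δ centered at y and the integral is with respect to Lebesgue measure. In particular the constant C is uniform in ν. -/
open MeasureTheory

/-!
Let `w` be the point at distance `δ / 2` from `y` on the segment from `y` to `x`. Every point of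
`B(w, δ/2)` lies in `B(y, δ)` and is nearer to `x` than `y` is. As the potential decreases with the
distance, its value at `x - y` is at most its average over `B(w, δ/2)`, and the volume of this ball
depends only on `δ`.
-/

open Metric Set

section TopologicalGroup

variable {G F : Type*} [AddGroup G] [TopologicalSpace G] [IsTopologicalAddGroup G]
  [MeasurableSpace G] [BorelSpace G] [NormedAddCommGroup F]
  {μ : Measure G} [μ.IsAddLeftInvariant] [μ.IsNegInvariant]

lemma locallyIntegrable_comp_sub_left {f : G → F} (hf : LocallyIntegrable f μ) (x : G) :
    LocallyIntegrable (fun z ↦ f (x - z)) μ := by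
  refine (locallyIntegrable_map_homeomorph (Homeomorph.subLeft x)).1 ?_
  rwa [Homeomorph.coe_subLeft, Measure.map_sub_left_eq_self]

end TopologicalGroup

/-- The radial profile of the Yukawa potential: `Y_ν(v) = yukawaProfile ν ‖v‖`. At `t = 0`, where
the potential is singular, it takes the value `0`. -/
noncomputable def yukawaProfile (ν t : ℝ) : ℝ :=
  Real.exp (-ν * t) / t

lemma yukawaProfile_nonneg (ν : ℝ) {t : ℝ} (ht : 0 ≤ t) : 0 ≤ yukawaProfile ν t :=
  div_nonneg (Real.exp_nonneg _) ht

lemma antitoneOn_yukawaProfile {ν : ℝ} (hν : 0 ≤ ν) : AntitoneOn (yukawaProfile ν) (Ioi 0) := by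
  intro s (hs : 0 < s) t _ hst
  have hexp : Real.exp (-ν * t) ≤ Real.exp (-ν * s) :=
    Real.exp_le_exp.2 (mul_le_mul_of_nonpos_left hst (neg_nonpos.2 hν))
  exact div_le_div₀ (Real.exp_nonneg _) hexp hs hst

section NormedSpace

variable {E : Type*} [NormedAddCommGroup E] [NormedSpace ℝ E]

lemma exists_ball_half_subset_ball_inter_ball_sdiff_singleton {x y : E} {δ : ℝ} (hδ : 0 ≤ δ)
    (hxy : δ ≤ dist x y) :
    ∃ w, ball w (δ / 2) ⊆ ball y δ ∩ (ball x (dist x y) \ {x}) := by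
  obtain ⟨w, hxw, hwy⟩ : ∃ w, dist x w ≤ dist x y - δ / 2 ∧ dist w y ≤ δ / 2 :=
    exists_dist_le_le (by linarith) (by linarith) (by linarith)
  refine ⟨w, subset_inter (ball_subset_ball' (by linarith)) (subset_sdiff_singleton ?_ ?_)⟩
  · exact ball_subset_ball' (by linarith [dist_comm w x])
  · rw [mem_ball]
    linarith [dist_triangle x w y]

variable [FiniteDimensional ℝ E] [MeasurableSpace E] [BorelSpace E]
  {μ : Measure E} [μ.IsAddHaarMeasure]

lemma mul_measureReal_ball_half_le_setIntegral_of_antitoneOn {f : ℝ → ℝ}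
    (hf : AntitoneOn f (Ioi 0)) (hf_nonneg : ∀ t, 0 ≤ t → 0 ≤ f t) {x y : E} {δ : ℝ} (hδ : 0 ≤ δ)
    (hxy : δ ≤ ‖x - y‖) (hint : IntegrableOn (fun z ↦ f ‖x - z‖) (ball y δ) μ) :
    f ‖x - y‖ * μ.real (ball 0 (δ / 2)) ≤ ∫ z in ball y δ, f ‖x - z‖ ∂μ := by
  rw [← dist_eq_norm] at hxy
  obtain ⟨w, hw⟩ := exists_ball_half_subset_ball_inter_ball_sdiff_singleton hδ hxy
  have hw_sub : ball w (δ / 2) ⊆ ball y δ := fun z hz ↦ (hw hz).1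
  have hle : ∀ z ∈ ball w (δ / 2), f ‖x - y‖ ≤ f ‖x - z‖ := by
    intro z hz
    obtain ⟨-, hzy, hzx⟩ := hw hz
    rw [mem_ball', dist_eq_norm, dist_eq_norm] at hzy
    have hpos : 0 < ‖x - z‖ := norm_sub_pos_iff.2 (Ne.symm hzx)
    exact hf hpos (hpos.trans hzy) hzy.le
  calc f ‖x - y‖ * μ.real (ball 0 (δ / 2))
      = f ‖x - y‖ * μ.real (ball w (δ / 2)) := by rw [Measure.addHaar_real_ball_center μ w]
    _ ≤ ∫ z in ball w (δ / 2), f ‖x - z‖ ∂μ :=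
        setIntegral_ge_of_const_le_real measurableSet_ball measure_ball_lt_top.ne hle
          (hint.mono_set hw_sub)
    _ ≤ ∫ z in ball y δ, f ‖x - z‖ ∂μ :=
        setIntegral_mono_set hint (ae_of_all _ fun z ↦ hf_nonneg _ (norm_nonneg (x - z)))
          hw_sub.eventuallyLE

lemma locallyIntegrable_norm_inv (hE : 2 ≤ Module.finrank ℝ E) :
    LocallyIntegrable (fun v : E ↦ ‖v‖⁻¹) μ := by
  have hα : (1 : ℝ) < Module.finrank ℝ E := by exact_mod_cast hE
  refine locallyIntegrable_of_norm_le_rpow (C := 1) (one_le_two.trans hE) hα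
    (ae_of_all _ fun v ↦ ?_) (by fun_prop)
  simp [Real.rpow_neg_one]

lemma locallyIntegrable_yukawaProfile_norm (hE : 2 ≤ Module.finrank ℝ E) (ν : ℝ) :
    LocallyIntegrable (fun v : E ↦ yukawaProfile ν ‖v‖) μ := by
  simp only [yukawaProfile, div_eq_mul_inv]
  exact (locallyIntegrable_norm_inv hE).continuous_mul (by fun_prop)

lemma integrableOn_ball_yukawaProfile_norm_sub (hE : 2 ≤ Module.finrank ℝ E) (ν : ℝ) (x y : E)
    (δ : ℝ) : IntegrableOn (fun z ↦ yukawaProfile ν ‖x - z‖) (ball y δ) μ := by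
  have hloc : LocallyIntegrable (fun z ↦ yukawaProfile ν ‖x - z‖) μ :=
    locallyIntegrable_comp_sub_left (locallyIntegrable_yukawaProfile_norm hE ν) x
  exact (hloc.integrableOn_isCompact (isCompact_closedBall y δ)).mono_set ball_subset_closedBall

theorem yukawa_le_ball_average_general (hE : 2 ≤ Module.finrank ℝ E) (μ : Measure E)
    [μ.IsAddHaarMeasure] (δ : ℝ) (hδ : 0 < δ) :
    ∃ C > 0, ∀ ν : ℝ, 0 ≤ ν → ∀ x y : E, δ ≤ ‖x - y‖ →
      Real.exp (-ν * ‖x - y‖) / ‖x - y‖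
        ≤ C * ∫ z in ball y δ, Real.exp (-ν * ‖x - z‖) / ‖x - z‖ ∂μ := by
  have hvol : 0 < μ.real (ball (0 : E) (δ / 2)) :=
    ENNReal.toReal_pos (measure_ball_pos μ 0 (half_pos hδ)).ne' measure_ball_lt_top.ne
  refine ⟨(μ.real (ball (0 : E) (δ / 2)))⁻¹, inv_pos.2 hvol, fun ν hν x y hxy ↦ ?_⟩
  rw [le_inv_mul_iff₀' hvol]
  exact mul_measureReal_ball_half_le_setIntegral_of_antitoneOn (antitoneOn_yukawaProfile hν)
    (fun _ ↦ yukawaProfile_nonneg ν) hδ.le hxy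
    (integrableOn_ball_yukawaProfile_norm_sub hE ν x y δ)

end NormedSpace

/-- The Yukawa potential at a point at distance at least `δ` from `y` is controlled by its
average over the ball `B(y, δ)`, uniformly in `ν ≥ 0`. -/
theorem yukawa_le_ball_average (δ : ℝ) (hδ : 0 < δ) :
    ∃ C > 0, ∀ ν : ℝ, 0 ≤ ν → ∀ x y : EuclideanSpace ℝ (Fin 3), δ ≤ ‖x - y‖ →
      Real.exp (-ν * ‖x - y‖) / ‖x - y‖
        ≤ C * ∫ z in Metric.ball y δ, Real.exp (-ν * ‖x - z‖) / ‖x - z‖ :=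
  yukawa_le_ball_average_general (by simp) volume δ hδ
end

section
/- For every δ > 0 there exists a constant C > 0 (depending only on δ) such that the following holds: for every countable δ-separated set L ⊆ ℝ³, every ν > 0 and every x ∈ ℝ³ with x ∉ L, Σ_{R ∈ L} Y_ν(x − R) ≤ 1/dist(x, L) + C/ν², where dist(x, L) = inf{‖x − R‖ : R ∈ L}. -/
open MeasureTheory

/-!
At most one point `R₀` of `L` lies within `δ / 2` of `x`, and its contribution is at most
`1 / ‖x - R₀‖ ≤ 1 / dist(x, L)`. For a point `R` at distance at least `δ / 2` from `x`, every `y` in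
the ball of radius `δ / 4` about `R` satisfies `‖x - y‖ ≤ 3 / 2 * ‖x - R‖`, so that
`Y_ν (x - R) ≤ Y_ν (2 / 3 * (x - y))`. These balls are disjoint and have the same volume, so
averaging over them bounds the sum over the far points by a multiple of `∫ Y_ν`, which scales like
`ν ^ (1 - d)` in dimension `d`.
-/

theorem sum_measureReal_mul_le_integral {X ι : Type*} [MeasurableSpace X] {μ : Measure X}
    {F : X → ℝ} {s : Finset ι} {B : ι → Set X} {a : ι → ℝ} (hF : Integrable F μ)
    (hF_nonneg : 0 ≤ᵐ[μ] F) (hB : ∀ i ∈ s, MeasurableSet (B i)) (hμB : ∀ i ∈ s, μ (B i) ≠ ⊤)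
    (hdisj : (s : Set ι).PairwiseDisjoint B) (hle : ∀ i ∈ s, ∀ y ∈ B i, a i ≤ F y) :
    ∑ i ∈ s, μ.real (B i) * a i ≤ ∫ y, F y ∂μ :=
  calc ∑ i ∈ s, μ.real (B i) * a i
    _ ≤ ∑ i ∈ s, ∫ y in B i, F y ∂μ := Finset.sum_le_sum fun i hi ↦
      setIntegral_ge_of_const_le (hB i hi) (hμB i hi) (hle i hi) hF.integrableOn
    _ = ∫ y in ⋃ i ∈ s, B i, F y ∂μ :=
      (integral_biUnion_finset s hB hdisj fun _ _ ↦ hF.integrableOn).symm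
    _ ≤ ∫ y, F y ∂μ := setIntegral_le_integral hF hF_nonneg

theorem card_le_one_of_pairwise_le_dist {X ι : Type*} [PseudoMetricSpace X] {s : Finset ι}
    {p : ι → X} {δ : ℝ} {x : X} (hsep : (s : Set ι).Pairwise fun i j ↦ δ ≤ dist (p i) (p j))
    (hnear : ∀ i ∈ s, dist x (p i) < δ / 2) : s.card ≤ 1 := by
  refine Finset.card_le_one.2 fun i hi j hj ↦ ?_
  by_contra hij
  linarith [hsep hi hj hij, hnear i hi, hnear j hj, dist_triangle_left (p i) (p j) x]

section Yukawa

variable {E : Type*} [NormedAddCommGroup E]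

/-- The Yukawa potential `Y_ν` on a normed space, with the junk value `0` at the origin. -/
noncomputable def yukawa (ν : ℝ) (z : E) : ℝ := Real.exp (-ν * ‖z‖) / ‖z‖

theorem yukawa_nonneg (ν : ℝ) (z : E) : 0 ≤ yukawa ν z := by
  unfold yukawa
  positivity

theorem yukawa_le_one_div_norm {ν : ℝ} (hν : 0 ≤ ν) (z : E) : yukawa ν z ≤ 1 / ‖z‖ := by
  have hexp : Real.exp (-ν * ‖z‖) ≤ 1 :=
    Real.exp_le_one_iff.2 (mul_nonpos_of_nonpos_of_nonneg (neg_nonpos.2 hν) (norm_nonneg z))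
  exact div_le_div_of_nonneg_right hexp (norm_nonneg z)

theorem yukawa_le_yukawa_of_norm_le {ν : ℝ} (hν : 0 ≤ ν) {y z : E} (hy : y ≠ 0)
    (hyz : ‖y‖ ≤ ‖z‖) : yukawa ν z ≤ yukawa ν y := by
  have hy_pos : 0 < ‖y‖ := norm_pos_iff.2 hy
  have hexp : Real.exp (-ν * ‖z‖) ≤ Real.exp (-ν * ‖y‖) :=
    Real.exp_le_exp.2 (mul_le_mul_of_nonpos_left hyz (neg_nonpos.2 hν))
  exact div_le_div₀ (Real.exp_nonneg _) hexp hy_pos hyz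

theorem yukawa_sub_le_one_div_infDist {ν : ℝ} (hν : 0 ≤ ν) {L : Set E} (hL : IsClosed L) {x p : E}
    (hx : x ∉ L) (hp : p ∈ L) : yukawa ν (x - p) ≤ 1 / Metric.infDist x L := by
  have hpos : 0 < Metric.infDist x L := (hL.notMem_iff_infDist_pos ⟨p, hp⟩).1 hx
  have hdist : Metric.infDist x L ≤ ‖x - p‖ := by
    simpa only [dist_eq_norm] using Metric.infDist_le_dist_of_mem hp
  exact (yukawa_le_one_div_norm hν _).trans (one_div_le_one_div_of_le hpos hdist)

variable [NormedSpace ℝ E]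

theorem yukawa_eq_mul_yukawa_one_smul {ν : ℝ} (hν : 0 < ν) (z : E) :
    yukawa ν z = ν * yukawa 1 (ν • z) := by
  simp only [yukawa, norm_smul, Real.norm_of_nonneg hν.le]
  field_simp

theorem yukawa_sub_le_yukawa_smul_sub {ν δ : ℝ} (hν : 0 ≤ ν) (hδ : 0 < δ) {x y p : E}
    (hp : δ / 2 ≤ dist x p) (hy : y ∈ Metric.ball p (δ / 4)) :
    yukawa ν (x - p) ≤ yukawa ν ((2 / 3 : ℝ) • (x - y)) := by
  have hyp : dist y p < δ / 4 := hy
  have hxy_pos : 0 < dist x y := by linarith [dist_triangle x y p]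
  have hxy_le : dist x y ≤ 3 / 2 * dist x p := by linarith [dist_triangle_right x y p]
  refine yukawa_le_yukawa_of_norm_le hν ?_ ?_
  · exact smul_ne_zero (by norm_num) (sub_ne_zero.2 (dist_pos.1 hxy_pos))
  · rw [norm_smul, Real.norm_of_nonneg (by norm_num), ← dist_eq_norm, ← dist_eq_norm]
    linarith

variable [MeasurableSpace E] (μ : Measure E)

/-- The constant in the bound for the sum of `Y_ν` over the far points of a `δ`-separated family:
the comparison factor `(3 / 2) ^ d` times `∫ Y₁`, per volume of a ball of radius `δ / 4`. -/
noncomputable def yukawaPackingConst (δ : ℝ) : ℝ :=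
  ((2 / 3 : ℝ) ^ Module.finrank ℝ E)⁻¹ * (∫ z : E, yukawa 1 z ∂μ) /
    μ.real (Metric.ball (0 : E) (δ / 4))

theorem yukawaPackingConst_nonneg (δ : ℝ) : 0 ≤ yukawaPackingConst μ δ := by
  have hint : 0 ≤ ∫ z : E, yukawa 1 z ∂μ := integral_nonneg (yukawa_nonneg 1)
  unfold yukawaPackingConst
  positivity

variable [FiniteDimensional ℝ E] [BorelSpace E] [μ.IsAddHaarMeasure]

theorem integrable_yukawa {ν : ℝ} (hν : 0 < ν) (hE : 2 ≤ Module.finrank ℝ E) :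
    Integrable (yukawa ν : E → ℝ) μ := by
  have : Nontrivial E := Module.nontrivial_of_finrank_pos (R := ℝ) (by lia)
  obtain ⟨k, hk⟩ := Nat.exists_eq_add_of_le' hE
  have hradial : IntegrableOn (fun r : ℝ ↦ r ^ (k : ℝ) * Real.exp (-ν * r ^ (1 : ℝ)))
      (Set.Ioi 0) :=
    integrableOn_rpow_mul_exp_neg_mul_rpow
      (neg_one_lt_zero.trans_le k.cast_nonneg) zero_lt_one hν
  refine (integrable_fun_norm_addHaar μ (f := fun r ↦ Real.exp (-ν * r) / r)).2
    (hradial.congr_fun (fun r hr ↦ ?_) measurableSet_Ioi)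
  have hr_ne : r ≠ 0 := ne_of_gt hr
  simp only [hk, Real.rpow_natCast, Real.rpow_one, smul_eq_mul, Nat.add_one_sub_one, pow_succ]
  field_simp

theorem integral_yukawa {ν : ℝ} (hν : 0 < ν) (hE : 1 ≤ Module.finrank ℝ E) :
    ∫ z : E, yukawa ν z ∂μ = (∫ z : E, yukawa 1 z ∂μ) / ν ^ (Module.finrank ℝ E - 1) := by
  obtain ⟨k, hk⟩ := Nat.exists_eq_add_of_le' hE
  simp_rw [yukawa_eq_mul_yukawa_one_smul hν]
  rw [integral_const_mul, Measure.integral_comp_smul_of_nonneg _ _ _ (hR := hν.le), hk,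
    Nat.add_sub_cancel, smul_eq_mul, pow_succ]
  field_simp

theorem integral_yukawa_smul_sub {ν c : ℝ} (hc : 0 ≤ c) (x : E) :
    ∫ y : E, yukawa ν (c • (x - y)) ∂μ =
      (c ^ Module.finrank ℝ E)⁻¹ * ∫ z : E, yukawa ν z ∂μ := by
  rw [integral_sub_left_eq_self (fun z ↦ yukawa ν (c • z)),
    Measure.integral_comp_smul_of_nonneg _ _ _ (hR := hc), smul_eq_mul]

variable {ι : Type*} {s : Finset ι} {p : ι → E} {δ ν : ℝ} {x : E}

theorem sum_yukawa_sub_le_of_far (hE : 2 ≤ Module.finrank ℝ E) (hδ : 0 < δ) (hν : 0 < ν)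
    (hsep : (s : Set ι).Pairwise fun i j ↦ δ ≤ dist (p i) (p j))
    (hfar : ∀ i ∈ s, δ / 2 ≤ dist x (p i)) :
    ∑ i ∈ s, yukawa ν (x - p i) ≤
      yukawaPackingConst μ δ / ν ^ (Module.finrank ℝ E - 1) := by
  have hvol_pos : 0 < μ.real (Metric.ball (0 : E) (δ / 4)) :=
    ENNReal.toReal_pos (Metric.measure_ball_pos μ _ (by positivity)).ne' measure_ball_lt_top.ne
  have hdisj : (s : Set ι).PairwiseDisjoint fun i ↦ Metric.ball (p i) (δ / 4) :=
    fun i hi j hj hij ↦ Metric.ball_disjoint_ball (by linarith [hsep hi hj hij])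
  have hint : Integrable (fun y ↦ yukawa ν ((2 / 3 : ℝ) • (x - y))) μ :=
    ((integrable_yukawa μ hν hE).comp_smul (by norm_num)).comp_sub_left x
  have hsum : ∑ i ∈ s, μ.real (Metric.ball (p i) (δ / 4)) * yukawa ν (x - p i) ≤
      ∫ y, yukawa ν ((2 / 3 : ℝ) • (x - y)) ∂μ :=
    sum_measureReal_mul_le_integral hint (.of_forall fun _ ↦ yukawa_nonneg _ _)
      (fun _ _ ↦ measurableSet_ball) (fun _ _ ↦ measure_ball_lt_top.ne) hdisj
      fun i hi _ ↦ yukawa_sub_le_yukawa_smul_sub hν.le hδ (hfar i hi)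
  simp only [Measure.addHaar_real_ball_center, ← Finset.mul_sum] at hsum
  rw [integral_yukawa_smul_sub μ (by norm_num), integral_yukawa μ hν (by lia), ← mul_div_assoc]
    at hsum
  rwa [yukawaPackingConst, div_right_comm, le_div_iff₀' hvol_pos]

theorem sum_yukawa_sub_le_add {b : ℝ} (hE : 2 ≤ Module.finrank ℝ E) (hδ : 0 < δ) (hν : 0 < ν)
    (hsep : (s : Set ι).Pairwise fun i j ↦ δ ≤ dist (p i) (p j)) (hb : 0 ≤ b)
    (hle : ∀ i ∈ s, yukawa ν (x - p i) ≤ b) :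
    ∑ i ∈ s, yukawa ν (x - p i) ≤
      b + yukawaPackingConst μ δ / ν ^ (Module.finrank ℝ E - 1) := by
  rw [← Finset.sum_filter_add_sum_filter_not s fun i ↦ dist x (p i) < δ / 2]
  refine add_le_add ?near ?far
  case near =>
    have hcard : (s.filter fun i ↦ dist x (p i) < δ / 2).card ≤ 1 :=
      card_le_one_of_pairwise_le_dist (hsep.mono (Finset.filter_subset _ s))
        fun i hi ↦ (Finset.mem_filter.1 hi).2
    calc _ ≤ (s.filter fun i ↦ dist x (p i) < δ / 2).card • b :=
          Finset.sum_le_card_nsmul _ _ _ fun i hi ↦ hle i (Finset.mem_filter.1 hi).1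
      _ ≤ 1 • b := nsmul_le_nsmul_left hb hcard
      _ = b := one_nsmul b
  case far =>
    exact sum_yukawa_sub_le_of_far μ hE hδ hν (hsep.mono (Finset.filter_subset _ s))
      fun i hi ↦ not_lt.1 (Finset.mem_filter.1 hi).2

end Yukawa

theorem yukawa_sum_over_separated_set_general {E : Type*} [NormedAddCommGroup E]
    [NormedSpace ℝ E] [FiniteDimensional ℝ E] (hE : 2 ≤ Module.finrank ℝ E) {δ : ℝ} (hδ : 0 < δ) :
    ∃ C > 0, ∀ L : Set E, L.Pairwise (fun p q ↦ δ ≤ dist p q) →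
      ∀ ν : ℝ, 0 < ν → ∀ x ∉ L,
        Summable (fun R : L ↦ yukawa ν (x - R)) ∧
          ∑' R : L, yukawa ν (x - R) ≤
            1 / Metric.infDist x L + C / ν ^ (Module.finrank ℝ E - 1) := by
  let _ : MeasurableSpace E := borel E
  have _ : BorelSpace E := ⟨rfl⟩
  have hconst := yukawaPackingConst_nonneg (Measure.addHaar : Measure E) δ
  refine ⟨yukawaPackingConst (Measure.addHaar : Measure E) δ + 1, by positivity,
    fun L hL ν hν x hx ↦ ?_⟩
  have hclosed : IsClosed L := Metric.isClosed_of_pairwise_le_dist hδ hL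
  have hsum (s : Finset L) : ∑ R ∈ s, yukawa ν (x - R) ≤ 1 / Metric.infDist x L +
      (yukawaPackingConst (Measure.addHaar : Measure E) δ + 1) /
        ν ^ (Module.finrank ℝ E - 1) := by
    refine (sum_yukawa_sub_le_add Measure.addHaar hE hδ hν
      (fun p _ q _ hpq ↦ hL p.2 q.2 (Subtype.coe_ne_coe.2 hpq))
      (one_div_nonneg.2 Metric.infDist_nonneg)
      fun R _ ↦ yukawa_sub_le_one_div_infDist hν.le hclosed hx R.2).trans ?_
    gcongr
    exact le_add_of_nonneg_right zero_le_one
  exact ⟨summable_of_sum_le (fun _ ↦ yukawa_nonneg _ _) hsum,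
    Real.tsum_le_of_sum_le (fun _ ↦ yukawa_nonneg _ _) hsum⟩

/-- Sum of Yukawa potentials over a countable `δ`-separated set of nuclei:
the closest nucleus dominates up to an error of order `ν⁻²`. -/
theorem yukawa_sum_over_separated_set (δ : ℝ) (hδ : 0 < δ) :
    ∃ C > 0, ∀ L : Set (EuclideanSpace ℝ (Fin 3)), L.Countable →
      (∀ p ∈ L, ∀ q ∈ L, p ≠ q → δ ≤ ‖p - q‖) →
      ∀ ν : ℝ, 0 < ν → ∀ x : EuclideanSpace ℝ (Fin 3), x ∉ L →
        ∑' R : L, Real.exp (-ν * ‖x - (R : EuclideanSpace ℝ (Fin 3))‖)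
            / ‖x - (R : EuclideanSpace ℝ (Fin 3))‖
          ≤ 1 / Metric.infDist x L + C / ν ^ 2 := by
  obtain ⟨C, hC, hbound⟩ := yukawa_sum_over_separated_set_general
    (E := EuclideanSpace ℝ (Fin 3)) (by simp) hδ
  refine ⟨C, hC, fun L _ hL ν hν x hx ↦ ?_⟩
  simpa [yukawa] using
    (hbound L (fun p hp q hq hpq ↦ (hL p hp q hq hpq).trans_eq (dist_eq_norm p q).symm) ν hν x hx).2
end

section
/- For every δ > 0 there exists a constant C > 0 (depending only on δ) such that for every finite δ-separated set S ⊆ ℝ³ with N := #S ≥ 2: Σ_{p, q ∈ S, p ≠ q} 1/‖p − q‖³ ≤ C · N · log N. -/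
open Finset
open scoped Classical

/-!
Fix `p ∈ S` and list the other points of `S` by increasing distance from `p`. The balls of radius
`δ / 2` around the points within distance `R ≥ δ` of `p` are disjoint and lie in a ball of radius
`R + δ / 2`, so in dimension `d` there are at most `(3 * R / δ) ^ d` such points. Hence the `k`-th
point `q` of the list satisfies `1 / ‖p - q‖ ^ d ≤ (3 / δ) ^ d / k`, and summing over `k` gives a
harmonic sum, which is `O(log N)`.
-/

lemma harmonic_le_two_mul_log_add_one (n : ℕ) : (harmonic n : ℝ) ≤ 2 * Real.log (n + 1) := by
  induction n with
  | zero => simp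
  | succ n ih =>
    have inv_le : ((n : ℝ) + 1)⁻¹ ≤ 2 * (1 - ((n + 2 : ℝ) / (n + 1))⁻¹) := by
      rw [inv_div, one_sub_div (by positivity), ← one_div, ← mul_div_assoc,
        div_le_div_iff₀ (by positivity) (by positivity)]
      linarith
    have log_ratio : 1 - ((n + 2 : ℝ) / (n + 1))⁻¹ ≤ Real.log (n + 2) - Real.log (n + 1) := by
      rw [← Real.log_div (by positivity) (by positivity)]
      exact Real.one_sub_inv_le_log_of_pos (by positivity)
    rw [harmonic_succ]
    push_cast
    rw [add_assoc (n : ℝ), one_add_one_eq_two]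
    linarith

lemma sum_le_mul_harmonic_of_le_div_card_filter_le {α β 𝕜 : Type*} [LinearOrder β]
    [Field 𝕜] [LinearOrder 𝕜] [IsStrictOrderedRing 𝕜] (g : α → β) {w : α → 𝕜} {K : 𝕜}
    (hK : 0 ≤ K) (T : Finset α) (hw : ∀ q ∈ T, w q ≤ K / #{x ∈ T | g x ≤ g q}) :
    ∑ q ∈ T, w q ≤ K * (harmonic #T : 𝕜) := by
  induction T using Finset.induction_on_max_value g with
  | empty => simp
  | insert a s ha hmax ih =>
    have sum_le : ∑ q ∈ s, w q ≤ K * (harmonic #s : 𝕜) := by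
      refine ih fun q hq ↦ (hw q (mem_insert_of_mem hq)).trans ?_
      have card_pos : 0 < #{x ∈ s | g x ≤ g q} := card_pos.2 ⟨q, mem_filter.2 ⟨hq, le_rfl⟩⟩
      gcongr
      exact subset_insert a s
    have filter_eq : {x ∈ insert a s | g x ≤ g a} = insert a s :=
      filter_true_of_mem (forall_mem_insert .. |>.2 ⟨le_rfl, hmax⟩)
    have le_last : w a ≤ K / (#s + 1 : ℕ) := by
      simpa only [filter_eq, card_insert_of_notMem ha] using hw a (mem_insert_self a s)
    calc ∑ q ∈ insert a s, w q = w a + ∑ q ∈ s, w q := sum_insert ha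
      _ ≤ K / (#s + 1 : ℕ) + K * (harmonic #s : 𝕜) := add_le_add le_last sum_le
      _ = K * (harmonic #(insert a s) : 𝕜) := by
        rw [card_insert_of_notMem ha, harmonic_succ]
        push_cast
        ring

section Packing

open MeasureTheory Metric Module

variable {E : Type*} [NormedAddCommGroup E] [NormedSpace ℝ E] [FiniteDimensional ℝ E]

lemma card_mul_pow_finrank_le_of_pairwiseDisjoint_ball {T : Finset E} {p : E} {r ρ : ℝ}
    (hr : 0 < r) (hρ : 0 < ρ) (hdisj : (T : Set E).PairwiseDisjoint (ball · r))
    (hsub : ∀ q ∈ T, ball q r ⊆ ball p ρ) :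
    #T * r ^ finrank ℝ E ≤ ρ ^ finrank ℝ E := by
  borelize E
  let μ : Measure E := Measure.addHaar
  have real_ball (x : E) {t : ℝ} (ht : 0 < t) :
      μ.real (ball x t) = t ^ finrank ℝ E * μ.real (ball 0 1) := by
    rw [measureReal_def, μ.addHaar_ball_of_pos x ht, ENNReal.toReal_mul,
      ENNReal.toReal_ofReal (by positivity), measureReal_def]
  have unit_pos : 0 < μ.real (ball (0 : E) 1) :=
    ENNReal.toReal_pos (measure_ball_pos μ 0 one_pos).ne' measure_ball_lt_top.ne
  refine le_of_mul_le_mul_right ?_ unit_pos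
  calc #T * r ^ finrank ℝ E * μ.real (ball 0 1) = ∑ q ∈ T, μ.real (ball q r) := by
        simp only [real_ball _ hr, sum_const, nsmul_eq_mul, mul_assoc]
    _ = μ.real (⋃ q ∈ T, ball q r) :=
        (measureReal_biUnion_finset hdisj (fun _ _ ↦ measurableSet_ball)
          (fun _ _ ↦ measure_ball_lt_top.ne)).symm
    _ ≤ μ.real (ball p ρ) :=
        measureReal_mono (Set.iUnion₂_subset hsub) measure_ball_lt_top.ne
    _ = ρ ^ finrank ℝ E * μ.real (ball 0 1) := real_ball p hρ

variable {δ : ℝ}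

lemma card_le_pow_finrank_of_separated {T : Finset E} {p : E} {R : ℝ} (hδ : 0 < δ) (hR : 0 ≤ R)
    (hsep : (T : Set E).Pairwise fun x y ↦ δ ≤ ‖x - y‖) (hball : ∀ x ∈ T, ‖p - x‖ ≤ R) :
    (#T : ℝ) ≤ ((2 * R + δ) / δ) ^ finrank ℝ E := by
  have hdisj : (T : Set E).PairwiseDisjoint (ball · (δ / 2)) := fun x hx y hy hxy ↦
    ball_disjoint_ball (by linarith [hsep hx hy hxy, dist_eq_norm x y])
  have hsub : ∀ x ∈ T, ball x (δ / 2) ⊆ ball p (R + δ / 2) := fun x hx ↦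
    ball_subset_ball' (by linarith [hball x hx, dist_eq_norm' x p])
  have volume_le := card_mul_pow_finrank_le_of_pairwiseDisjoint_ball
    (by positivity) (by positivity) hdisj hsub
  have ratio_eq : (R + δ / 2) / (δ / 2) = (2 * R + δ) / δ := by field_simp
  rwa [← le_div_iff₀ (by positivity), ← div_pow, ratio_eq] at volume_le

lemma one_div_norm_pow_finrank_le_div_card_of_separated {T : Finset E} {p q : E} (hδ : 0 < δ)
    (hsep : (T : Set E).Pairwise fun x y ↦ δ ≤ ‖x - y‖) (hq : q ∈ T) (hpq : δ ≤ ‖p - q‖) :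
    1 / ‖p - q‖ ^ finrank ℝ E ≤
      (3 / δ) ^ finrank ℝ E / #{x ∈ T | ‖p - x‖ ≤ ‖p - q‖} := by
  have norm_pos : 0 < ‖p - q‖ := hδ.trans_le hpq
  have card_pos : 0 < #{x ∈ T | ‖p - x‖ ≤ ‖p - q‖} :=
    card_pos.2 ⟨q, mem_filter.2 ⟨hq, le_rfl⟩⟩
  rw [div_le_div_iff₀ (by positivity) (by exact_mod_cast card_pos), one_mul, ← mul_pow]
  calc (#{x ∈ T | ‖p - x‖ ≤ ‖p - q‖} : ℝ)
      ≤ ((2 * ‖p - q‖ + δ) / δ) ^ finrank ℝ E :=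
        card_le_pow_finrank_of_separated hδ norm_pos.le
          (hsep.mono (coe_subset.2 (filter_subset _ T))) fun _ hx ↦ (mem_filter.1 hx).2
    _ ≤ (3 / δ * ‖p - q‖) ^ finrank ℝ E := by
        rw [div_mul_eq_mul_div]
        gcongr
        linarith

lemma sum_one_div_norm_pow_finrank_le_of_separated [DecidableEq E] {S : Finset E} {p : E}
    (hδ : 0 < δ) (hsep : (S : Set E).Pairwise fun x y ↦ δ ≤ ‖x - y‖) (hp : p ∈ S) :
    ∑ q ∈ S \ {p}, 1 / ‖p - q‖ ^ finrank ℝ E ≤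
      2 * (3 / δ) ^ finrank ℝ E * Real.log #S := by
  have card_eq : (#(S \ {p}) : ℝ) + 1 = #S := by
    rw [sdiff_singleton_eq_erase]
    exact_mod_cast card_erase_add_one hp
  calc ∑ q ∈ S \ {p}, 1 / ‖p - q‖ ^ finrank ℝ E
      ≤ (3 / δ) ^ finrank ℝ E * (harmonic #(S \ {p}) : ℝ) := by
        refine sum_le_mul_harmonic_of_le_div_card_filter_le (‖p - ·‖) (by positivity) _
          fun q hq ↦ one_div_norm_pow_finrank_le_div_card_of_separated hδ
            (hsep.mono (coe_subset.2 sdiff_subset)) hq ?_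
        obtain ⟨hqS, hqp⟩ := mem_sdiff.1 hq
        exact hsep hp hqS (Ne.symm (notMem_singleton.1 hqp))
    _ ≤ (3 / δ) ^ finrank ℝ E * (2 * Real.log #S) := by
        gcongr
        exact card_eq ▸ harmonic_le_two_mul_log_add_one _
    _ = 2 * (3 / δ) ^ finrank ℝ E * Real.log #S := by ring

theorem inverse_cube_sum_separated_general [DecidableEq E] (hδ : 0 < δ) (S : Finset E)
    (hsep : (S : Set E).Pairwise fun x y ↦ δ ≤ ‖x - y‖) :
    ∑ p ∈ S, ∑ q ∈ S \ {p}, 1 / ‖p - q‖ ^ finrank ℝ E ≤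
      2 * (3 / δ) ^ finrank ℝ E * #S * Real.log #S :=
  calc ∑ p ∈ S, ∑ q ∈ S \ {p}, 1 / ‖p - q‖ ^ finrank ℝ E
      ≤ ∑ _p ∈ S, 2 * (3 / δ) ^ finrank ℝ E * Real.log #S :=
        sum_le_sum fun _ hp ↦ sum_one_div_norm_pow_finrank_le_of_separated hδ hsep hp
    _ = 2 * (3 / δ) ^ finrank ℝ E * #S * Real.log #S := by
        rw [sum_const, nsmul_eq_mul]
        ring

end Packing

/-- Dipole–dipole interaction estimate: for a finite `δ`-separated set of `N ≥ 2` points in `ℝ³`,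
the total inverse-cube interaction is at most `C · N · log N`. -/
theorem inverse_cube_sum_separated (δ : ℝ) (hδ : 0 < δ) :
    ∃ C > 0, ∀ S : Finset (EuclideanSpace ℝ (Fin 3)),
      (∀ p ∈ S, ∀ q ∈ S, p ≠ q → δ ≤ ‖p - q‖) → 2 ≤ S.card →
        ∑ p ∈ S, ∑ q ∈ S \ {p}, 1 / ‖p - q‖ ^ 3
          ≤ C * S.card * Real.log S.card := by
  refine ⟨2 * (3 / δ) ^ 3, by positivity, fun S hS _ ↦ ?_⟩
  simpa only [finrank_euclideanSpace_fin] using inverse_cube_sum_separated_general hδ S hS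
end

section
/- For every measurable function ρ : ℝ³ → [0, ∞), every R ∈ ℝ³ and every λ > 0: ∫_{ℝ³} ρ(x)/‖x − R‖ dx ≤ (8π)^{2/5} · λ^{1/5} · (∫_{ℝ³} ρ(x)^{5/3} dx)^{3/5} + λ^{−1} · ∫_{ℝ³} ρ(x) dx. -/
open MeasureTheory
open scoped ENNReal

/-!
Write `‖x - R‖⁻¹ = k₁ + k₂` with `k₁` supported in the ball `‖x - R‖ ≤ lam`. The far part `k₂` is
at most `lam⁻¹`. Hölder's inequality with exponents `p`, `q` bounds the near part by `‖ρ‖_p ‖k₁‖_q`,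
and in polar coordinates `‖k₁‖_q ^ q` is a multiple of `∫ r ^ (d - 1 - q) dr` over `(0, lam]`, which
is finite exactly when `q < d`. In dimension three with `q = 5 / 2` it equals `8 π lam ^ (1 / 2)`.
-/

open Module Metric Set

lemma lintegral_mul_le_Lp_mul_setLIntegral_Lq_add {α : Type*} [MeasurableSpace α] (μ : Measure α)
    {p q : ℝ} (hpq : p.HolderConjugate q) {f k : α → ℝ≥0∞} (hf : AEMeasurable f μ)
    (hk : AEMeasurable k μ) {s : Set α} (hs : MeasurableSet s) {c : ℝ≥0∞}
    (hkc : ∀ x ∉ s, k x ≤ c) :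
    ∫⁻ x, f x * k x ∂μ ≤
      (∫⁻ x, f x ^ p ∂μ) ^ p⁻¹ * (∫⁻ x in s, k x ^ q ∂μ) ^ q⁻¹ + c * ∫⁻ x, f x ∂μ := by
  have near : ∫⁻ x in s, f x * k x ∂μ ≤
      (∫⁻ x, f x ^ p ∂μ) ^ p⁻¹ * (∫⁻ x in s, k x ^ q ∂μ) ^ q⁻¹ := by
    calc ∫⁻ x in s, f x * k x ∂μ
        ≤ (∫⁻ x in s, f x ^ p ∂μ) ^ p⁻¹ * (∫⁻ x in s, k x ^ q ∂μ) ^ q⁻¹ := by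
          simpa only [Pi.mul_apply, one_div] using
            ENNReal.lintegral_mul_le_Lp_mul_Lq (μ.restrict s) hpq hf.restrict hk.restrict
      _ ≤ _ := by
          gcongr
          · exact inv_nonneg.2 hpq.nonneg
          · exact Measure.restrict_le_self
  have far : ∫⁻ x in sᶜ, f x * k x ∂μ ≤ c * ∫⁻ x, f x ∂μ := by
    calc ∫⁻ x in sᶜ, f x * k x ∂μ
        ≤ ∫⁻ x in sᶜ, c * f x ∂μ :=
          setLIntegral_mono' hs.compl fun x hx ↦ by
            rw [mul_comm]
            gcongr
            exact hkc x hx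
      _ ≤ ∫⁻ x, c * f x ∂μ := setLIntegral_le_lintegral _ _
      _ = c * ∫⁻ x, f x ∂μ := lintegral_const_mul'' c hf
  rw [← lintegral_add_compl _ hs]
  exact add_le_add near far

lemma setLIntegral_Ioc_ofReal_rpow {a r : ℝ} (ha : -1 < a) (hr : 0 ≤ r) :
    ∫⁻ y in Ioc 0 r, ENNReal.ofReal (y ^ a) = ENNReal.ofReal (r ^ (a + 1) / (a + 1)) := by
  have integrable : IntegrableOn (fun y : ℝ ↦ y ^ a) (Ioc 0 r) :=
    (intervalIntegral.intervalIntegrable_rpow' ha).1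
  have nonneg : ∀ᵐ y ∂volume.restrict (Ioc 0 r), 0 ≤ y ^ a := by
    filter_upwards [ae_restrict_mem measurableSet_Ioc] with y hy
    exact Real.rpow_nonneg hy.1.le a
  rw [← ofReal_integral_eq_lintegral_ofReal integrable nonneg,
    ← intervalIntegral.integral_of_le hr, integral_rpow (Or.inl ha),
    Real.zero_rpow (by linarith), sub_zero]

section AddHaar

variable {E : Type*} [NormedAddCommGroup E] [NormedSpace ℝ E] [FiniteDimensional ℝ E]
  [MeasurableSpace E] [BorelSpace E] (μ : Measure E) [μ.IsAddHaarMeasure]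

lemma lintegral_fun_norm_addHaar [Nontrivial E] {f : ℝ → ℝ≥0∞} (hf : Measurable f) :
    ∫⁻ x, f ‖x‖ ∂μ =
      finrank ℝ E * μ (ball 0 1) *
        ∫⁻ y in Ioi (0 : ℝ), ENNReal.ofReal (y ^ (finrank ℝ E - 1)) * f y := by
  have hf_val : Measurable fun y : Ioi (0 : ℝ) ↦ f y := hf.comp measurable_subtype_coe
  calc ∫⁻ x, f ‖x‖ ∂μ
      = ∫⁻ x : ({0}ᶜ : Set E), f ‖x.1‖ ∂μ.comap (↑) := by
        rw [lintegral_subtype_comap (measurableSet_singleton _).compl fun x ↦ f ‖x‖,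
          restrict_compl_singleton]
    _ = ∫⁻ z, f z.2 ∂μ.toSphere.prod (.volumeIoiPow (finrank ℝ E - 1)) := by
        simpa using μ.measurePreserving_homeomorphUnitSphereProd.lintegral_comp
          (hf_val.comp measurable_snd)
    _ = μ.toSphere univ * ∫⁻ y : Ioi (0 : ℝ), f y ∂.volumeIoiPow (finrank ℝ E - 1) := by
        rw [lintegral_prod _ (by fun_prop)]
        simp only [lintegral_const, mul_comm]
    _ = _ := by
        rw [μ.toSphere_apply_univ, Measure.volumeIoiPow,
          lintegral_withDensity_eq_lintegral_mul _ (by fun_prop) hf_val,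
          ← lintegral_subtype_comap measurableSet_Ioi]
        rfl

lemma setLIntegral_closedBall_enorm_rpow [Nontrivial E] {a r : ℝ} (ha : -finrank ℝ E < a)
    (hr : 0 ≤ r) :
    ∫⁻ x in closedBall 0 r, ‖x‖ₑ ^ a ∂μ =
      finrank ℝ E * μ (ball 0 1) *
        ENNReal.ofReal (r ^ (finrank ℝ E + a) / (finrank ℝ E + a)) := by
  have radial_integrand : ∀ y ∈ Ioi (0 : ℝ),
      ENNReal.ofReal (y ^ (finrank ℝ E - 1)) * (Iic r).indicator (fun y ↦ ENNReal.ofReal y ^ a) y =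
        (Iic r).indicator (fun y ↦ ENNReal.ofReal (y ^ (finrank ℝ E - 1 + a))) y := by
    intro y (hy : 0 < y)
    simp only [indicator_apply, mul_ite, mul_zero]
    rw [ENNReal.ofReal_rpow_of_pos hy, ← ENNReal.ofReal_mul (by positivity),
      Real.rpow_add hy, ← Nat.cast_pred finrank_pos, Real.rpow_natCast]
  calc ∫⁻ x in closedBall 0 r, ‖x‖ₑ ^ a ∂μ
      = ∫⁻ x, (Iic r).indicator (fun y ↦ ENNReal.ofReal y ^ a) ‖x‖ ∂μ := by
        rw [← lintegral_indicator measurableSet_closedBall]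
        simp only [indicator, mem_closedBall_zero_iff, mem_Iic, ofReal_norm]
    _ = finrank ℝ E * μ (ball 0 1) *
          ∫⁻ y in Ioc 0 r, ENNReal.ofReal (y ^ (finrank ℝ E - 1 + a)) := by
        rw [lintegral_fun_norm_addHaar μ (.indicator (by fun_prop) measurableSet_Iic),
          setLIntegral_congr_fun measurableSet_Ioi radial_integrand,
          setLIntegral_indicator measurableSet_Iic, inter_comm, Ioi_inter_Iic]
    _ = _ := by
        rw [setLIntegral_Ioc_ofReal_rpow (by linarith) hr]
        ring_nf

lemma setLIntegral_closedBall_enorm_sub_rpow [Nontrivial E] {a r : ℝ} (ha : -finrank ℝ E < a)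
    (hr : 0 ≤ r) (R : E) :
    ∫⁻ x in closedBall R r, ‖x - R‖ₑ ^ a ∂μ =
      finrank ℝ E * μ (ball 0 1) *
        ENNReal.ofReal (r ^ (finrank ℝ E + a) / (finrank ℝ E + a)) := by
  rw [← setLIntegral_closedBall_enorm_rpow μ ha hr, ← lintegral_indicator measurableSet_closedBall,
    ← lintegral_indicator measurableSet_closedBall,
    ← lintegral_sub_right_eq_self ((closedBall 0 r).indicator fun x : E ↦ ‖x‖ₑ ^ a) R]
  simp only [indicator, mem_closedBall_iff_norm, sub_zero]

lemma lintegral_mul_inv_enorm_sub_le {p q : ℝ} (hpq : p.HolderConjugate q) (hq : q < finrank ℝ E)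
    {f : E → ℝ≥0∞} (hf : AEMeasurable f μ) (R : E) {r : ℝ} (hr : 0 < r) :
    ∫⁻ x, f x * ‖x - R‖ₑ⁻¹ ∂μ ≤
      (∫⁻ x, f x ^ p ∂μ) ^ p⁻¹ *
          (finrank ℝ E * μ (ball 0 1) *
            ENNReal.ofReal (r ^ (finrank ℝ E - q) / (finrank ℝ E - q))) ^ q⁻¹ +
        ENNReal.ofReal r⁻¹ * ∫⁻ x, f x ∂μ := by
  have : Nontrivial E :=
    finrank_pos_iff (R := ℝ) |>.1 (by exact_mod_cast hpq.symm.pos.trans hq)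
  have far_kernel_le : ∀ x ∉ closedBall R r, ‖x - R‖ₑ⁻¹ ≤ ENNReal.ofReal r⁻¹ := by
    intro x hx
    rw [mem_closedBall_iff_norm, not_le] at hx
    rw [ENNReal.ofReal_inv_of_pos hr, ← ofReal_norm]
    gcongr
  have near_kernel : ∫⁻ x in closedBall R r, ‖x - R‖ₑ⁻¹ ^ q ∂μ =
      finrank ℝ E * μ (ball 0 1) *
        ENNReal.ofReal (r ^ (finrank ℝ E - q) / (finrank ℝ E - q)) := by
    simpa only [ENNReal.inv_rpow, ENNReal.rpow_neg, ← sub_eq_add_neg] using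
      setLIntegral_closedBall_enorm_sub_rpow μ (neg_lt_neg hq) hr.le R
  rw [← near_kernel]
  exact lintegral_mul_le_Lp_mul_setLIntegral_Lq_add μ hpq hf (by fun_prop)
    measurableSet_closedBall far_kernel_le

theorem coulomb_integral_split_general {p q : ℝ} (hpq : p.HolderConjugate q)
    (hq : q < finrank ℝ E) {ρ : E → ℝ} (hρ : AEMeasurable ρ μ) (hρ0 : 0 ≤ᵐ[μ] ρ) (R : E) {lam : ℝ}
    (hlam : 0 < lam) :
    ∫⁻ x, ENNReal.ofReal (ρ x / ‖x - R‖) ∂μ ≤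
      ENNReal.ofReal ((finrank ℝ E * μ.real (ball 0 1) / (finrank ℝ E - q)) ^ q⁻¹ *
          lam ^ ((finrank ℝ E - q) / q)) *
          (∫⁻ x, ENNReal.ofReal (ρ x ^ p) ∂μ) ^ p⁻¹ +
        ENNReal.ofReal lam⁻¹ * ∫⁻ x, ENNReal.ofReal (ρ x) ∂μ := by
  have : 0 < finrank ℝ E - q := sub_pos.2 hq
  have ofReal_constant :
      (finrank ℝ E * μ (ball 0 1) *
        ENNReal.ofReal (lam ^ (finrank ℝ E - q) / (finrank ℝ E - q))) ^ q⁻¹ =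
      ENNReal.ofReal ((finrank ℝ E * μ.real (ball 0 1) / (finrank ℝ E - q)) ^ q⁻¹ *
        lam ^ ((finrank ℝ E - q) / q)) := by
    rw [← ofReal_measureReal, ← ENNReal.ofReal_natCast, ← ENNReal.ofReal_mul (by positivity),
      ← ENNReal.ofReal_mul (by positivity), mul_div_left_comm, mul_comm,
      ENNReal.ofReal_rpow_of_nonneg (by positivity) (inv_nonneg.2 hpq.symm.nonneg),
      Real.mul_rpow (by positivity) (by positivity), ← Real.rpow_mul hlam.le, ← div_eq_mul_inv]
  have ofReal_density_rpow :
      ∫⁻ x, ENNReal.ofReal (ρ x) ^ p ∂μ = ∫⁻ x, ENNReal.ofReal (ρ x ^ p) ∂μ := by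
    refine lintegral_congr_ae ?_
    filter_upwards [hρ0] with x hx
    exact ENNReal.ofReal_rpow_of_nonneg hx hpq.nonneg
  calc ∫⁻ x, ENNReal.ofReal (ρ x / ‖x - R‖) ∂μ
      ≤ ∫⁻ x, ENNReal.ofReal (ρ x) * ‖x - R‖ₑ⁻¹ ∂μ := lintegral_mono fun x ↦ by
        simpa only [ofReal_norm, div_eq_mul_inv] using ENNReal.ofReal_div_le (norm_nonneg (x - R))
    _ ≤ _ := lintegral_mul_inv_enorm_sub_le μ hpq hq hρ.ennreal_ofReal R hlam
    _ = _ := by rw [ofReal_constant, ofReal_density_rpow, mul_comm (_ ^ p⁻¹)]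

end AddHaar

lemma volume_real_unitBall_fin_three :
    volume.real (ball (0 : EuclideanSpace ℝ (Fin 3)) 1) = 4 * Real.pi / 3 := by
  rw [Measure.real, EuclideanSpace.volume_ball_fin_three, ENNReal.ofReal_one, one_pow, one_mul,
    ENNReal.toReal_ofReal (by positivity), mul_comm]

/-- Splitting the Coulomb integral `∫ ρ(x)/‖x − R‖ dx` at distance `λ` and applying Hölder's
inequality. -/
theorem coulomb_integral_split (ρ : EuclideanSpace ℝ (Fin 3) → ℝ)
    (hρ : Measurable ρ) (hρ0 : ∀ x, 0 ≤ ρ x)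
    (R : EuclideanSpace ℝ (Fin 3)) (lam : ℝ) (hlam : 0 < lam) :
    ∫⁻ x, ENNReal.ofReal (ρ x / ‖x - R‖)
      ≤ ENNReal.ofReal ((8 * Real.pi) ^ ((2 : ℝ) / 5) * lam ^ ((1 : ℝ) / 5)) *
          (∫⁻ x, ENNReal.ofReal (ρ x ^ ((5 : ℝ) / 3))) ^ ((3 : ℝ) / 5)
        + ENNReal.ofReal lam⁻¹ * ∫⁻ x, ENNReal.ofReal (ρ x) := by
  have hpq : ((5 : ℝ) / 3).HolderConjugate (5 / 2) := Real.holderConjugate_iff.2 (by norm_num)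
  have near_constant : 3 * (4 * Real.pi / 3) / (3 - 5 / 2) = 8 * Real.pi := by ring
  have radius_exponent : ((3 : ℝ) - 5 / 2) / (5 / 2) = 1 / 5 := by norm_num
  simpa only [finrank_euclideanSpace_fin, Nat.cast_ofNat, volume_real_unitBall_fin_three,
    near_constant, radius_exponent, inv_div] using
    coulomb_integral_split_general volume hpq (by norm_num) hρ.aemeasurable (.of_forall hρ0) R hlam
end
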